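/- arXiv:2202.09306 — 2 statements merged into one kernel-verified Lean document; each statement's English description precedes it below -/
import Mathlib

section
/- Let g ≥ 2 and let a, b ∈ Γ_g be two elements with ab ≠ ba. Then there exists a group homomorphism φ from Γ_g to the free group F₂ on two generators such that φ(a)φ(b) ≠ φ(b)φ(a). -/
open scoped commutatorElement

/-- The relator `[a₁,b₁][a₂,b₂]⋯[a_g,b_g]` of the genus-`g` surface group;
`(i, false)` is the generator `aᵢ` and `(i, true)` is `bᵢ`. -/
def surfaceRelator (g : ℕ) : FreeGroup (Fin g × Bool) :=
  (List.ofFn fun i : Fin g =>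
    ⁅FreeGroup.of (i, false), FreeGroup.of (i, true)⁆).prod

/-- The surface group `Γ_g` of genus `g`. -/
abbrev SurfaceGroup (g : ℕ) : Type :=
  PresentedGroup ({surfaceRelator g} : Set (FreeGroup (Fin g × Bool)))


namespace SurfRF

open Matrix hiding zpow_add zpow_one_add zpow_neg_one

/-- The free group of rank two. -/
abbrev F2 : Type := FreeGroup (Fin 2)

/-- First generator. -/
def gx : F2 := FreeGroup.of 0
/-- Second generator. -/
def gy : F2 := FreeGroup.of 1
/-- The commutator of the generators. -/
def gc : F2 := gx * gy * gx⁻¹ * gy⁻¹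

/-- Image of `gx` in the modular group. -/
def mX : SpecialLinearGroup (Fin 2) ℤ := ⟨!![2, 1; 1, 1], by simp [Matrix.det_fin_two]⟩
/-- Image of `gy` in the modular group. -/
def mY : SpecialLinearGroup (Fin 2) ℤ := ⟨!![2, -1; -1, 1], by simp [Matrix.det_fin_two]⟩
/-- Image of `gc` in the modular group. -/
def mC : SpecialLinearGroup (Fin 2) ℤ := ⟨!![-1, -6; 0, -1], by simp [Matrix.det_fin_two]⟩

/-- The punctured torus representation. -/
def rho : F2 →* SpecialLinearGroup (Fin 2) ℤ := FreeGroup.lift ![mX, mY]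

@[simp] lemma rho_gx : rho gx = mX := by simp [rho, gx]
@[simp] lemma rho_gy : rho gy = mY := by simp [rho, gy]

lemma rho_gc : rho gc = mC := by
  simp only [gc, map_mul, map_inv, rho_gx, rho_gy]
  rw [mul_inv_eq_iff_eq_mul, mul_inv_eq_iff_eq_mul]
  decide

lemma mul00 (M N : SpecialLinearGroup (Fin 2) ℤ) :
    (M * N) 0 0 = M 0 0 * N 0 0 + M 0 1 * N 1 0 := by
  simp [Matrix.mul_apply, Fin.sum_univ_two]
lemma mul10 (M N : SpecialLinearGroup (Fin 2) ℤ) :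
    (M * N) 1 0 = M 1 0 * N 0 0 + M 1 1 * N 1 0 := by
  simp [Matrix.mul_apply, Fin.sum_univ_two]

lemma mul01 (M N : SpecialLinearGroup (Fin 2) ℤ) :
    (M * N) 0 1 = M 0 0 * N 0 1 + M 0 1 * N 1 1 := by
  simp [Matrix.mul_apply, Fin.sum_univ_two]
lemma mul11 (M N : SpecialLinearGroup (Fin 2) ℤ) :
    (M * N) 1 1 = M 1 0 * N 0 1 + M 1 1 * N 1 1 := by
  simp [Matrix.mul_apply, Fin.sum_univ_two]

/-- first column -/
def colP (u : F2) : ℤ := rho u 0 0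
/-- first column -/
def colQ (u : F2) : ℤ := rho u 1 0

lemma colP_x (u : F2) : colP (gx * u) = 2 * colP u + colQ u := by
  simp only [colP, colQ, map_mul, rho_gx, mul00]; simp [mX]
lemma colQ_x (u : F2) : colQ (gx * u) = colP u + colQ u := by
  simp only [colP, colQ, map_mul, rho_gx, mul10]; simp [mX]
lemma colP_y (u : F2) : colP (gy * u) = 2 * colP u - colQ u := by
  simp only [colP, colQ, map_mul, rho_gy, mul00]; simp [mY]; ring
lemma colQ_y (u : F2) : colQ (gy * u) = - colP u + colQ u := by
  simp only [colP, colQ, map_mul, rho_gy, mul10]; simp [mY]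
lemma colP_xi (u : F2) : colP (gx⁻¹ * u) = colP u - colQ u := by
  have h1 := colP_x (gx⁻¹ * u); have h2 := colQ_x (gx⁻¹ * u)
  rw [mul_inv_cancel_left] at h1 h2; linarith
lemma colQ_xi (u : F2) : colQ (gx⁻¹ * u) = - colP u + 2 * colQ u := by
  have h1 := colP_x (gx⁻¹ * u); have h2 := colQ_x (gx⁻¹ * u)
  rw [mul_inv_cancel_left] at h1 h2; linarith
lemma colP_yi (u : F2) : colP (gy⁻¹ * u) = colP u + colQ u := by
  have h1 := colP_y (gy⁻¹ * u); have h2 := colQ_y (gy⁻¹ * u)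
  rw [mul_inv_cancel_left] at h1 h2; linarith
lemma colQ_yi (u : F2) : colQ (gy⁻¹ * u) = colP u + 2 * colQ u := by
  have h1 := colP_y (gy⁻¹ * u); have h2 := colQ_y (gy⁻¹ * u)
  rw [mul_inv_cancel_left] at h1 h2; linarith

lemma col_c (u : F2) : colP (gc * u) = - colP u - 6 * colQ u ∧ colQ (gc * u) = - colQ u := by
  simp only [colP, colQ, map_mul, rho_gc, mul00, mul10]; constructor <;> simp [mC]; ring

lemma col_cpow (k : ℤ) : colQ (gc ^ k) = 0 ∧ colP (gc ^ k) ^ 2 = 1 := by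
  induction k with
  | zero => simp [colP, colQ]
  | succ i ih =>
    have := col_c (gc ^ (i : ℤ))
    rw [← _root_.zpow_one_add, add_comm, ih.1] at this
    rw [this.1, this.2]
    constructor
    · simp
    · linarith [ih.2]
  | pred i ih =>
    have := col_c (gc ^ (-(i : ℤ) - 1))
    rw [← _root_.zpow_one_add, add_sub_cancel] at this
    have h1 : colQ (gc ^ (-(i : ℤ) - 1)) = 0 := by linarith [ih.1]
    have h2 := ih.2
    rw [this.1, h1] at h2
    exact ⟨h1, by linarith⟩

/-- The open arc attached to a letter. -/
def Arc : Fin 2 × Bool → ℤ → ℤ → Prop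
  | (0, true), p, q => 0 < p * q ∧ q ^ 2 < p ^ 2
  | (0, false), p, q => p * q < 0 ∧ p ^ 2 < q ^ 2
  | (1, true), p, q => p * q < 0 ∧ q ^ 2 < p ^ 2
  | (1, false), p, q => 0 < p * q ∧ p ^ 2 < q ^ 2

/-- The words moving the cusp to a vertex of the fundamental quadrilateral. -/
def Vert (u : F2) : Prop :=
  ∃ k : ℤ, u = gc ^ k ∨ u = gy⁻¹ * gc ^ k ∨ u = gx⁻¹ * (gy⁻¹ * gc ^ k) ∨ u = gx⁻¹ * gc ^ k

/-- group element of a letter -/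
def letter : Fin 2 × Bool → F2
  | (0, true) => gx
  | (0, false) => gx⁻¹
  | (1, true) => gy
  | (1, false) => gy⁻¹

lemma mk_cons (l : Fin 2 × Bool) (L : List (Fin 2 × Bool)) :
    (FreeGroup.mk (l :: L) : F2) = letter l * FreeGroup.mk L := by
  have : letter l = FreeGroup.mk [l] := by
    rcases l with ⟨i, b⟩
    fin_cases i <;> cases b <;> simp [letter, gx, gy, FreeGroup.of, FreeGroup.invRev]
  rw [this, FreeGroup.mul_mk]; rfl

lemma vert_step (l : Fin 2 × Bool) (u : F2) (hu : Vert u) :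
    Vert (letter l * u) ∨ Arc l (colP (letter l * u)) (colQ (letter l * u)) := by
  obtain ⟨k, hk⟩ := hu
  obtain ⟨h0, h1⟩ := col_cpow k
  have hc1 : gc = gx * gy * gx⁻¹ * gy⁻¹ := rfl
  rcases l with ⟨i, b⟩
  rcases hk with rfl | rfl | rfl | rfl <;> fin_cases i <;> cases b <;>
    simp only [letter, Fin.zero_eta, Fin.mk_one, Arc, colP_x, colQ_x, colP_y, colQ_y, colP_xi,
      colQ_xi, colP_yi, colQ_yi, h0]
  all_goals first
    | (right; constructor <;> nlinarith; done)
    | (left; refine ⟨k, Or.inl ?_⟩; group; done)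
    | (left; refine ⟨k, Or.inr (Or.inl ?_)⟩; group; done)
    | (left; refine ⟨k, Or.inr (Or.inr (Or.inl ?_))⟩; group; done)
    | (left; refine ⟨k, Or.inr (Or.inr (Or.inr ?_))⟩; group; done)
    | (left; refine ⟨1 + k, Or.inr (Or.inr (Or.inr ?_))⟩
       rw [_root_.zpow_add, zpow_one]; generalize gc ^ k = w; rw [hc1]; group; done)
    | (left; refine ⟨-1 + k, Or.inr (Or.inr (Or.inl ?_))⟩
       rw [_root_.zpow_add, _root_.zpow_neg_one]; generalize gc ^ k = w; rw [hc1]; group; done)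

lemma arc_step (l m : Fin 2 × Bool) (hlm : l.1 = m.1 → l.2 = m.2) (u : F2)
    (hu : Arc m (colP u) (colQ u)) : Arc l (colP (letter l * u)) (colQ (letter l * u)) := by
  rcases l with ⟨i, b⟩
  rcases m with ⟨j, d⟩
  revert hlm hu
  fin_cases i <;> cases b <;> fin_cases j <;> cases d <;>
    simp only [letter, Fin.zero_eta, Fin.mk_one, Arc, colP_x, colQ_x, colP_y, colQ_y, colP_xi,
      colQ_xi, colP_yi, colQ_yi] <;> intro hu hlm <;> try (exfalso; exact absurd (hlm trivial) (by decide))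
  all_goals
    obtain ⟨h1, h2⟩ := hu
    constructor <;> nlinarith [sq_nonneg (colP u), sq_nonneg (colQ u)]

lemma word_state (L : List (Fin 2 × Bool)) (hL : FreeGroup.IsReduced L) :
    Vert (FreeGroup.mk L) ∨
      ∃ l M, L = l :: M ∧ Arc l (colP (FreeGroup.mk L)) (colQ (FreeGroup.mk L)) := by
  induction L with
  | nil => exact Or.inl ⟨0, Or.inl (by simp [← FreeGroup.one_eq_mk])⟩
  | cons l L ih =>
    have hL' : FreeGroup.IsReduced L := hL.tail
    rcases ih hL' with h | ⟨m, M, rfl, h⟩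
    · rcases vert_step l _ h with h | h
      · left; rwa [mk_cons]
      · right; refine ⟨l, L, rfl, ?_⟩; rwa [mk_cons]
    · right
      refine ⟨l, _, rfl, ?_⟩
      rw [mk_cons]
      exact arc_step l m (FreeGroup.isReduced_cons_cons.1 hL).1 _ h

/-- The stabilizer of the cusp is generated by the commutator. -/
lemma mem_of_colQ (u : F2) (hu : colQ u = 0) : ∃ k : ℤ, u = gc ^ k := by
  have h := word_state u.toWord FreeGroup.isReduced_toWord
  rw [FreeGroup.mk_toWord] at h
  rcases h with ⟨k, hk⟩ | ⟨l, M, _, h⟩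
  · obtain ⟨h0, h1⟩ := col_cpow k
    rcases hk with h | rfl | rfl | rfl
    · exact ⟨k, h⟩
    all_goals
      exfalso
      simp only [colP_xi, colQ_xi, colP_yi, colQ_yi, h0] at hu
      have : colP (gc ^ k) = 0 := by linarith
      rw [this] at h1; norm_num at h1
  · exfalso
    rcases l with ⟨i, b⟩
    rw [hu] at h
    fin_cases i <;> cases b <;> simp [Arc] at h

/-- unipotent -/
def mT (n : ℤ) : SpecialLinearGroup (Fin 2) ℤ := ⟨!![1, 6 * n; 0, 1], by simp [Matrix.det_fin_two]⟩

lemma mC_eq : mC = - mT 1 := by decide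

lemma mT_add (m n : ℤ) : mT m * mT n = mT (m + n) := by
  apply Matrix.SpecialLinearGroup.ext
  rw [Fin.forall_fin_two, Fin.forall_fin_two, Fin.forall_fin_two, mul00, mul01, mul10, mul11]
  simp [mT]
  ring

lemma rho_cpow (n : ℕ) : rho (gc ^ n) = mT n ∨ rho (gc ^ n) = - mT n := by
  induction n with
  | zero => left; rw [pow_zero, map_one]; decide
  | succ n ih =>
    rw [pow_succ, map_mul, rho_gc, mC_eq]
    push_cast
    rw [← mT_add]
    rcases ih with h | h
    · right; rw [h]; simp
    · left; rw [h]; simp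

lemma rho_conj (n : ℕ) (u : F2) :
    rho (gc ^ n * u * (gc ^ n)⁻¹) * mT n = mT n * rho u := by
  rw [map_mul, map_mul, map_inv]
  rcases rho_cpow n with h | h <;> rw [h]
  · group
  · rw [inv_neg]; simp

/-- First column of a conjugate. -/
lemma col_conj (n : ℕ) (u w : F2) :
    colP (gc ^ n * u * (gc ^ n)⁻¹ * w) = rho u 0 0 * (colP w - 6 * n * colQ w) + rho u 0 1 * colQ w
       + 6 * n * (colQ u * (colP w - 6 * n * colQ w) + rho u 1 1 * colQ w) ∧
    colQ (gc ^ n * u * (gc ^ n)⁻¹ * w) = colQ u * (colP w - 6 * n * colQ w)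
       + rho u 1 1 * colQ w := by
  have h := rho_conj n u
  have h1 := congrArg (fun M : SpecialLinearGroup (Fin 2) ℤ => M 0 0) h
  have h2 := congrArg (fun M : SpecialLinearGroup (Fin 2) ℤ => M 0 1) h
  have h3 := congrArg (fun M : SpecialLinearGroup (Fin 2) ℤ => M 1 0) h
  have h4 := congrArg (fun M : SpecialLinearGroup (Fin 2) ℤ => M 1 1) h
  simp only [mul00, mul01, mul10, mul11] at h1 h2 h3 h4
  simp only [colP, colQ]
  rw [map_mul rho _ w, mul00, mul10]
  generalize rho (gc ^ n * u * (gc ^ n)⁻¹) = V at *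
  simp [mT] at h1 h2 h3 h4
  rw [h3] at h4
  rw [h1] at h2
  rw [h1, h3, eq_sub_of_add_eq' h2, eq_sub_of_add_eq' h4]
  constructor <;> ring

lemma col_mul (u w : F2) :
    colP (u * w) = rho u 0 0 * colP w + rho u 0 1 * colQ w ∧
    colQ (u * w) = colQ u * colP w + rho u 1 1 * colQ w := by
  simp only [colP, colQ]
  rw [map_mul rho _ w, mul00, mul10]
  exact ⟨rfl, rfl⟩

lemma gc_pow_eq_one (k : ℤ) (h : gc ^ k = 1) : k = 0 := by
  have key : ∀ n : ℕ, gc ^ n = 1 → n = 0 := by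
    intro n hn
    rcases rho_cpow n with h | h <;> rw [hn, map_one] at h
    · have := congrArg (fun M : SpecialLinearGroup (Fin 2) ℤ => M 0 1) h
      simpa [mT] using this
    · have := congrArg (fun M : SpecialLinearGroup (Fin 2) ℤ => - M 0 1) h
      have h2 : (- mT n) 0 1 = - (mT n 0 1) := rfl
      simp only [h2] at this
      simpa [mT] using this
  rcases Int.eq_nat_or_neg k with ⟨n, rfl | rfl⟩
  · simpa using key n (by simpa using h)
  · simpa using key n (by simpa using h)

end SurfRF
lemma SurfRF.dCle (r : ℤ) (P : Polynomial ℤ) : (Polynomial.C r * P).degree ≤ P.degree := by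
  rw [← Polynomial.smul_eq_C_mul]; exact Polynomial.degree_smul_le _ _

namespace SurfRF

open Polynomial

/-- Homomorphisms out of a surface group. -/
def surfLift {g : ℕ} {G : Type*} [Group G] (f : Fin g × Bool → G)
    (h : (List.ofFn fun i : Fin g => ⁅f (i, false), f (i, true)⁆).prod = 1) :
    SurfaceGroup g →* G :=
  PresentedGroup.toGroup (f := f) (by
    intro r hr
    rw [Set.mem_singleton_iff] at hr
    subst hr
    rw [surfaceRelator, map_list_prod, List.map_ofFn, ← h]
    congr 1
    refine congrArg List.ofFn ?_
    funext i
    simp [map_commutatorElement])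

/-- Generators of the surface group. -/
def gen {g : ℕ} (x : Fin g × Bool) : SurfaceGroup g := PresentedGroup.of x

@[simp] lemma surfLift_gen {g : ℕ} {G : Type*} [Group G] (f : Fin g × Bool → G)
    (h : (List.ofFn fun i : Fin g => ⁅f (i, false), f (i, true)⁆).prod = 1) (x : Fin g × Bool) :
    surfLift f h (gen x) = f x := PresentedGroup.toGroup.of _

lemma gen_rel (g : ℕ) :
    (List.ofFn fun i : Fin g => ⁅(gen (i, false) : SurfaceGroup g), gen (i, true)⁆).prod = 1 := by
  have h : PresentedGroup.mk {surfaceRelator g} (surfaceRelator g) = 1 :=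
    PresentedGroup.one_of_mem (Set.mem_singleton _)
  conv at h => lhs; arg 2; rw [surfaceRelator]
  rw [map_list_prod, List.map_ofFn] at h
  refine Eq.trans ?_ h
  congr 1

/-- The two free factors of the genus two group. -/
def iot (b : Bool) : F2 →* SurfaceGroup 2 :=
  FreeGroup.lift (if b then ![gen (0, false), gen (0, true)] else ![gen (1, true), gen (1, false)])

lemma iot_gc : iot false gc = iot true gc := by
  have h := gen_rel 2
  simp only [List.ofFn_succ, List.ofFn_zero, List.prod_cons, List.prod_nil, mul_one] at h
  simp [commutatorElement_def] at h
  rw [mul_eq_one_iff_eq_inv] at h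
  simp [iot, gc, gx, gy]
  rw [h]
  group

lemma iot_gc' (b b' : Bool) (k : ℤ) : iot b (gc ^ k) = iot b' (gc ^ k) := by
  have := iot_gc
  cases b <;> cases b' <;> simp [this]

/-- The twisted foldings. -/
def fold (n : ℕ) : SurfaceGroup 2 →* F2 :=
  surfLift (fun x => match x with
    | (0, false) => gx
    | (0, true) => gy
    | (1, false) => gc ^ n * gy * (gc ^ n)⁻¹
    | (1, true) => gc ^ n * gx * (gc ^ n)⁻¹) (by
    simp only [List.ofFn_succ, List.ofFn_zero, List.prod_cons, List.prod_nil, mul_one]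
    have h : gx * gy * gx⁻¹ * gy⁻¹ = gc := rfl
    have h' : gy * gx * gy⁻¹ * gx⁻¹ = gc⁻¹ := by rw [← h]; group
    simp only [commutatorElement_def, Fin.succ_zero_eq_one, h]
    calc _ = gc * (gc ^ n * (gy * gx * gy⁻¹ * gx⁻¹) * (gc ^ n)⁻¹) := by group
      _ = 1 := by rw [h']; group)

lemma fold_true (n : ℕ) (u : F2) : fold n (iot true u) = u := by
  have : (fold n).comp (iot true) = MonoidHom.id _ := by
    ext i
    fin_cases i <;> simp [iot, fold, gx, gy]
  exact DFunLike.congr_fun this u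

lemma fold_false (n : ℕ) (u : F2) : fold n (iot false u) = gc ^ n * u * (gc ^ n)⁻¹ := by
  have : (fold n).comp (iot false) = (MulAut.conj (gc ^ n)).toMonoidHom := by
    ext i
    fin_cases i <;> simp [-map_pow, iot, fold, gx, gy]
  exact DFunLike.congr_fun this u

lemma fold_c (n : ℕ) (b : Bool) (k : ℤ) : fold n (iot b (gc ^ k)) = gc ^ k := by
  rw [iot_gc' b true, fold_true]

/-- Alternating products. -/
inductive Alt : Bool → SurfaceGroup 2 → Prop
  | base (b : Bool) (u : F2) (hu : ∀ k : ℤ, u ≠ gc ^ k) (k : ℤ) : Alt b (iot b u * iot b (gc ^ k))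
  | step (b : Bool) (u : F2) (hu : ∀ k : ℤ, u ≠ gc ^ k) (γ : SurfaceGroup 2) (h : Alt (!b) γ) :
      Alt b (iot b u * γ)

lemma not_pow_mul {u : F2} (hu : ∀ k : ℤ, u ≠ gc ^ k) (m : ℤ) (k : ℤ) : gc ^ m * u ≠ gc ^ k := by
  intro h
  exact hu (-m + k) (by rw [zpow_add, ← h]; group)

lemma Alt.absorb {b : Bool} {γ : SurfaceGroup 2} (h : Alt b γ) (b' : Bool) (m : ℤ) :
    Alt b (iot b' (gc ^ m) * γ) := by
  rw [iot_gc' b' b]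
  cases h with
  | base _ u hu k =>
    rw [← mul_assoc, ← map_mul]
    exact Alt.base b _ (not_pow_mul hu m) k
  | step _ u hu γ h =>
    rw [← mul_assoc, ← map_mul]
    exact Alt.step b _ (not_pow_mul hu m) _ h

/-- normal form -/
def NF (γ : SurfaceGroup 2) : Prop := (∃ k : ℤ, γ = iot true (gc ^ k)) ∨ ∃ b, Alt b γ

lemma NF.mul {γ : SurfaceGroup 2} (h : NF γ) (b : Bool) (w : F2) : NF (iot b w * γ) := by
  by_cases hw : ∃ m : ℤ, w = gc ^ m
  · obtain ⟨m, rfl⟩ := hw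
    rcases h with ⟨k, rfl⟩ | ⟨b', h⟩
    · left; exact ⟨m + k, by rw [iot_gc' b true, ← map_mul, ← zpow_add]⟩
    · right; exact ⟨b', h.absorb b m⟩
  · push Not at hw
    rcases h with ⟨k, rfl⟩ | ⟨b', h⟩
    · right; exact ⟨b, by rw [iot_gc' true b]; exact Alt.base b w hw k⟩
    · by_cases hb : b' = !b
      · subst hb
        right; exact ⟨b, Alt.step b w hw _ h⟩
      · have hb : b' = b := by cases b <;> cases b' <;> simp_all
        subst hb
        cases h with
        | base _ u hu k =>
          rw [← mul_assoc, ← map_mul]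
          by_cases hk : ∃ k : ℤ, w * u = gc ^ k
          · obtain ⟨m, hm⟩ := hk
            rw [hm, ← map_mul, ← zpow_add]
            left; exact ⟨_, iot_gc' _ _ _⟩
          · push Not at hk
            right; exact ⟨_, Alt.base _ _ hk k⟩
        | step _ u hu δ h =>
          rw [← mul_assoc, ← map_mul]
          by_cases hk : ∃ k : ℤ, w * u = gc ^ k
          · obtain ⟨m, hm⟩ := hk
            rw [hm]
            right; exact ⟨_, h.absorb _ m⟩
          · push Not at hk
            right; exact ⟨_, Alt.step _ _ hk _ h⟩

lemma nf_all (γ : SurfaceGroup 2) : NF γ := by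
  have hγ : γ ∈ Subgroup.closure (Set.range (PresentedGroup.of :
      Fin 2 × Bool → SurfaceGroup 2)) := by
    rw [PresentedGroup.closure_range_of]; trivial
  have key : ∀ x : Fin 2 × Bool, ∃ b w, (gen x : SurfaceGroup 2) = iot b w := by
    rintro ⟨i, d⟩
    fin_cases i <;> cases d
    · exact ⟨true, gx, by simp [iot, gx]⟩
    · exact ⟨true, gy, by simp [iot, gy]⟩
    · exact ⟨false, gy, by simp [iot, gy]⟩
    · exact ⟨false, gx, by simp [iot, gx]⟩
  induction hγ using Subgroup.closure_induction_left with
  | one => exact Or.inl ⟨0, by simp⟩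
  | mul_left x hx y hy ih =>
    obtain ⟨x, rfl⟩ := hx
    obtain ⟨b, w, h⟩ := key x
    change NF (gen x * y)
    rw [h]; exact ih.mul b w
  | inv_mul_cancel x hx y hy ih =>
    obtain ⟨x, rfl⟩ := hx
    obtain ⟨b, w, h⟩ := key x
    change NF ((gen x)⁻¹ * y)
    rw [h, ← map_inv]; exact ih.mul b w⁻¹

lemma poly_step (P Q : ℤ[X]) (h : Q.degree < P.degree) (p q r s : ℤ) (hr : r ≠ 0) :
    (C r * P + C s * Q) ≠ 0 ∧ (C p * P + C q * Q).degree ≤ (C r * P + C s * Q).degree := by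
  have hs : (C s * Q).degree < P.degree := lt_of_le_of_lt (dCle s Q) h
  have h1 : (C r * P + C s * Q).degree = P.degree := by
    rw [degree_add_eq_left_of_degree_lt] <;> rw [degree_C_mul hr]
    exact hs
  refine ⟨?_, ?_⟩
  · rw [← degree_ne_bot, h1]
    exact (bot_le.trans_lt h).ne'
  · rw [h1]
    refine (degree_add_le _ _).trans (max_le (dCle _ _) ?_)
    exact (dCle q Q).trans h.le

lemma poly_shift (P Q : ℤ[X]) (hQ : Q ≠ 0) (h : P.degree ≤ Q.degree) (m : ℤ) (hm : m ≠ 0) :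
    Q.degree < (P + C m * X * Q).degree := by
  have h1 : (C m * X * Q).degree = Q.degree + 1 := by
    rw [mul_assoc, degree_C_mul hm, mul_comm, degree_mul_X]
  have h2 : Q.degree < Q.degree + 1 := by
    rw [degree_eq_natDegree hQ]; exact_mod_cast Nat.lt_succ_self _
  rw [degree_add_eq_right_of_degree_lt] <;> rw [h1]
  · exact h2
  · exact h.trans_lt h2

/-- The polynomial vector describing the images under foldings. -/
def PolyCol (γ : SurfaceGroup 2) (P Q : ℤ[X]) : Prop :=
  ∀ n : ℕ, colP (fold n γ) = P.eval (n : ℤ) ∧ colQ (fold n γ) = Q.eval (n : ℤ)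

lemma step_true {γ : SurfaceGroup 2} {P Q : ℤ[X]} (h : PolyCol γ P Q) (u : F2)
    (hu : ∀ k : ℤ, u ≠ gc ^ k) (hd : Q.degree < P.degree) :
    ∃ P' Q', PolyCol (iot true u * γ) P' Q' ∧ Q' ≠ 0 ∧ P'.degree ≤ Q'.degree := by
  have hr : colQ u ≠ 0 := fun h0 => by
    obtain ⟨k, hk⟩ := mem_of_colQ u h0
    exact hu k hk
  refine ⟨C (rho u 0 0) * P + C (rho u 0 1) * Q, C (colQ u) * P + C (rho u 1 1) * Q, ?_,
    poly_step P Q hd _ _ _ _ hr⟩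
  intro n
  rw [map_mul, fold_true, (col_mul _ _).1, (col_mul _ _).2, (h n).1, (h n).2]
  simp

lemma step_false {γ : SurfaceGroup 2} {P Q : ℤ[X]} (h : PolyCol γ P Q) (u : F2)
    (hu : ∀ k : ℤ, u ≠ gc ^ k) (hd : Q.degree < (P + C (-6) * X * Q).degree) :
    ∃ P' Q', PolyCol (iot false u * γ) P' Q' ∧ Q' ≠ 0 ∧ Q'.degree < P'.degree := by
  have hr : colQ u ≠ 0 := fun h0 => by
    obtain ⟨k, hk⟩ := mem_of_colQ u h0
    exact hu k hk
  obtain ⟨h1, h2⟩ := poly_step _ Q hd (rho u 0 0) (rho u 0 1) (colQ u) (rho u 1 1) hr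
  refine ⟨_, _, ?_, h1, poly_shift _ _ h1 h2 6 (by norm_num)⟩
  intro n
  rw [map_mul, fold_false, (col_conj _ _ _).1, (col_conj _ _ _).2, (h n).1, (h n).2]
  simp only [eval_add, eval_mul, eval_C, eval_X]
  constructor <;> ring

lemma polyCol_c (b : Bool) (k : ℤ) :
    PolyCol (iot b (gc ^ k)) (C (colP (gc ^ k))) 0 := by
  intro n
  rw [fold_c, (col_cpow k).1]; simp

lemma deg_c (k : ℤ) : (0 : ℤ[X]).degree < (C (colP (gc ^ k))).degree := by
  have : colP (gc ^ k) ≠ 0 := fun h => by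
    have := (col_cpow k).2
    rw [h] at this; norm_num at this
  rw [degree_C this, degree_zero]
  exact WithBot.bot_lt_coe _

lemma Alt.poly {b : Bool} {γ : SurfaceGroup 2} (h : Alt b γ) :
    ∃ P Q, PolyCol γ P Q ∧ Q ≠ 0 ∧
      (b = true → P.degree ≤ Q.degree) ∧ (b = false → Q.degree < P.degree) := by
  induction h with
  | base b u hu k =>
    cases b
    · obtain ⟨P, Q, h1, h2, h3⟩ := step_false (polyCol_c false k) u hu (by simpa using deg_c k)
      exact ⟨P, Q, h1, h2, by simp, fun _ => h3⟩
    · obtain ⟨P, Q, h1, h2, h3⟩ := step_true (polyCol_c true k) u hu (deg_c k)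
      exact ⟨P, Q, h1, h2, fun _ => h3, by simp⟩
  | step b u hu γ _ ih =>
    obtain ⟨P, Q, h1, h2, h3, h4⟩ := ih
    cases b
    · obtain ⟨P, Q, h1, h2, h3⟩ := step_false h1 u hu
        (poly_shift P Q h2 (h3 rfl) (-6) (by norm_num))
      exact ⟨P, Q, h1, h2, by simp, fun _ => h3⟩
    · obtain ⟨P, Q, h1, h2, h3⟩ := step_true h1 u hu (h4 rfl)
      exact ⟨P, Q, h1, h2, fun _ => h3, by simp⟩

lemma genus_two (γ : SurfaceGroup 2) (hγ : γ ≠ 1) : ∃ n, fold n γ ≠ 1 := by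
  by_contra! hcon
  rcases nf_all γ with ⟨k, rfl⟩ | ⟨b, h⟩
  · have := hcon 0
    rw [fold_true] at this
    rw [this] at hγ
    exact hγ (map_one _)
  · obtain ⟨P, Q, h1, h2, -⟩ := h.poly
    apply h2
    apply Polynomial.eq_zero_of_infinite_isRoot
    refine Set.Infinite.mono ?_ (Set.infinite_range_of_injective (Nat.cast_injective (R := ℤ)))
    rintro _ ⟨n, rfl⟩
    have := (h1 n).2
    rw [hcon n] at this
    simp only [Set.mem_ofPred_eq, Polynomial.IsRoot]
    rw [← this]
    simp [colQ]

end SurfRF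

namespace SurfRF

section Cover

variable {m : ℕ}

/-- Assignments for generators, first handle separated. -/
def asg {G : Type*} (A B : G) (P : Fin (m + 1) → Bool → G) (x : Fin (m + 2) × Bool) : G :=
  Fin.cases (motive := fun _ => G) (if x.2 then B else A) (fun k => P k x.2) x.1

/-- Homomorphisms out of the surface group, first handle separated. -/
def hlift {G : Type*} [Group G] (A B : G) (P : Fin (m + 1) → Bool → G)
    (h : ⁅A, B⁆ * (List.ofFn fun k => ⁅P k false, P k true⁆).prod = 1) :
    SurfaceGroup (m + 2) →* G :=
  surfLift (asg A B P) (by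
    rw [List.ofFn_succ, List.prod_cons]
    exact h)

/-- handle generators -/
def ga : SurfaceGroup (m + 2) := gen (0, false)
/-- handle generators -/
def gb : SurfaceGroup (m + 2) := gen (0, true)
/-- handle generators -/
def gq (k : Fin (m + 1)) (d : Bool) : SurfaceGroup (m + 2) := gen (k.succ, d)

section
variable {G : Type*} [Group G] (A B : G) (P : Fin (m + 1) → Bool → G)
    (h : ⁅A, B⁆ * (List.ofFn fun k => ⁅P k false, P k true⁆).prod = 1)

lemma hlift_a : hlift A B P h ga = A := by simp [hlift, ga, asg]
lemma hlift_b : hlift A B P h gb = B := by simp [hlift, gb, asg]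
lemma hlift_q (k : Fin (m + 1)) (d : Bool) : hlift A B P h (gq k d) = P k d := by
  simp [hlift, gq, asg]
end

lemma hext {G : Type*} [Group G] {φ ψ : SurfaceGroup (m + 2) →* G} (ha : φ ga = ψ ga)
    (hb : φ gb = ψ gb) (hq : ∀ k d, φ (gq k d) = ψ (gq k d)) : φ = ψ := by
  apply PresentedGroup.ext
  rintro ⟨i, d⟩
  refine Fin.cases ?_ (fun k => ?_) i
  · cases d
    · exact ha
    · exact hb
  · exact hq k d

lemma hrel : ⁅(ga : SurfaceGroup (m + 2)), (gb : SurfaceGroup (m + 2))⁆ *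
    (List.ofFn fun k : Fin (m + 1) => ⁅(gq k false : SurfaceGroup (m + 2)), gq k true⁆).prod = 1 := by
  have h := gen_rel (m + 2)
  rw [List.ofFn_succ, List.prod_cons] at h
  exact h

lemma pow_rel {G : Type*} [Group G] (a b R : G) (h : ⁅a, b⁆ * R = 1) (n : ℕ) :
    ⁅a ^ n, b⁆ * (List.ofFn fun k : Fin n => a ^ (k : ℕ) * R * (a ^ (k : ℕ))⁻¹).prod = 1 := by
  induction n with
  | zero => simp
  | succ n ih =>
    rw [List.ofFn_succ', List.concat_eq_append, List.prod_append]
    simp only [Fin.val_castSucc, Fin.val_last, List.prod_cons, List.prod_nil, mul_one]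
    have h1 : ⁅a ^ (n + 1), b⁆ = a ^ n * ⁅a, b⁆ * (a ^ n)⁻¹ * ⁅a ^ n, b⁆ := by
      simp only [commutatorElement_def, pow_succ]; group
    rw [h1, mul_assoc, ← mul_assoc ⁅a ^ n, b⁆, ih, eq_inv_of_mul_eq_one_left h]
    group

/-- The covering homomorphism. -/
def cover : SurfaceGroup (m + 2) →* SurfaceGroup 2 :=
  hlift (ga ^ (m + 1)) gb (fun k d => ga ^ (k : ℕ) * gq 0 d * (ga ^ (k : ℕ))⁻¹) (by
    have h := hrel (m := 0)
    simp only [List.ofFn_succ, List.ofFn_zero, List.prod_cons, List.prod_nil, mul_one] at h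
    have h2 := pow_rel _ _ _ h (m + 1)
    refine Eq.trans ?_ h2
    congr 2
    refine congrArg List.ofFn ?_
    funext k
    simp only [commutatorElement_def]
    group)

/-- The deck transformation. -/
def deck : SurfaceGroup (m + 2) →* SurfaceGroup (m + 2) :=
  hlift ga (⁅(gq 0 false : SurfaceGroup (m + 2)), (gq 0 true : SurfaceGroup (m + 2))⁆⁻¹ * gb)
    (fun k d => Fin.lastCases (motive := fun _ => SurfaceGroup (m + 2)) (ga * gq 0 d * ga⁻¹)
      (fun j => gq j.succ d) k) (by
    rw [List.ofFn_succ', List.concat_eq_append, List.prod_append]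
    simp only [Fin.lastCases_castSucc, Fin.lastCases_last, List.prod_cons, List.prod_nil, mul_one]
    have h := hrel (m := m)
    rw [List.ofFn_succ, List.prod_cons] at h
    generalize (List.ofFn fun i : Fin m => ⁅(gq i.succ false : SurfaceGroup (m + 2)),
      gq i.succ true⁆).prod = W at *
    have hW : W = (⁅(ga : SurfaceGroup (m + 2)), (gb : SurfaceGroup (m + 2))⁆ * ⁅(gq 0 false : SurfaceGroup (m + 2)), (gq 0 true : SurfaceGroup (m + 2))⁆)⁻¹ := by
      rw [← mul_assoc] at h
      exact eq_inv_of_mul_eq_one_right h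
    rw [hW]
    simp only [commutatorElement_def]
    group)

lemma deck_a : deck (ga : SurfaceGroup (m + 2)) = ga := hlift_a _ _ _ _
lemma deck_b : deck (gb : SurfaceGroup (m + 2)) = ⁅(gq 0 false : SurfaceGroup (m + 2)), (gq 0 true : SurfaceGroup (m + 2))⁆⁻¹ * gb :=
  hlift_b _ _ _ _
lemma deck_q (j : Fin m) (d : Bool) :
    deck (gq j.castSucc d : SurfaceGroup (m + 2)) = gq j.succ d := by
  rw [deck, hlift_q, Fin.lastCases_castSucc]
lemma deck_last (d : Bool) :
    deck (gq (Fin.last m) d : SurfaceGroup (m + 2)) = ga * gq 0 d * ga⁻¹ := by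
  rw [deck, hlift_q, Fin.lastCases_last]

/-- powers of the deck transformation -/
def dk : ℕ → (SurfaceGroup (m + 2) →* SurfaceGroup (m + 2))
  | 0 => MonoidHom.id _
  | k + 1 => (dk k).comp deck

lemma dk_zero (x : SurfaceGroup (m + 2)) : dk 0 x = x := rfl
lemma dk_succ (k : ℕ) (x : SurfaceGroup (m + 2)) : dk (k + 1) x = dk k (deck x) := rfl
lemma dk_add (k l : ℕ) (x : SurfaceGroup (m + 2)) : dk (k + l) x = dk k (dk l x) := by
  induction l generalizing x with
  | zero => rfl
  | succ l ih => rw [← Nat.add_assoc, dk_succ, dk_succ, ih]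
lemma dk_succ' (k : ℕ) (x : SurfaceGroup (m + 2)) : dk (k + 1) x = deck (dk k x) := by
  rw [Nat.add_comm k 1, dk_add]; rfl
lemma dk_comm (k l : ℕ) (x : SurfaceGroup (m + 2)) : dk k (dk l x) = dk l (dk k x) := by
  rw [← dk_add, ← dk_add, Nat.add_comm k l]

lemma dk_a (k : ℕ) : dk k (ga : SurfaceGroup (m + 2)) = ga := by
  induction k with
  | zero => rfl
  | succ k ih => rw [dk_succ, deck_a, ih]

lemma dk_q (k : Fin (m + 1)) (d : Bool) : dk k (gq 0 d : SurfaceGroup (m + 2)) = gq k d := by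
  induction k using Fin.induction with
  | zero => rfl
  | succ k ih =>
    rw [Fin.val_succ, dk_succ']
    rw [Fin.val_castSucc] at ih
    rw [ih, deck_q]

lemma dk_full_q (k : Fin (m + 1)) (d : Bool) :
    dk (m + 1) (gq k d : SurfaceGroup (m + 2)) = ga * gq k d * ga⁻¹ := by
  have h0 : dk (m + 1) (gq 0 d : SurfaceGroup (m + 2)) = ga * gq 0 d * ga⁻¹ := by
    have := dk_q (Fin.last m) d
    rw [Fin.val_last] at this
    rw [dk_succ', this, deck_last]
  rw [← dk_q k d, dk_comm, h0, map_mul, map_mul, map_inv, dk_a]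

lemma dk_b (k : ℕ) : dk k (gb : SurfaceGroup (m + 2)) =
    (List.ofFn fun i : Fin k => dk i ⁅(gq 0 false : SurfaceGroup (m + 2)), (gq 0 true : SurfaceGroup (m + 2))⁆).prod⁻¹ * gb := by
  induction k with
  | zero => simp [dk_zero]
  | succ k ih =>
    rw [dk_succ, deck_b, map_mul, ih, List.ofFn_succ', List.concat_eq_append, List.prod_append]
    simp only [Fin.val_castSucc, Fin.val_last, List.prod_cons, List.prod_nil, mul_one, map_inv,
      mul_inv_rev, mul_assoc]

lemma dk_full (x : SurfaceGroup (m + 2)) : dk (m + 1) x = ga * x * ga⁻¹ := by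
  have : dk (m + 1) = (MulAut.conj (ga : SurfaceGroup (m + 2))).toMonoidHom := by
    apply hext
    · rw [dk_a]; simp
    · rw [dk_b]
      have h := hrel (m := m)
      have h2 : (List.ofFn fun i : Fin (m + 1) =>
          dk i ⁅(gq 0 false : SurfaceGroup (m + 2)), (gq 0 true : SurfaceGroup (m + 2))⁆).prod =
          ⁅(ga : SurfaceGroup (m + 2)), (gb : SurfaceGroup (m + 2))⁆⁻¹ := by
        rw [← eq_inv_of_mul_eq_one_right h]
        congr 1
        refine congrArg List.ofFn ?_
        funext k
        rw [map_commutatorElement, dk_q, dk_q]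
      rw [h2]
      simp [commutatorElement_def]
    · intro k d
      rw [dk_full_q]; simp
  exact DFunLike.congr_fun this x

lemma deck_bij : Function.Bijective (deck : SurfaceGroup (m + 2) →* SurfaceGroup (m + 2)) := by
  constructor
  · intro x y h
    have h1 := dk_full x
    have h2 := dk_full y
    rw [dk_succ, h, ← dk_succ, h2] at h1
    exact (mul_left_cancel (mul_right_cancel h1)).symm
  · intro x
    refine ⟨dk m (ga⁻¹ * x * ga), ?_⟩
    rw [← dk_succ', dk_full]; group

/-- The deck transformation as an automorphism. -/
noncomputable def deckAut : MulAut (SurfaceGroup (m + 2)) := MulEquiv.ofBijective deck deck_bij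

lemma deckAut_apply (x : SurfaceGroup (m + 2)) : deckAut x = deck x := rfl

lemma deckAut_pow (k : ℕ) (x : SurfaceGroup (m + 2)) : (deckAut ^ k) x = dk k x := by
  induction k generalizing x with
  | zero => rfl
  | succ k ih => rw [pow_succ, MulAut.mul_apply, ih, dk_succ]; rfl

/-- The mapping torus group. -/
noncomputable abbrev Tor (m : ℕ) : Type :=
  SurfaceGroup (m + 2) ⋊[zpowersHom (MulAut (SurfaceGroup (m + 2))) deckAut] Multiplicative ℤ

/-- fibre inclusion -/
noncomputable def fib : SurfaceGroup (m + 2) →* Tor m := SemidirectProduct.inl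
/-- stable letter -/
noncomputable def zz : Tor m := SemidirectProduct.inr (Multiplicative.ofAdd 1)

lemma zz_conj (x : SurfaceGroup (m + 2)) : zz * fib x * zz⁻¹ = fib (deck x) := by
  rw [zz, fib, ← map_inv, ← SemidirectProduct.inl_aut]
  simp [deckAut_apply]

lemma zz_pow_conj (k : ℕ) (x : SurfaceGroup (m + 2)) :
    zz ^ k * fib x * (zz ^ k)⁻¹ = fib (dk k x) := by
  induction k generalizing x with
  | zero => simp [dk_zero]
  | succ k ih =>
    rw [dk_succ, ← ih, ← zz_conj, pow_succ]; group

/-- The genus two group maps to the mapping torus. -/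
noncomputable def toTor : SurfaceGroup 2 →* Tor m :=
  hlift (m := 0) zz (fib gb) (fun _ d => fib (gq 0 d)) (by
    simp only [List.ofFn_succ, List.ofFn_zero, List.prod_cons, List.prod_nil, mul_one]
    rw [commutatorElement_def, zz_conj, ← map_commutatorElement, ← map_inv, ← map_mul, ← map_mul,
      deck_b]
    rw [← map_one fib]
    congr 1
    group)

/-- the central element -/
noncomputable def zeta : Tor m := (fib ga)⁻¹ * zz ^ (m + 1)

lemma zeta_fib (x : SurfaceGroup (m + 2)) : zeta * fib x = fib x * zeta := by
  have h := zz_pow_conj (m + 1) x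
  rw [dk_full, mul_inv_eq_iff_eq_mul] at h
  rw [zeta, mul_assoc, h]
  simp only [map_mul, map_inv]
  group

lemma zeta_zz : (zeta : Tor m) * zz = zz * zeta := by
  have h := zz_conj (ga : SurfaceGroup (m + 2))⁻¹
  rw [map_inv deck, deck_a, mul_inv_eq_iff_eq_mul, map_inv] at h
  rw [zeta, ← mul_assoc, h, mul_assoc, mul_assoc, ← pow_succ, ← pow_succ']

lemma zeta_central : (zeta : Tor m) ∈ Subgroup.center (Tor m) := by
  rw [Subgroup.mem_center_iff]
  intro x
  rw [← SemidirectProduct.inl_left_mul_inr_right x]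
  have h1 : Commute (zeta : Tor m) (fib x.left) := zeta_fib _
  have h2 : Commute (zeta : Tor m) (zz ^ (Multiplicative.toAdd x.right)) :=
    Commute.zpow_right zeta_zz _
  have h3 : (zz : Tor m) ^ (Multiplicative.toAdd x.right) = SemidirectProduct.inr x.right := by
    rw [zz, ← map_zpow]
    congr 1
    rw [← ofAdd_zsmul]; simp
  rw [h3] at h2
  exact (h1.mul_right h2).symm

lemma cover_injective (γ : SurfaceGroup (m + 2)) (h : cover γ = 1) : γ = 1 := by
  have hle : Subgroup.zpowers (zeta : Tor m) ≤ Subgroup.center (Tor m) :=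
    (Subgroup.zpowers_le).2 zeta_central
  have : (Subgroup.zpowers (zeta : Tor m)).Normal := by
    constructor
    intro n hn g
    have hc := Subgroup.mem_center_iff.1 (hle hn) g
    rw [hc, mul_inv_cancel_right]
    exact hn
  have key : (QuotientGroup.mk' (Subgroup.zpowers (zeta : Tor m))).comp (toTor.comp cover) =
      (QuotientGroup.mk' (Subgroup.zpowers (zeta : Tor m))).comp fib := by
    apply hext
    · simp only [MonoidHom.comp_apply, cover, hlift_a, map_pow]
      rw [← map_pow, toTor, hlift_a, eq_comm]
      rw [QuotientGroup.mk'_apply, QuotientGroup.mk'_apply, QuotientGroup.eq]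
      exact Subgroup.mem_zpowers _
    · simp only [MonoidHom.comp_apply, cover, hlift_b, toTor]
    · intro k d
      simp only [MonoidHom.comp_apply, cover, hlift_q, map_mul, map_inv, map_pow, toTor, hlift_a]
      simp only [← map_mul, ← map_inv, ← map_pow]
      rw [zz_pow_conj, dk_q]
  have h1 := DFunLike.congr_fun key γ
  simp only [MonoidHom.comp_apply, h, map_one] at h1
  rw [eq_comm, QuotientGroup.mk'_apply, QuotientGroup.eq_one_iff] at h1
  obtain ⟨j, hj⟩ := h1
  have h2 := congrArg SemidirectProduct.rightHom hj
  have h3 : SemidirectProduct.rightHom (zeta : Tor m) = Multiplicative.ofAdd ((m : ℤ) + 1) := by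
    rw [zeta, map_mul, map_inv, map_pow, fib, zz, SemidirectProduct.rightHom_inl,
      SemidirectProduct.rightHom_inr, ← ofAdd_nsmul]
    simp
  have h4 : SemidirectProduct.rightHom (fib γ : Tor m) = 1 := SemidirectProduct.rightHom_inl _
  change SemidirectProduct.rightHom (zeta ^ j) = _ at h2
  rw [map_zpow, h3, h4, ← ofAdd_zsmul, ofAdd_eq_one, smul_eq_mul, mul_eq_zero] at h2
  have hj0 : j = 0 := by omega
  subst hj0
  have h5 : (fib γ : Tor m) = fib 1 := by
    rw [← hj, map_one]; exact zpow_zero _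
  exact SemidirectProduct.inl_injective h5

end Cover

end SurfRF

/-- If `a, b ∈ Γ_g` do not commute, there is a homomorphism `φ : Γ_g → F₂` to the free
group on two generators with `φ(a)φ(b) ≠ φ(b)φ(a)`. -/
theorem exists_hom_to_free_group_noncommuting (g : ℕ) (hg : 2 ≤ g)
    (a b : SurfaceGroup g) (hab : a * b ≠ b * a) :
    ∃ φ : SurfaceGroup g →* FreeGroup (Fin 2), φ a * φ b ≠ φ b * φ a := by
  obtain ⟨m, rfl⟩ := Nat.exists_eq_add_of_le' hg
  have h1 : SurfRF.cover ⁅a, b⁆ ≠ 1 := fun h =>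
    hab (commutatorElement_eq_one_iff_mul_comm.1 (SurfRF.cover_injective _ h))
  obtain ⟨n, hn⟩ := SurfRF.genus_two _ h1
  refine ⟨(SurfRF.fold n).comp SurfRF.cover, fun h => hn ?_⟩
  rw [← MonoidHom.comp_apply, map_commutatorElement]
  exact commutatorElement_eq_one_iff_mul_comm.2 h
end

section
/- Let g ≥ 2 and n ≥ 3, and let a, b ∈ Γ_g be two elements with ab ≠ ba. Then there exists a group homomorphism ρ: Γ_g → SL_n(ℝ) such that the subgroup of SL_n(ℝ) generated by ρ(a) and ρ(b) is Zariski-dense in SL_n(ℝ). -/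
open Matrix MvPolynomial
open scoped commutatorElement

/-- `SL n K`: the special linear group of `n × n` matrices over `K`. -/
abbrev SL (n : ℕ) (K : Type) [CommRing K] := Matrix.SpecialLinearGroup (Fin n) K

/-- A subgroup `H ≤ SL_n(ℝ)` is Zariski-dense in `SL_n(ℝ)`: every real polynomial in the
matrix entries vanishing on `H` vanishes on all of `SL_n(ℝ)`. -/
def IsZariskiDense (n : ℕ) (H : Subgroup (SL n ℝ)) : Prop :=
  ∀ P : MvPolynomial (Fin n × Fin n) ℝ,
    (∀ h ∈ H, eval (fun p => (h : Matrix (Fin n) (Fin n) ℝ) p.1 p.2) P = 0) →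
    ∀ A : SL n ℝ, eval (fun p => (A : Matrix (Fin n) (Fin n) ℝ) p.1 p.2) P = 0

/-! ## Part A: residual freeness -/

abbrev FF := FreeGroup Bool
abbrev fx : FF := FreeGroup.of false
abbrev fy : FF := FreeGroup.of true

abbrev NzVec := {v : ℤ × ℤ // v ≠ 0}

def mvec (A : SL 2 ℤ) (v : ℤ × ℤ) : ℤ × ℤ :=
  (A.1 0 0 * v.1 + A.1 0 1 * v.2, A.1 1 0 * v.1 + A.1 1 1 * v.2)

lemma mvec_one (v) : mvec 1 v = v := by simp [mvec]

lemma mvec_mul (A B : SL 2 ℤ) (v) : mvec (A * B) v = mvec A (mvec B v) := by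
  ext <;> simp [mvec, Matrix.mul_apply, Fin.sum_univ_two] <;> ring

lemma mvec_zero (A : SL 2 ℤ) : mvec A 0 = 0 := by simp [mvec]

instance : MulAction (SL 2 ℤ) NzVec where
  smul A v := ⟨mvec A v.1, fun h => v.2 (by
    have := mvec_mul A⁻¹ A v.1
    rwa [h, mvec_zero, inv_mul_cancel, mvec_one] at this)⟩
  one_smul v := Subtype.ext (mvec_one _)
  mul_smul A B v := Subtype.ext (mvec_mul A B _)

lemma nz_smul_val (A : SL 2 ℤ) (v : NzVec) : (A • v).1 = mvec A v.1 := rfl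

def mx : SL 2 ℤ := ⟨!![2, 1; 1, 1], by simp [Matrix.det_fin_two]⟩
def my : SL 2 ℤ := ⟨!![3, 1; -1, 0], by simp [Matrix.det_fin_two]⟩

lemma mx_inv : (mx⁻¹).1 = !![1, -1; -1, 2] := by
  rw [Matrix.SpecialLinearGroup.SL2_inv_expl]; simp [mx]; rfl
lemma my_inv : (my⁻¹).1 = !![0, -1; 1, 3] := by
  rw [Matrix.SpecialLinearGroup.SL2_inv_expl]; simp [my]; rfl

lemma mvec_mx (v) : mvec mx v = (2 * v.1 + v.2, v.1 + v.2) := by simp [mvec, mx]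
lemma mvec_my (v) : mvec my v = (3 * v.1 + v.2, -v.1) := by simp [mvec, my]
lemma mvec_mx_inv (v) : mvec mx⁻¹ v = (v.1 - v.2, -v.1 + 2 * v.2) := by
  simp only [mvec, mx_inv]; ext <;> simp <;> ring
lemma mvec_my_inv (v) : mvec my⁻¹ v = (-v.2, v.1 + 3 * v.2) := by
  simp only [mvec, my_inv]; ext <;> simp

def rhoZ : FF →* SL 2 ℤ := FreeGroup.lift (fun b => if b then my else mx)

lemma rhoZ_x : rhoZ fx = mx := by simp [rhoZ, fx]
lemma rhoZ_y : rhoZ fy = my := by simp [rhoZ, fy]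

lemma rhoZ_injective : Function.Injective rhoZ := by
  let X : Bool → Set NzVec := fun b => if b then
      {v | (0 < (v.1.1 + v.1.2) ∧ (v.1.1 + v.1.2) ≤ v.1.1) ∨ ((v.1.1 + v.1.2) < 0 ∧ v.1.1 ≤ (v.1.1 + v.1.2))}
    else {v | (0 ≤ v.1.1 ∧ v.1.1 < (v.1.1 + v.1.2)) ∨ ((v.1.1 + v.1.2) < v.1.1 ∧ v.1.1 ≤ 0)}
  let Y : Bool → Set NzVec := fun b => if b then
      {v | (v.1.1 < 0 ∧ -v.1.1 ≤ (v.1.1 + v.1.2)) ∨ (0 < v.1.1 ∧ (v.1.1 + v.1.2) ≤ -v.1.1)}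
    else {v | (0 ≤ (v.1.1 + v.1.2) ∧ (v.1.1 + v.1.2) < -v.1.1) ∨ ((v.1.1 + v.1.2) ≤ 0 ∧ -v.1.1 < (v.1.1 + v.1.2))}
  have hXY : ∀ b, (∀ v : NzVec, v ∈ X b ↔ if b then
      ((0 < (v.1.1 + v.1.2) ∧ (v.1.1 + v.1.2) ≤ v.1.1) ∨ ((v.1.1 + v.1.2) < 0 ∧ v.1.1 ≤ (v.1.1 + v.1.2)))
      else ((0 ≤ v.1.1 ∧ v.1.1 < (v.1.1 + v.1.2)) ∨ ((v.1.1 + v.1.2) < v.1.1 ∧ v.1.1 ≤ 0))) ∧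
    (∀ v : NzVec, v ∈ Y b ↔ if b then
       ((v.1.1 < 0 ∧ -v.1.1 ≤ (v.1.1 + v.1.2)) ∨ (0 < v.1.1 ∧ (v.1.1 + v.1.2) ≤ -v.1.1))
      else ((0 ≤ (v.1.1 + v.1.2) ∧ (v.1.1 + v.1.2) < -v.1.1) ∨ ((v.1.1 + v.1.2) ≤ 0 ∧ -v.1.1 < (v.1.1 + v.1.2)))) := by
    rintro (_ | _) <;> exact ⟨fun v => by simp [X], fun v => by simp [Y]⟩
  have hX := fun b => (hXY b).1
  have hY := fun b => (hXY b).2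
  have nz : ∀ v : NzVec, v.1.1 ≠ 0 ∨ v.1.2 ≠ 0 := by
    intro v
    by_contra! h
    exact v.2 (Prod.ext h.1 h.2)
  clear_value X Y
  refine FreeGroup.injective_lift_of_ping_pong (α := NzVec) (fun b => if b then my else mx)
    X Y ?_ ?_ ?_ ?_ ?_ ?_
  · rintro (_ | _)
    · exact ⟨⟨(0, 1), by simp⟩, by rw [hX]; simp⟩
    · exact ⟨⟨(1, 0), by simp⟩, by rw [hX]; simp⟩
  · rintro (_ | _) (_ | _) h <;> simp at h <;> rw [Function.onFun, Set.disjoint_left] <;>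
      intro v h1 h2 <;> rw [hX] at h1 h2 <;> simp at h1 h2 <;> omega
  · rintro (_ | _) (_ | _) h <;> simp at h <;> rw [Function.onFun, Set.disjoint_left] <;>
      intro v h1 h2 <;> rw [hY] at h1 h2 <;> simp at h1 h2 <;> omega
  · rintro (_ | _) (_ | _) <;> rw [Set.disjoint_left] <;>
      intro v h1 h2 <;> rw [hX] at h1 <;> rw [hY] at h2 <;> simp at h1 h2 <;> omega
  · rintro (_ | _) <;> rintro _ ⟨v, hv, rfl⟩ <;> rw [Set.mem_compl_iff, hY] at hv <;>
      rw [hX] <;> have := nz v <;> simp [nz_smul_val, mvec_mx, mvec_my] at hv ⊢ <;> omega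
  · rintro (_ | _) <;> rintro _ ⟨v, hv, rfl⟩ <;> rw [Set.mem_compl_iff, hX] at hv <;>
      rw [hY] <;> have := nz v <;>
      simp [nz_smul_val, mvec_mx_inv, mvec_my_inv] at hv ⊢ <;> omega

abbrev fc : FF := ⁅fx, fy⁆

lemma rhoZ_c : (rhoZ fc).1 = !![-1, -6; 0, -1] := by
  rw [map_commutatorElement, rhoZ_x, rhoZ_y, commutatorElement_def]
  simp only [Matrix.SpecialLinearGroup.coe_mul, mx_inv, my_inv]
  simp [mx, my]

/-! ### The Heisenberg group and centralizers -/

@[ext] structure Heis where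
  a : ℤ
  b : ℤ
  z : ℤ

namespace Heis

instance : Mul Heis := ⟨fun p q => ⟨p.a + q.a, p.b + q.b, p.z + q.z + p.a * q.b⟩⟩
instance : One Heis := ⟨⟨0, 0, 0⟩⟩
instance : Inv Heis := ⟨fun p => ⟨-p.a, -p.b, -p.z + p.a * p.b⟩⟩

lemma mul_a (p q : Heis) : (p * q).a = p.a + q.a := rfl
lemma mul_b (p q : Heis) : (p * q).b = p.b + q.b := rfl
lemma mul_z (p q : Heis) : (p * q).z = p.z + q.z + p.a * q.b := rfl
lemma one_a : (1 : Heis).a = 0 := rfl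
lemma one_b : (1 : Heis).b = 0 := rfl
lemma one_z : (1 : Heis).z = 0 := rfl
lemma inv_a (p : Heis) : (p⁻¹).a = -p.a := rfl
lemma inv_b (p : Heis) : (p⁻¹).b = -p.b := rfl
lemma inv_z (p : Heis) : (p⁻¹).z = -p.z + p.a * p.b := rfl

instance : Group Heis := Group.ofLeftAxioms
  (fun p q r => by ext <;> simp only [mul_a, mul_b, mul_z] <;> ring)
  (fun p => by ext <;> simp only [mul_a, mul_b, mul_z, one_a, one_b, one_z] <;> ring)
  (fun p => by
    ext <;> simp only [mul_a, mul_b, mul_z, one_a, one_b, one_z, inv_a, inv_b, inv_z] <;> ring)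

lemma pow_a (p : Heis) (n : ℕ) : (p ^ n).a = n * p.a := by
  induction n with
  | zero => simp [one_a]
  | succ n ih => rw [pow_succ, mul_a, ih]; push_cast; ring

lemma pow_b (p : Heis) (n : ℕ) : (p ^ n).b = n * p.b := by
  induction n with
  | zero => simp [one_b]
  | succ n ih => rw [pow_succ, mul_b, ih]; push_cast; ring

lemma pow_z (p : Heis) (n : ℕ) (ha : p.a = 0) : (p ^ n).z = n * p.z := by
  induction n with
  | zero => simp [one_z]
  | succ n ih => rw [pow_succ, mul_z, ih, pow_a, ha]; push_cast; ring

lemma zpow_abz (p : Heis) (k : ℤ) (ha : p.a = 0) (hb : p.b = 0) :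
    (p ^ k).a = 0 ∧ (p ^ k).b = 0 ∧ (p ^ k).z = k * p.z := by
  cases k with
  | ofNat n => simp [pow_a, pow_b, pow_z, ha, hb]
  | negSucc n =>
    simp only [zpow_negSucc, inv_a, inv_b, inv_z, pow_a, pow_b, pow_z p _ ha, ha, hb]
    refine ⟨by simp, by simp, ?_⟩
    rw [Int.negSucc_eq]; push_cast; ring

end Heis

def heis : FF →* Heis := FreeGroup.lift (fun b => if b then ⟨0, 1, 0⟩ else ⟨1, 0, 0⟩)

lemma heis_c : heis fc = ⟨0, 0, 1⟩ := by
  rw [map_commutatorElement, commutatorElement_def]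
  simp only [heis, fx, fy, FreeGroup.lift_apply_of]
  ext <;> simp [Heis.mul_a, Heis.mul_b, Heis.mul_z, Heis.inv_a, Heis.inv_b, Heis.inv_z]

def unip (k : ℤ) : SL 2 ℤ := ⟨!![1, k; 0, 1], by simp⟩

lemma unip_mul (k l : ℤ) : unip k * unip l = unip (k + l) := by
  apply Subtype.ext
  rw [Matrix.SpecialLinearGroup.coe_mul]
  simp [unip, add_comm]

lemma unip_zpow (k l : ℤ) : unip k ^ l = unip (l * k) := by
  let f : Multiplicative ℤ →* SL 2 ℤ :=
    { toFun := fun m => unip m.toAdd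
      map_one' := by ext i j; fin_cases i <;> fin_cases j <;> simp [unip]
      map_mul' := fun a b => (unip_mul _ _).symm }
  have := map_zpow f (Multiplicative.ofAdd k) l
  simpa [f] using this.symm

lemma rhoZ_c_sq : rhoZ fc ^ 2 = unip 12 := by
  apply Subtype.ext
  rw [Matrix.SpecialLinearGroup.coe_pow, rhoZ_c, pow_two]
  simp [unip]

lemma rhoZ_c_zpow (k : ℤ) : rhoZ (fc ^ (2 * k)) = unip (12 * k) := by
  rw [map_zpow, _root_.zpow_mul, show (rhoZ fc ^ (2 : ℤ)) = rhoZ fc ^ 2 by norm_cast, rhoZ_c_sq,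
    unip_zpow, mul_comm]

lemma sq_unip_of_lower_zero (A : SL 2 ℤ) (h : A.1 1 0 = 0) : ∃ k, A ^ 2 = unip (2 * k) := by
  have hdet := A.2
  rw [Matrix.det_fin_two, h, mul_zero, sub_zero] at hdet
  have h1 := Int.eq_one_or_neg_one_of_mul_eq_one' hdet
  refine ⟨A.1 0 0 * A.1 0 1, ?_⟩
  apply Subtype.ext
  rw [Matrix.SpecialLinearGroup.coe_pow, pow_two]
  ext i j
  fin_cases i <;> fin_cases j <;> simp [Matrix.mul_apply, Fin.sum_univ_two, unip, h] <;>
    rcases h1 with h1 | h1 <;> simp [h1.1, h1.2] <;> ring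

lemma mem_zpowers_of_lower_zero (g : FF) (h : (rhoZ g).1 1 0 = 0) : ∃ e : ℤ, g = fc ^ e := by
  obtain ⟨k, hk⟩ := sq_unip_of_lower_zero _ h
  have h12 : g ^ 12 = fc ^ (2 * k) := by
    apply rhoZ_injective
    rw [rhoZ_c_zpow, map_pow, show 12 = 2 * 6 by norm_num, pow_mul, hk]
    have := unip_zpow (2 * k) 6
    rw [show unip (2 * k) ^ (6 : ℤ) = unip (2 * k) ^ 6 by norm_cast] at this
    rw [this]; congr 1; ring
  have hh := congrArg heis h12
  rw [map_pow, map_zpow, heis_c] at hh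
  obtain ⟨ha, hb, hz⟩ := Heis.zpow_abz ⟨0, 0, 1⟩ (2 * k) rfl rfl
  rw [← hh] at ha hb hz
  rw [Heis.pow_a] at ha
  have ha0 : (heis g).a = 0 := by push_cast at ha; omega
  rw [Heis.pow_z _ _ ha0] at hz
  push_cast at hz
  refine ⟨(heis g).z, ?_⟩
  apply pow_left_injective (M := FF) (n := 12) (by norm_num)
  show g ^ 12 = (fc ^ _) ^ 12
  rw [h12, ← zpow_natCast, ← _root_.zpow_mul]
  congr 1; push_cast; linarith

/-! ### Genus two: `Γ₂` is residually free -/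

def loE (p : Bool × FF) : ℤ := (rhoZ p.2).1 1 0

def shiftT (N : ℤ) (s : Bool) : SL 2 ℤ := unip (if s then N else 0)

def evZ (N : ℤ) (L : List (Bool × FF)) : SL 2 ℤ :=
  (L.map fun p => shiftT N p.1 * rhoZ p.2 * (shiftT N p.1)⁻¹).prod

lemma unip_inv (k : ℤ) : (unip k)⁻¹ = unip (-k) := by
  rw [inv_eq_iff_mul_eq_one, unip_mul]
  ext i j; fin_cases i <;> fin_cases j <;> simp [unip]

lemma mvec_unip (k : ℤ) (v) : mvec (unip k) v = (v.1 + k * v.2, v.2) := by simp [mvec, unip]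

lemma growth_step (K q P α β γ δ : ℤ) (hK : 1 ≤ K) (hq : q ≠ 0) (hP : 2 * K * |q| ≤ |P|)
    (hγ : γ ≠ 0) (h1 : |α| ≤ K) (h2 : |β| ≤ K) (h4 : |δ| ≤ K) :
    γ * P + δ * q ≠ 0 ∧ |α * P + β * q| ≤ 4 * K * |γ * P + δ * q| := by
  have hq' : 1 ≤ |q| := Int.one_le_abs hq
  have hγ' : 1 ≤ |γ| := Int.one_le_abs hγ
  have a1 : |P| - K * |q| ≤ |γ * P + δ * q| := by
    have := abs_sub_abs_le_abs_sub (γ * P) (-(δ * q))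
    rw [abs_neg, sub_neg_eq_add, abs_mul, abs_mul] at this
    have e1 : |P| ≤ |γ| * |P| := by nlinarith [abs_nonneg P]
    have e2 : |δ| * |q| ≤ K * |q| := by gcongr
    linarith
  have a2 : |α * P + β * q| ≤ K * |P| + K * |q| := by
    refine (abs_add_le _ _).trans ?_
    rw [abs_mul, abs_mul]
    gcongr
  constructor
  · intro h0
    rw [h0, abs_zero] at a1
    nlinarith
  · nlinarith [mul_le_mul_of_nonneg_left a1 (by linarith : (0 : ℤ) ≤ 4 * K),
      mul_le_mul_of_nonneg_left hP (by linarith : (0 : ℤ) ≤ K), mul_nonneg (by linarith : (0 : ℤ) ≤ K) (abs_nonneg q)]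

lemma growth (K N : ℤ) (hK : 1 ≤ K) (hN : 6 * K ≤ N) : ∀ (L : List (Bool × FF)) (p : Bool × FF),
    (∀ r ∈ p :: L, loE r ≠ 0 ∧ ∀ i j, |(rhoZ r.2).1 i j| ≤ K) →
    (p :: L).IsChain (fun r s => r.1 ≠ s.1) →
    let v := mvec (shiftT N p.1)⁻¹ (mvec (evZ N (p :: L)) (1, 0))
    v.2 ≠ 0 ∧ |v.1| ≤ 4 * K * |v.2| := by
  intro L
  induction L with
  | nil =>
    intro p hp _
    obtain ⟨h0, h1⟩ := hp p (by simp)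
    simp only [evZ, List.map_cons, List.map_nil, List.prod_cons, List.prod_nil, mul_one]
    rw [← mvec_mul, mul_assoc, inv_mul_cancel_left, mvec_mul, shiftT, unip_inv, mvec_unip]
    have e : mvec (rhoZ p.2) (1, 0) = ((rhoZ p.2).1 0 0, (rhoZ p.2).1 1 0) := by simp [mvec]
    simp only [mul_zero, add_zero, e]
    refine ⟨h0, (h1 0 0).trans ?_⟩
    have : 1 ≤ |(rhoZ p.2).1 1 0| := Int.one_le_abs h0
    nlinarith
  | cons r L ih =>
    intro p hp hc
    obtain ⟨h0, h1⟩ := hp p (by simp)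
    rw [List.isChain_cons_cons] at hc
    have ih' := ih r (fun s hs => hp s (List.mem_cons_of_mem _ hs)) hc.2
    have e0 : evZ N (p :: r :: L) =
        shiftT N p.1 * rhoZ p.2 * (shiftT N p.1)⁻¹ * evZ N (r :: L) := by simp [evZ]
    set u := mvec (shiftT N r.1)⁻¹ (mvec (evZ N (r :: L)) (1, 0)) with hu
    have hu' : mvec (evZ N (r :: L)) (1, 0) = mvec (shiftT N r.1) u := by
      rw [hu, ← mvec_mul, mul_inv_cancel, mvec_one]
    simp only [e0]
    rw [← mvec_mul, mul_assoc, mul_assoc, mul_assoc, inv_mul_cancel_left, mvec_mul, mvec_mul, hu',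
      shiftT, unip_inv, shiftT, mvec_unip, mvec_unip]
    obtain ⟨hq, hpq⟩ := ih'
    have hP : 2 * K * |u.2| ≤ |u.1 + (if r.1 then N else 0) * u.2 +
        -(if p.1 then N else 0) * u.2| := by
      have hne := hc.1
      have key : ∀ ε : ℤ, |ε| = 1 → 2 * K * |u.2| ≤ |u.1 + ε * N * u.2| := by
        intro ε hε
        have := abs_sub_abs_le_abs_sub (ε * N * u.2) (-u.1)
        rw [abs_neg, sub_neg_eq_add, abs_mul, abs_mul, hε, one_mul,
          abs_of_nonneg (by linarith : 0 ≤ N), add_comm] at this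
        nlinarith [abs_nonneg u.2]
      rcases p with ⟨_ | _, p⟩ <;> rcases r with ⟨_ | _, r⟩ <;> simp at hne ⊢
      · simpa using key 1 (by simp)
      · simpa using key (-1) (by simp)
    have hh := growth_step K u.2 _ _ _ _ _ hK hq hP h0 (h1 0 0) (h1 0 1) (h1 1 1)
    exact ⟨hh.1, by rw [← mul_assoc]; exact hh.2⟩

lemma exists_bound (L : List (Bool × FF)) :
    ∃ K : ℤ, 1 ≤ K ∧ ∀ r ∈ L, ∀ i j, |(rhoZ r.2).1 i j| ≤ K := by
  induction L with
  | nil => exact ⟨1, le_rfl, by simp⟩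
  | cons r L ih =>
    obtain ⟨K, hK, h⟩ := ih
    have hs : ∀ i j, |(rhoZ r.2).1 i j| ≤ ∑ i, ∑ j, |(rhoZ r.2).1 i j| := fun i j =>
      (Finset.single_le_sum (f := fun j => |(rhoZ r.2).1 i j|)
        (fun _ _ => abs_nonneg _) (Finset.mem_univ j)).trans
      (Finset.single_le_sum (f := fun i => ∑ j, |(rhoZ r.2).1 i j|)
        (fun _ _ => Finset.sum_nonneg fun _ _ => abs_nonneg _) (Finset.mem_univ i))
    have hs0 : 0 ≤ ∑ i, ∑ j, |(rhoZ r.2).1 i j| :=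
      Finset.sum_nonneg fun _ _ => Finset.sum_nonneg fun _ _ => abs_nonneg _
    refine ⟨K + ∑ i, ∑ j, |(rhoZ r.2).1 i j|, by linarith, ?_⟩
    intro s hs' i j
    rcases List.mem_cons.1 hs' with rfl | hs'
    · linarith [hs i j]
    · linarith [h s hs' i j]

section amalgam
variable {G : Type*} [Group G] (iA iB : FF →* G)

def evG (L : List (Bool × FF)) : G := (L.map fun p => if p.1 then iB p.2 else iA p.2).prod

lemma evG_append (L M) : evG iA iB (L ++ M) = evG iA iB L * evG iA iB M := by simp [evG]

lemma evG_merge (hc : iA fc = iB fc) (p q : Bool × FF)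
    (h : ¬ (p.1 ≠ q.1 ∧ loE p ≠ 0 ∧ loE q ≠ 0)) :
    ∃ r, evG iA iB [p, q] = evG iA iB [r] := by
  have hz : ∀ e : ℤ, iA (fc ^ e) = iB (fc ^ e) := fun e => by rw [map_zpow, map_zpow, hc]
  by_cases h1 : p.1 = q.1
  · refine ⟨(p.1, p.2 * q.2), ?_⟩
    simp only [evG, List.map_cons, List.map_nil, List.prod_cons, List.prod_nil, mul_one, ← h1]
    split_ifs <;> simp
  by_cases h2 : loE p = 0
  · obtain ⟨e, he⟩ := mem_zpowers_of_lower_zero _ h2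
    refine ⟨(q.1, p.2 * q.2), ?_⟩
    simp only [evG, List.map_cons, List.map_nil, List.prod_cons, List.prod_nil, mul_one]
    rw [he]
    split_ifs <;> simp only [map_mul, hz]
  by_cases h3 : loE q = 0
  · obtain ⟨e, he⟩ := mem_zpowers_of_lower_zero _ h3
    refine ⟨(p.1, p.2 * q.2), ?_⟩
    simp only [evG, List.map_cons, List.map_nil, List.prod_cons, List.prod_nil, mul_one]
    rw [he]
    split_ifs <;> simp only [map_mul, hz]
  · exact absurd ⟨h1, h2, h3⟩ h

/-- Retractions onto the free group separate points of the amalgam. -/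
lemma amalgam_separate (hc : iA fc = iB fc) (hgen : ∀ w : G, ∃ L, evG iA iB L = w)
    (φ : ℤ → G →* FF) (hA : ∀ N g, φ N (iA g) = g)
    (hB : ∀ N g, φ N (iB g) = fc ^ N * g * (fc ^ N)⁻¹) (w : G) (hw : w ≠ 1) :
    ∃ N, φ N w ≠ 1 := by
  classical
  obtain ⟨L, hL, hmin⟩ : ∃ L, evG iA iB L = w ∧ ∀ L', evG iA iB L' = w → L.length ≤ L'.length := by
    have hex : ∃ n, ∃ L, evG iA iB L = w ∧ L.length = n := by
      obtain ⟨L, hL⟩ := hgen w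
      exact ⟨_, L, hL, rfl⟩
    obtain ⟨L, hL, hn⟩ := Nat.find_spec hex
    exact ⟨L, hL, fun L' h' => hn ▸ Nat.find_min' hex ⟨L', h', rfl⟩⟩
  have hch : L.IsChain (fun p q => p.1 ≠ q.1 ∧ loE p ≠ 0 ∧ loE q ≠ 0) := by
    rw [List.isChain_iff_forall_rel_of_append_cons_cons]
    intro p q l₁ l₂ h
    by_contra hcon
    obtain ⟨r, hr⟩ := evG_merge iA iB hc p q hcon
    have h1 : evG iA iB (l₁ ++ ([r] ++ l₂)) = w := by
      rw [evG_append, evG_append, ← hr, ← hL, h, show l₁ ++ p :: q :: l₂ = l₁ ++ ([p, q] ++ l₂) by simp,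
        evG_append, evG_append]
    have := hmin _ h1
    rw [h] at this
    simp at this
  rcases L with _ | ⟨p, _ | ⟨q, L⟩⟩
  · exact absurd hL.symm (by simpa [evG] using hw)
  · refine ⟨0, ?_⟩
    rcases p with ⟨_ | _, p⟩
    · simp only [evG, List.map_cons, List.map_nil, List.prod_cons, List.prod_nil, mul_one] at hL
      rw [← hL]
      simp only [Bool.false_eq_true, if_false, hA]
      rintro rfl
      simp at hL; exact hw hL.symm
    · simp only [evG, List.map_cons, List.map_nil, List.prod_cons, List.prod_nil, mul_one] at hL
      rw [← hL]
      simp only [if_true, hB]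
      intro h
      have : p = 1 := by simpa using h
      rw [this] at hL
      simp at hL; exact hw hL.symm
  · have hlo : ∀ r ∈ p :: q :: L, loE r ≠ 0 := by
      have : ∀ (M : List (Bool × FF)) (p q : Bool × FF),
          (p :: q :: M).IsChain (fun p q => p.1 ≠ q.1 ∧ loE p ≠ 0 ∧ loE q ≠ 0) →
          ∀ r ∈ p :: q :: M, loE r ≠ 0 := by
        intro M
        induction M with
        | nil => intro p q h; simp at h; simp [h]
        | cons s M ih =>
          intro p q h r hr
          rw [List.isChain_cons_cons] at h
          rcases List.mem_cons.1 hr with rfl | hr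
          · exact h.1.2.1
          · exact ih q s h.2 r hr
      exact this L p q hch
    obtain ⟨K, hK, hb⟩ := exists_bound (p :: q :: L)
    have hg := growth K (12 * K) hK (by linarith) (q :: L) p
      (fun r hr => ⟨hlo r hr, hb r hr⟩) (hch.imp fun _ _ h => h.1)
    refine ⟨2 * K, fun h1 => ?_⟩
    have hev : ∀ M, rhoZ (φ (2 * K) (evG iA iB M)) = evZ (12 * K) M := by
      intro M
      rw [evG, evZ, map_list_prod, map_list_prod, List.map_map, List.map_map]
      congr 1
      apply List.map_congr_left
      rintro ⟨_ | _, r⟩ -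
      · have : unip 0 = 1 := by ext i j; fin_cases i <;> fin_cases j <;> simp [unip]
        simp [hA, shiftT, this]
      · simp only [Function.comp_apply, if_true, hB, map_mul, map_inv, rhoZ_c_zpow, shiftT]
    have h2 := hev (p :: q :: L)
    rw [hL, h1, map_one] at h2
    rw [← h2, mvec_one, shiftT, unip_inv, mvec_unip] at hg
    simp at hg

end amalgam

/-! ### `Γ₂` -/

def sgen (g : ℕ) (p : Fin g × Bool) : SurfaceGroup g := PresentedGroup.of p

/-- Universal property of the surface group. -/
lemma surface_lift {G : Type*} [Group G] (g : ℕ) (f : Fin g × Bool → G)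
    (h : (List.ofFn fun i : Fin g => ⁅f (i, false), f (i, true)⁆).prod = 1) :
    ∃ φ : SurfaceGroup g →* G, ∀ p, φ (sgen g p) = f p := by
  have h' : ∀ r ∈ ({surfaceRelator g} : Set (FreeGroup (Fin g × Bool))),
      FreeGroup.lift f r = 1 := by
    rintro r rfl
    rw [surfaceRelator, map_list_prod, List.map_ofFn, ← h]
    congr 2
    funext i
    simp [map_commutatorElement]
  exact ⟨PresentedGroup.toGroup h', fun p => PresentedGroup.toGroup.of h'⟩

lemma surface_rel (g : ℕ) :
    (List.ofFn fun i : Fin g => ⁅sgen g (i, false), sgen g (i, true)⁆).prod = 1 := by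
  have := PresentedGroup.one_of_mem (rels := {surfaceRelator g}) rfl
  rw [surfaceRelator, map_list_prod, List.map_ofFn] at this
  exact this

lemma surface_closure (g : ℕ) : Subgroup.closure (Set.range (sgen g)) = ⊤ :=
  PresentedGroup.closure_range_of _

def iA2 : FF →* SurfaceGroup 2 := FreeGroup.lift fun b => sgen 2 (0, b)
def iB2 : FF →* SurfaceGroup 2 := FreeGroup.lift fun b => sgen 2 (1, !b)

lemma iAB2 : iA2 fc = iB2 fc := by
  have h := surface_rel 2
  simp [List.ofFn_succ] at h
  have h2 : iB2 fc = ⁅sgen 2 (1, false), sgen 2 (1, true)⁆⁻¹ := by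
    rw [commutatorElement_inv]
    simp [iB2, map_commutatorElement]
  rw [h2, ← mul_eq_one_iff_eq_inv, ← h]
  simp [iA2, map_commutatorElement]

lemma evG_surj2 (w : SurfaceGroup 2) : ∃ L, evG iA2 iB2 L = w := by
  have hw : w ∈ Subgroup.closure (Set.range (sgen 2)) := by rw [surface_closure]; trivial
  have hs : ∀ p, ∃ (s : Bool) (g : FF), (if s then iB2 g else iA2 g) = sgen 2 p := by
    rintro ⟨i, b⟩
    fin_cases i
    · exact ⟨false, FreeGroup.of b, by simp [iA2]⟩
    · exact ⟨true, FreeGroup.of (!b), by simp [iB2]⟩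
  induction hw using Subgroup.closure_induction with
  | mem x hx =>
    obtain ⟨p, rfl⟩ := hx
    obtain ⟨s, g, h⟩ := hs p
    exact ⟨[(s, g)], by simpa [evG] using h⟩
  | one => exact ⟨[], rfl⟩
  | mul x y _ _ hx hy =>
    obtain ⟨L, rfl⟩ := hx
    obtain ⟨M, rfl⟩ := hy
    exact ⟨L ++ M, evG_append _ _ _ _⟩
  | inv x _ hx =>
    obtain ⟨L, rfl⟩ := hx
    refine ⟨(L.map fun p => (p.1, p.2⁻¹)).reverse, ?_⟩
    rw [evG, evG, List.prod_inv_reverse, List.map_reverse, List.map_map, List.map_map]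
    congr 2
    apply List.map_congr_left
    rintro ⟨_ | _, p⟩ - <;> simp

lemma exists_phi (N : ℤ) : ∃ φ : SurfaceGroup 2 →* FF, (∀ g, φ (iA2 g) = g) ∧
    ∀ g, φ (iB2 g) = fc ^ N * g * (fc ^ N)⁻¹ := by
  obtain ⟨φ, hφ⟩ := surface_lift 2 (G := FF) (fun p => if p.1 = 0 then FreeGroup.of p.2 else
    MulAut.conj (fc ^ N) (FreeGroup.of (!p.2))) (by
      simp only [List.ofFn_succ, List.ofFn_zero, List.prod_cons, List.prod_nil, mul_one]
      simp only [if_true, Fin.succ_zero_eq_one, one_ne_zero, if_false, Bool.not_false,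
        Bool.not_true]
      rw [← map_commutatorElement, ← commutatorElement_inv fx fy, map_inv, mul_inv_eq_one,
        MulAut.conj_apply, eq_mul_inv_iff_mul_eq]
      exact (Commute.zpow_right (rfl : fc * fc = fc * fc) N).eq)
  refine ⟨φ, fun g => ?_, fun g => ?_⟩
  · have : φ.comp iA2 = MonoidHom.id _ := by
      ext b
      simp [iA2, hφ]
    exact DFunLike.congr_fun this g
  · have : φ.comp iB2 = (MulAut.conj (fc ^ N)).toMonoidHom := by
      ext b
      simp [iB2, hφ]
    exact (DFunLike.congr_fun this g).trans (MulAut.conj_apply _ _)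

lemma residually_free_two (w : SurfaceGroup 2) (hw : w ≠ 1) : ∃ φ : SurfaceGroup 2 →* FF, φ w ≠ 1 := by
  choose φ h1 h2 using exists_phi
  obtain ⟨N, hN⟩ := amalgam_separate iA2 iB2 iAB2 evG_surj2 φ h1 h2 w hw
  exact ⟨φ N, hN⟩

/-! ### Higher genus: `Γ_{k+2}` embeds in `Γ₂` -/

lemma telescope {G : Type*} [Group G] (a b : G) (m : ℕ) :
    (List.ofFn fun i : Fin m => b ^ (m - 1 - (i : ℕ)) * ⁅b, a⁆ * (b ^ (m - 1 - (i : ℕ)))⁻¹).prod =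
      b ^ m * a * (b ^ m)⁻¹ * a⁻¹ := by
  induction m with
  | zero => simp
  | succ m ih =>
    rw [List.ofFn_succ, List.prod_cons]
    have : ∀ i : Fin m, m + 1 - 1 - ((i.succ : Fin (m + 1)) : ℕ) = m - 1 - i := by
      intro i; simp; omega
    simp only [this, ih]
    simp only [Fin.val_zero, Nat.sub_zero, Nat.add_sub_cancel, commutatorElement_def]
    rw [pow_succ]
    group

def diagPerm (ι G : Type*) [Group G] : (ι → G) →* Equiv.Perm (ι × G) where
  toFun d := Equiv.prodShear (Equiv.refl ι) (fun i => Equiv.mulLeft (d i))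
  map_one' := by ext ⟨i, h⟩ <;> simp
  map_mul' d e := by ext ⟨i, h⟩ <;> simp [mul_assoc]

lemma diagPerm_apply {ι G : Type*} [Group G] (d : ι → G) (i : ι) (h : G) :
    diagPerm ι G d (i, h) = (i, d i * h) := rfl

section cover
variable (k : ℕ)

def cvA (b : Bool) (i : Fin (k + 1)) : SurfaceGroup (k + 2) := sgen (k + 2) (i.castSucc, b)
def cvK (i : Fin (k + 1)) : SurfaceGroup (k + 2) := ⁅cvA k false i, cvA k true i⁆
def cvAl : SurfaceGroup (k + 2) := sgen (k + 2) (Fin.last _, false)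
def cvBe : SurfaceGroup (k + 2) := sgen (k + 2) (Fin.last _, true)

def cvAlpha (i : Fin (k + 1)) : SurfaceGroup (k + 2) := ((List.ofFn (cvK k)).drop (i + 1)).prod * cvAl k

def cvShift : Equiv.Perm (Fin (k + 1) × SurfaceGroup (k + 2)) :=
  Equiv.prodShear (Equiv.addRight 1)
    (fun i => Equiv.mulLeft (if i = Fin.last k then cvBe k else 1))

lemma cvShift_apply (i h) :
    cvShift k (i, h) = (i + 1, (if i = Fin.last k then cvBe k else 1) * h) := rfl

lemma cv_rel : (List.ofFn (cvK k)).prod * ⁅cvAl k, cvBe k⁆ = 1 := by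
  have := surface_rel (k + 2)
  rw [List.ofFn_succ', List.prod_concat] at this
  exact this

lemma cv_relation : ⁅diagPerm _ _ (cvA k false), diagPerm _ _ (cvA k true)⁆ *
    (diagPerm _ _ (cvAlpha k) * cvShift k) = cvShift k * diagPerm _ _ (cvAlpha k) := by
  rw [← map_commutatorElement]
  apply Equiv.ext
  rintro ⟨i, h⟩
  simp only [Equiv.Perm.mul_apply, cvShift_apply, diagPerm_apply]
  refine Prod.ext rfl ?_
  have hK : ∀ j, (⁅cvA k false, cvA k true⁆ : Fin (k + 1) → SurfaceGroup (k + 2)) j = cvK k j := fun j => rfl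
  simp only [hK, ← mul_assoc]
  congr 1
  have hrec : ∀ (j : ℕ) (hj : j < k + 1), cvK k ⟨j, hj⟩ * ((List.ofFn (cvK k)).drop (j + 1)).prod
      = ((List.ofFn (cvK k)).drop j).prod := by
    intro j hj
    rw [List.drop_eq_getElem_cons (i := j) (by simpa using hj), List.prod_cons, List.getElem_ofFn]
  by_cases hi : i = Fin.last k
  · subst hi
    have h0 : Fin.last k + 1 = 0 := by simp
    rw [h0, if_pos rfl]
    have e0 : cvK k 0 * cvAlpha k 0 = (List.ofFn (cvK k)).prod * cvAl k := by
      rw [cvAlpha, ← mul_assoc]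
      have := hrec 0 (by omega)
      simp only [List.drop_zero] at this
      rw [← this]; rfl
    have e1 : cvAlpha k (Fin.last k) = cvAl k := by
      rw [cvAlpha, List.drop_of_length_le (by simp)]; simp
    rw [e0, e1]
    have := cv_rel k
    rw [commutatorElement_def] at this
    rw [mul_eq_one_iff_eq_inv] at this
    rw [this]; group
  · rw [if_neg hi, mul_one, one_mul]
    have hlt : (i : ℕ) < k := by
      have := i.2
      have : (i : ℕ) ≠ k := fun h => hi (Fin.ext h)
      omega
    have hv : ((i + 1 : Fin (k + 1)) : ℕ) = i + 1 := Fin.val_add_one_of_lt (by simpa [Fin.lt_def] using hlt)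
    have hv' : i + 1 = ⟨(i : ℕ) + 1, by omega⟩ := Fin.ext hv
    rw [cvAlpha, cvAlpha, ← mul_assoc, hv, hv']
    rw [hrec ((i : ℕ) + 1) (by omega)]

lemma cvShift_pow (j : ℕ) : ∀ (i : ℕ) (hij : i + j ≤ k) (h : SurfaceGroup (k + 2)),
    (cvShift k ^ j) (⟨i, by omega⟩, h) = (⟨i + j, by omega⟩, h) := by
  induction j with
  | zero => intro i hij h; simp
  | succ j ih =>
    intro i hij h
    rw [pow_succ, Equiv.Perm.mul_apply, cvShift_apply]
    have hne : (⟨i, by omega⟩ : Fin (k + 1)) ≠ Fin.last k := by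
      intro h; have := congrArg Fin.val h; simp at this; omega
    rw [if_neg hne, one_mul]
    have hv : (⟨i, by omega⟩ : Fin (k + 1)) + 1 = ⟨i + 1, by omega⟩ := by
      apply Fin.ext
      rw [Fin.val_add_one_of_lt]
      simp [Fin.lt_def]; omega
    rw [hv, ih (i + 1) (by omega)]
    congr 2; omega

lemma cover_injective : ∃ f : SurfaceGroup (k + 2) →* SurfaceGroup 2, Function.Injective f := by
  obtain ⟨Θ, hΘ⟩ := surface_lift 2 (G := Equiv.Perm (Fin (k + 1) × SurfaceGroup (k + 2)))
    (fun p => if p.1 = 0 then (if p.2 then cvShift k else diagPerm _ _ (cvAlpha k)) else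
      diagPerm _ _ (cvA k p.2)) (by
      simp only [List.ofFn_succ, List.ofFn_zero, List.prod_cons, List.prod_nil, mul_one]
      simp only [if_true, Fin.succ_zero_eq_one, one_ne_zero, if_false, Bool.false_eq_true]
      have := cv_relation k
      rw [← eq_mul_inv_iff_mul_eq] at this
      rw [this, commutatorElement_def]
      group)
  set a1 := sgen 2 (0, false)
  set b1 := sgen 2 (0, true)
  have hκ : ⁅sgen 2 (1, false), sgen 2 (1, true)⁆ = ⁅b1, a1⁆ := by
    have h := surface_rel 2
    simp [List.ofFn_succ] at h
    rw [← commutatorElement_inv a1 b1]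
    exact eq_inv_of_mul_eq_one_right h
  obtain ⟨f, hf⟩ := surface_lift (k + 2) (G := SurfaceGroup 2)
    (fun p => Fin.lastCases (motive := fun _ => SurfaceGroup 2) (if p.2 then b1 ^ (k + 1) else a1)
      (fun i : Fin (k + 1) => MulAut.conj (b1 ^ (k - (i : ℕ))) (sgen 2 (1, p.2))) p.1) (by
      rw [List.ofFn_succ', List.prod_concat]
      simp only [Fin.lastCases_castSucc, Fin.lastCases_last, ← map_commutatorElement, hκ]
      have := telescope a1 b1 (k + 1)
      simp only [Nat.add_sub_cancel] at this
      simp only [MulAut.conj_apply, this, if_true, Bool.false_eq_true, if_false]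
      rw [commutatorElement_def]
      group)
  refine ⟨f, ?_⟩
  have hb1 : Θ b1 = cvShift k := by rw [hΘ]; rfl
  have key : ∀ w, ∀ h, Θ (f w) (Fin.last k, h) = (Fin.last k, w * h) := by
    intro w
    have hw : w ∈ Subgroup.closure (Set.range (sgen (k + 2))) := by rw [surface_closure]; trivial
    induction hw using Subgroup.closure_induction with
    | mem x hx =>
      obtain ⟨⟨i, b⟩, rfl⟩ := hx
      intro h
      rw [hf]
      induction i using Fin.lastCases with
      | last =>
        simp only [Fin.lastCases_last]
        cases b
        · simp only [Bool.false_eq_true, if_false]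
          rw [hΘ]
          simp only [if_true, Bool.false_eq_true, if_false, diagPerm_apply]
          rw [cvAlpha, List.drop_of_length_le (by simp)]
          simp [cvAl]
        · simp only [if_true]
          rw [map_pow, hb1, pow_succ, Equiv.Perm.mul_apply, cvShift_apply, if_pos rfl]
          have h0 : Fin.last k + 1 = 0 := by simp
          rw [h0]
          have := cvShift_pow k k 0 (by omega) (cvBe k * h)
          simp only [Nat.zero_add] at this
          exact this
      | cast i =>
        simp only [Fin.lastCases_castSucc]
        have hi := i.2
        have hs := cvShift_pow k (k - i) i (by omega)
        have he : (⟨(i : ℕ) + (k - i), by omega⟩ : Fin (k + 1)) = Fin.last k := by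
          apply Fin.ext; simp; omega
        rw [he] at hs
        rw [MulAut.conj_apply, map_mul, map_mul, map_inv, map_pow, hb1, Equiv.Perm.mul_apply,
          Equiv.Perm.mul_apply, Equiv.Perm.inv_eq_iff_eq.2 (hs h).symm, hΘ]
        simp only [one_ne_zero, if_false, diagPerm_apply]
        exact hs _
    | one => intro h; simp
    | mul x y _ _ hx hy => intro h; rw [map_mul, map_mul, Equiv.Perm.mul_apply, hy, hx, mul_assoc]
    | inv x _ hx =>
      intro h
      rw [map_inv, map_inv, Equiv.Perm.inv_eq_iff_eq, hx]
      simp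
  rw [injective_iff_map_eq_one]
  intro w hw
  have := key w 1
  rw [hw, map_one] at this
  simpa using (congrArg Prod.snd this).symm

end cover

theorem residually_free (g : ℕ) (hg : 2 ≤ g) (w : SurfaceGroup g) (hw : w ≠ 1) :
    ∃ φ : SurfaceGroup g →* FF, φ w ≠ 1 := by
  obtain ⟨k, rfl⟩ := Nat.exists_eq_add_of_le' hg
  obtain ⟨f, hf⟩ := cover_injective k
  obtain ⟨φ, hφ⟩ := residually_free_two (f w) (by rwa [Ne, map_eq_one_iff f hf])
  exact ⟨φ.comp f, hφ⟩

/-! ## Part B: a generic cyclic division algebra -/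

section cyclic
variable (k : ℕ)

abbrev RB := MvPolynomial (Fin 4 × Fin (k + 1) × Fin (k + 1)) ℝ
abbrev SB := Polynomial (RB k)
abbrev MB := Matrix (Fin (k + 1)) (Fin (k + 1)) (SB k)

noncomputable def sig0 : RB k →+* RB k :=
  (MvPolynomial.rename (fun p : Fin 4 × Fin (k + 1) × Fin (k + 1) =>
    (p.1, p.2.1 + 1, p.2.2 + 1))).toRingHom

noncomputable def sig : SB k →+* SB k := Polynomial.mapRingHom (sig0 k)

lemma sig0_injective : Function.Injective (sig0 k) := by
  apply MvPolynomial.rename_injective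
  rintro ⟨a, b, c⟩ ⟨a', b', c'⟩ h
  simpa using h

lemma sig_injective : Function.Injective (sig k) := Polynomial.map_injective _ (sig0_injective k)

lemma sig_coeff (p : SB k) (i : ℕ) : (sig k p).coeff i = sig0 k (p.coeff i) := by
  simp [sig]

/-- wrap-around factor -/
noncomputable def cB (i : Fin (k + 1)) : SB k := if i = Fin.last k then Polynomial.X else 1

lemma cB_ne (i) : cB k i ≠ 0 := by
  unfold cB; split_ifs
  · exact Polynomial.X_ne_zero
  · exact one_ne_zero

lemma sig_cB (i) : sig k (cB k i) = cB k i := by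
  unfold cB; split_ifs <;> simp [sig]

noncomputable def tauB : MB k := fun i j => if j = i + 1 then cB k i else 0

lemma tauB_mul (M : MB k) (i j) : (tauB k * M) i j = cB k i * M (i + 1) j := by
  simp [Matrix.mul_apply, tauB]

lemma mul_tauB (M : MB k) (i j) : (M * tauB k) i (j + 1) = M i j * cB k j := by
  simp [Matrix.mul_apply, tauB]

lemma sig_tauB : (sig k).mapMatrix (tauB k) = tauB k := by
  ext1 i j
  simp only [RingHom.mapMatrix_apply, Matrix.map_apply, tauB]
  split_ifs
  · exact sig_cB k i
  · simp

lemma mul_tauB_cancel {M N : MB k} (h : M * tauB k = N * tauB k) : M = N := by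
  ext1 i j
  have := congrFun (congrFun h i) (j + 1)
  rw [mul_tauB, mul_tauB] at this
  exact mul_right_cancel₀ (cB_ne k j) this

lemma tauB_mul_cancel {M N : MB k} (h : tauB k * M = tauB k * N) : M = N := by
  ext1 i j
  have := congrFun (congrFun h (i - 1)) j
  rw [tauB_mul, tauB_mul, sub_add_cancel] at this
  exact mul_left_cancel₀ (cB_ne k _) this

lemma det_tauB : (tauB k).det ≠ 0 := by
  intro h
  obtain ⟨v, hv, hv'⟩ := Matrix.exists_mulVec_eq_zero_iff.2 h
  apply hv
  funext i
  have := congrFun hv' (i - 1)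
  simpa [Matrix.mulVec, dotProduct, tauB, cB_ne] using this

/-- The order `D0` in the cyclic algebra. -/
noncomputable def D0 : Subring (MB k) where
  carrier := {M | (sig k).mapMatrix M * tauB k = tauB k * M}
  mul_mem' {M N} hM hN := by
    simp only [Set.mem_ofPred_eq] at *
    rw [map_mul, mul_assoc, hN, ← mul_assoc, hM, mul_assoc]
  one_mem' := by simp
  add_mem' {M N} hM hN := by
    simp only [Set.mem_ofPred_eq] at *
    rw [map_add, add_mul, hM, hN, mul_add]
  zero_mem' := by simp
  neg_mem' {M} hM := by
    simp only [Set.mem_ofPred_eq] at *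
    rw [map_neg, Matrix.neg_mul, hM, Matrix.mul_neg]

lemma mem_D0 {M : MB k} : M ∈ D0 k ↔ (sig k).mapMatrix M * tauB k = tauB k * M := Iff.rfl

lemma mem_D0' {M : MB k} : M ∈ D0 k ↔
    ∀ i j, sig k (M i j) * cB k j = cB k i * M (i + 1) (j + 1) := by
  rw [mem_D0]
  constructor
  · intro h i j
    have := congrFun (congrFun h i) (j + 1)
    rwa [mul_tauB, tauB_mul] at this
  · intro h
    ext1 i j
    obtain ⟨j, rfl⟩ : ∃ j', j = j' + 1 := ⟨j - 1, by simp⟩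
    rw [mul_tauB, tauB_mul]
    exact h i j

lemma adj_mem_D0 {M : MB k} (hM : M ∈ D0 k) : M.adjugate ∈ D0 k := by
  rw [mem_D0] at *
  have h := congrArg Matrix.adjugate hM
  rw [Matrix.adjugate_mul_distrib, Matrix.adjugate_mul_distrib, ← RingHom.map_adjugate] at h
  have h2 := congrArg (fun X => tauB k * X * tauB k) h
  simp only [← mul_assoc] at h2
  rw [Matrix.mul_adjugate, mul_assoc (_ * _) _ (tauB k), Matrix.adjugate_mul] at h2
  simp only [Matrix.smul_mul, one_mul, Matrix.mul_smul, mul_one] at h2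
  exact smul_right_injective _ (det_tauB k) h2

lemma det_mem_D0 {M : MB k} (hM : M ∈ D0 k) : M.det • (1 : MB k) ∈ D0 k := by
  rw [← Matrix.mul_adjugate]
  exact mul_mem hM (adj_mem_D0 k hM)

lemma D0_lower {M : MB k} (hM : M ∈ D0 k) (d : ℕ) : ∀ i j : Fin (k + 1), j < i → (i : ℕ) + d = k →
    (M i j).coeff 0 = 0 := by
  rw [mem_D0'] at hM
  induction d with
  | zero =>
    intro i j hij hd
    have hi : i = Fin.last k := Fin.ext (by simpa using hd)
    have hj : j ≠ Fin.last k := by rintro rfl; exact absurd hij (Fin.le_last i).not_gt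
    have := congrArg (fun p => Polynomial.coeff p 0) (hM i j)
    simp only [cB, if_pos hi, if_neg hj, mul_one, Polynomial.coeff_X_mul_zero, sig_coeff] at this
    exact sig0_injective k (by rw [this, map_zero])
  | succ d ih =>
    intro i j hij hd
    have hi : i ≠ Fin.last k := by rintro rfl; simp at hd
    have hj : j ≠ Fin.last k := by rintro rfl; exact absurd hij (Fin.le_last i).not_gt
    have h := hM i j
    simp only [cB, if_neg hi, if_neg hj, mul_one, one_mul] at h
    have vi : ((i + 1 : Fin (k + 1)) : ℕ) = i + 1 := Fin.val_add_one_of_lt (Fin.lt_last_iff_ne_last.2 hi)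
    have vj : ((j + 1 : Fin (k + 1)) : ℕ) = j + 1 := Fin.val_add_one_of_lt (Fin.lt_last_iff_ne_last.2 hj)
    have := ih (i + 1) (j + 1) (by rw [Fin.lt_def, vi, vj]; have := Fin.lt_def.1 hij; omega) (by omega)
    rw [← h, sig_coeff] at this
    exact sig0_injective k (by rw [this, map_zero])

lemma D0_diag {M : MB k} (hM : M ∈ D0 k) (i : Fin (k + 1)) : sig k (M i i) = M (i + 1) (i + 1) := by
  rw [mem_D0'] at hM
  have := hM i i
  rw [mul_comm] at this
  exact mul_left_cancel₀ (cB_ne k i) this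

/-- induction around the cycle -/
lemma cyc_induct {P : Fin (k + 1) → Prop} (h0 : P 0) (hs : ∀ i, P i → P (i + 1)) : ∀ i, P i := by
  intro i
  induction i using Fin.induction with
  | zero => exact h0
  | succ i ih => rw [← Fin.coeSucc_eq_succ]; exact hs _ ih

lemma D0_det_ne_zero (d : ℕ) : ∀ M : MB k, M ∈ D0 k → M ≠ 0 →
    (∑ i, ∑ j, (M i j).natDegree) = d → M.det ≠ 0 := by
  induction d using Nat.strong_induction_on with
  | _ d ih =>
  intro M hM hM0 hd
  have hlow : ∀ i j : Fin (k + 1), j < i → (M i j).coeff 0 = 0 := fun i j hij =>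
    D0_lower k hM (k - i) i j hij (by have := i.2; omega)
  by_cases h00 : (M 0 0).coeff 0 = 0
  · -- divide by tau
    have hcol : ∀ i, (M i 0).coeff 0 = 0 := by
      intro i
      rcases Fin.eq_zero_or_eq_succ i with rfl | ⟨j, rfl⟩
      · exact h00
      · exact hlow _ _ (Fin.succ_pos j)
    let M' : MB k := fun i j => if j = Fin.last k then (M i 0).divX else M i (j + 1)
    have hMM : M' * tauB k = M := by
      ext1 i j
      obtain ⟨j, rfl⟩ : ∃ j', j = j' + 1 := ⟨j - 1, by simp⟩
      rw [mul_tauB]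
      by_cases hj : j = Fin.last k
      · subst hj
        have h1 := Polynomial.divX_mul_X_add (M i 0)
        rw [hcol i] at h1
        simpa [M', cB] using h1
      · simp [M', cB, hj]
    have hM' : M' ∈ D0 k := by
      rw [mem_D0] at hM ⊢
      apply mul_tauB_cancel
      rw [mul_assoc, mul_assoc]
      conv_rhs => rw [hMM]
      rw [← hM, ← hMM, map_mul, sig_tauB, mul_assoc]
    have hne : M' ≠ 0 := by rintro h; rw [h, zero_mul] at hMM; exact hM0 hMM.symm
    have hcol0 : ∃ i, M i 0 ≠ 0 := by
      by_contra! hc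
      apply hM0
      have key : ∀ j, ∀ i, M i j = 0 := by
        apply cyc_induct
        · exact hc
        · intro j hj i
          have := (mem_D0' k).1 hM (i - 1) j
          rw [hj, map_zero, zero_mul, sub_add_cancel] at this
          exact (mul_eq_zero.1 this.symm).resolve_left (cB_ne k _)
      ext1 i j
      exact key j i
    have hrow : ∀ i, ∑ j, (M i j).natDegree = ∑ j : Fin (k + 1), (M i (j + 1)).natDegree := by
      intro i
      exact (Equiv.sum_comp (Equiv.addRight 1) (fun j => (M i j).natDegree)).symm
    have hle : ∀ i j, (M' i j).natDegree ≤ (M i (j + 1)).natDegree := by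
      intro i j
      by_cases hj : j = Fin.last k
      · subst hj
        simp [M', Polynomial.natDegree_divX_eq_natDegree_tsub_one]
      · simp [M', hj]
    have hlt : ∑ i, ∑ j, (M' i j).natDegree < d := by
      rw [← hd]
      obtain ⟨i, hi⟩ := hcol0
      simp only [hrow]
      refine Finset.sum_lt_sum (fun i _ => Finset.sum_le_sum fun j _ => hle i j)
        ⟨i, Finset.mem_univ _, Finset.sum_lt_sum (fun j _ => hle i j)
          ⟨Fin.last k, Finset.mem_univ _, ?_⟩⟩
      have hpos : (M i 0).natDegree ≠ 0 := by
        intro h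
        have h1 := Polynomial.eq_C_of_natDegree_eq_zero h
        rw [hcol i, Polynomial.C_0] at h1
        exact hi h1
      simp [M', Polynomial.natDegree_divX_eq_natDegree_tsub_one]
      omega
    have := ih _ hlt M' hM' hne rfl
    rw [← hMM, Matrix.det_mul]
    exact mul_ne_zero this (det_tauB k)
  · intro hdet
    have hdiag : ∀ i, (M i i).coeff 0 ≠ 0 := by
      apply cyc_induct
      · exact h00
      · intro i hi h
        rw [← D0_diag k hM, sig_coeff] at h
        exact hi (sig0_injective k (by rw [h, map_zero]))
    have h1 := congrArg (Polynomial.constantCoeff) hdet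
    rw [RingHom.map_det, map_zero, Matrix.det_of_isUpperTriangular] at h1
    · rw [Finset.prod_eq_zero_iff] at h1
      obtain ⟨i, -, hi⟩ := h1
      exact hdiag i (by simpa using hi)
    · intro i j hij
      exact hlow i j hij

/-- generic matrices -/
noncomputable def XB (m : Fin 4) : MB k := fun i j =>
  Polynomial.C (MvPolynomial.X (m, i, j)) * Polynomial.X ^ (if j < i then 1 else 0)

lemma XB_mem (m) : XB k m ∈ D0 k := by
  rw [mem_D0']
  intro i j
  have e1 : sig k (XB k m i j) = Polynomial.C (MvPolynomial.X (m, i + 1, j + 1)) *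
      Polynomial.X ^ (if j < i then 1 else 0) := by
    unfold XB; split_ifs <;> simp [sig, sig0]
  rw [e1, XB, mul_left_comm, mul_assoc]
  congr 1
  have v : ∀ i : Fin (k + 1), i ≠ Fin.last k → ((i + 1 : Fin (k + 1)) : ℕ) = i + 1 :=
    fun i hi => Fin.val_add_one_of_lt (Fin.lt_last_iff_ne_last.2 hi)
  have l0 : Fin.last k + 1 = 0 := by simp
  unfold cB
  by_cases hi : i = Fin.last k <;> by_cases hj : j = Fin.last k
  · subst hi; subst hj; simp
  · subst hi
    have h1 : j < Fin.last k := Fin.lt_last_iff_ne_last.2 hj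
    simp [hj, h1]
  · subst hj
    have h2 : ¬ Fin.last k < i := (Fin.le_last i).not_gt
    have h3 : (0 : Fin (k + 1)) < i + 1 := by rw [Fin.lt_def, v i hi]; simp
    rw [l0, if_pos rfl, if_neg h2, if_neg hi, if_pos h3]; simp
  · have : (j + 1 < i + 1) ↔ j < i := by rw [Fin.lt_def, Fin.lt_def, v i hi, v j hj]; omega
    simp only [hi, hj, if_false, this]; ring

lemma XB_ne (m) : XB k m ≠ 0 := by
  intro h
  have := congrFun (congrFun h 0) 0
  simp [XB] at this

end cyclic

/-! ### Direct sums of matrices -/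

def blkM {ι κ ν R : Type} [CommRing R] [Fintype ι] [Fintype κ] [Fintype ν] [DecidableEq ι]
    [DecidableEq κ] [DecidableEq ν] (e : ι ⊕ κ ≃ ν) :
    Matrix ι ι R × Matrix κ κ R →* Matrix ν ν R where
  toFun p := Matrix.reindex e e (Matrix.fromBlocks p.1 0 0 p.2)
  map_one' := by
    rw [Prod.fst_one, Prod.snd_one, Matrix.fromBlocks_one]
    simp
  map_mul' p q := by
    simp only [Prod.fst_mul, Prod.snd_mul, Matrix.reindex_apply]
    rw [Matrix.submatrix_mul_equiv, Matrix.fromBlocks_multiply]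
    simp

section blk
variable {ι κ ν R : Type} [CommRing R] [Fintype ι] [Fintype κ] [Fintype ν] [DecidableEq ι]
    [DecidableEq κ] [DecidableEq ν] (e : ι ⊕ κ ≃ ν)

lemma blkM_det (p : Matrix ι ι R × Matrix κ κ R) : (blkM e p).det = p.1.det * p.2.det := by
  simp [blkM]

lemma blkM_charpoly (p : Matrix ι ι R × Matrix κ κ R) :
    (blkM e p).charpoly = p.1.charpoly * p.2.charpoly := by
  simp only [blkM, MonoidHom.coe_mk, OneHom.coe_mk, Matrix.charpoly_reindex,
    Matrix.charpoly_fromBlocks_zero₁₂]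

lemma blkM_injective : Function.Injective (blkM (R := R) e) := by
  rintro ⟨a, b⟩ ⟨c, d⟩ h
  simp only [blkM, MonoidHom.coe_mk, OneHom.coe_mk] at h
  have := (Matrix.reindex e e).injective h
  rw [Matrix.fromBlocks_inj] at this
  simp [this]

def blkSL : Matrix.SpecialLinearGroup ι R × Matrix.SpecialLinearGroup κ R →*
    Matrix.SpecialLinearGroup ν R where
  toFun p := ⟨blkM e (p.1.1, p.2.1), by rw [blkM_det]; simp⟩
  map_one' := Subtype.ext (by
    simp only [Prod.fst_one, Prod.snd_one]
    exact map_one (blkM e))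
  map_mul' p q := Subtype.ext (by
    simp only [Prod.fst_mul, Prod.snd_mul, Matrix.SpecialLinearGroup.coe_mul]
    exact map_mul (blkM e) (p.1.1, p.2.1) (q.1.1, q.2.1))

end blk

section words
variable (k : ℕ)

abbrev GLB := (Matrix (Fin (k + 1)) (Fin (k + 1)) ℝ)ˣ

def repP (P : Fin 4 → GLB k) : FF →* GLB k :=
  FreeGroup.lift fun b => if b then ⁅P 2, P 3⁆ else ⁅P 0, P 1⁆

lemma adj_unit {n : ℕ} (P : (Matrix (Fin n) (Fin n) ℝ)ˣ) :
    P.1.adjugate = P.1.det • (P⁻¹).1 := by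
  have h : P.1 * P.1.adjugate = P.1.det • 1 := Matrix.mul_adjugate _
  calc P.1.adjugate = (P⁻¹).1 * (P.1 * P.1.adjugate) := by rw [← mul_assoc]; simp
    _ = _ := by rw [h]; simp

lemma smul_one_mul_smul_one' (a b : SB k) :
    (a • (1 : MB k)) * (b • (1 : MB k)) = (a * b) • (1 : MB k) := by
  rw [smul_mul_smul_comm, one_mul]

lemma map_smul_one' (e : SB k →+* ℝ) (δ : SB k) :
    e.mapMatrix (δ • (1 : MB k)) = e δ • (1 : Matrix (Fin (k + 1)) (Fin (k + 1)) ℝ) := by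
  ext1 i j
  simp only [RingHom.mapMatrix_apply, Matrix.map_apply, Matrix.smul_apply, Matrix.one_apply,
    smul_eq_mul, map_mul]
  split_ifs <;> simp

lemma word_letter (m m' : Fin 4) : ∃ W ∈ D0 k, ∃ δ : SB k, δ • (1 : MB k) ∈ D0 k ∧
    ∀ (e : SB k →+* ℝ) (P : Fin 4 → GLB k), (∀ m, (P m).1 = e.mapMatrix (XB k m)) →
      e δ ≠ 0 ∧ e.mapMatrix W = e δ • (⁅P m, P m'⁆ : GLB k).1 := by
  refine ⟨XB k m * XB k m' * (XB k m).adjugate * (XB k m').adjugate,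
    mul_mem (mul_mem (mul_mem (XB_mem k m) (XB_mem k m')) (adj_mem_D0 k (XB_mem k m)))
      (adj_mem_D0 k (XB_mem k m')), (XB k m).det * (XB k m').det, ?_, ?_⟩
  · have := mul_mem (det_mem_D0 k (XB_mem k m)) (det_mem_D0 k (XB_mem k m'))
    rwa [smul_one_mul_smul_one'] at this
  · intro e P hP
    have hd : ∀ m, e (XB k m).det = (P m).1.det := fun m => by rw [hP, RingHom.map_det]
    have hu : ∀ m, (P m).1.det ≠ 0 := fun m =>
      ((Matrix.isUnit_iff_isUnit_det _).1 (P m).isUnit).ne_zero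
    rw [map_mul, hd, hd]
    refine ⟨mul_ne_zero (hu _) (hu _), ?_⟩
    rw [map_mul, map_mul, map_mul, RingHom.map_adjugate, RingHom.map_adjugate, ← hP, ← hP,
      adj_unit, adj_unit, commutatorElement_def]
    simp only [Units.val_mul, Matrix.mul_smul, Matrix.smul_mul, smul_smul]
    rw [mul_comm]

lemma word_eval (z : FF) : ∃ W ∈ D0 k, ∃ δ : SB k, δ • (1 : MB k) ∈ D0 k ∧
    ∀ (e : SB k →+* ℝ) (P : Fin 4 → GLB k), (∀ m, (P m).1 = e.mapMatrix (XB k m)) →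
      e δ ≠ 0 ∧ e.mapMatrix W = e δ • (repP k P z).1 := by
  induction z using FreeGroup.induction_on with
  | C1 => exact ⟨1, one_mem _, 1, by simp, fun e P hP => by simp⟩
  | of b =>
    cases b
    · simpa [repP] using word_letter k 0 1
    · simpa [repP] using word_letter k 2 3
  | inv_of b _ =>
    cases b
    · simpa [repP, commutatorElement_inv] using word_letter k 1 0
    · simpa [repP, commutatorElement_inv] using word_letter k 3 2
  | mul x y hx hy =>
    obtain ⟨W, hW, δ, hδ, h⟩ := hx
    obtain ⟨W', hW', δ', hδ', h'⟩ := hy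
    refine ⟨W * W', mul_mem hW hW', δ * δ', ?_, fun e P hP => ?_⟩
    · rw [← smul_one_mul_smul_one']; exact mul_mem hδ hδ'
    · obtain ⟨h1, h2⟩ := h e P hP
      obtain ⟨h1', h2'⟩ := h' e P hP
      rw [map_mul]
      refine ⟨mul_ne_zero h1 h1', ?_⟩
      rw [map_mul, h2, h2', map_mul, Units.val_mul]
      simp only [Matrix.mul_smul, Matrix.smul_mul, smul_smul]
      rw [mul_comm]

/-- evaluation at `x = P`, `t = s` -/
noncomputable def evB (x : Fin 4 × Fin (k + 1) × Fin (k + 1) → ℝ) (s : ℝ) : SB k →+* ℝ :=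
  (Polynomial.evalRingHom s).comp (Polynomial.mapRingHom (MvPolynomial.eval x))

lemma exists_evB (p : SB k) (hp : p ≠ 0) : ∃ e : SB k →+* ℝ, e p ≠ 0 := by
  obtain ⟨i, hi⟩ : ∃ i, p.coeff i ≠ 0 := by
    by_contra! h
    exact hp (Polynomial.ext (by simpa using h))
  obtain ⟨x, hx⟩ : ∃ x, MvPolynomial.eval x (p.coeff i) ≠ 0 := by
    by_contra! h
    exact hi (MvPolynomial.funext (by simpa using h))
  have hq : p.map (MvPolynomial.eval x) ≠ 0 := by
    intro h
    have := congrArg (fun q => Polynomial.coeff q i) h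
    simp at this
    exact hx this
  obtain ⟨s, hs⟩ : ∃ s, (p.map (MvPolynomial.eval x)).eval s ≠ 0 := by
    by_contra! h
    exact hq (Polynomial.funext (by simpa using h))
  exact ⟨evB k x s, by simpa [evB] using hs⟩

lemma evB_one_XB (P : Fin 4 → Matrix (Fin (k + 1)) (Fin (k + 1)) ℝ) (m) :
    (evB k (fun p => P p.1 p.2.1 p.2.2) 1).mapMatrix (XB k m) = P m := by
  ext1 i j
  simp only [RingHom.mapMatrix_apply, Matrix.map_apply, XB, evB]
  split_ifs <;> simp

end words

lemma exists_faithful (k : ℕ) : ∃ P : Fin 4 → GLB (k + 1), Function.Injective (repP (k + 1) P) := by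
  have hcard : Fintype.card (Fin 2 ⊕ Fin k) = Fintype.card (Fin (k + 1 + 1)) := by
    simp; omega
  let e := Fintype.equivOfCardEq hcard
  let T : GL (Fin 2) ℝ →* GLB (k + 1) :=
    (Units.map (blkM (R := ℝ) e)).comp
      ((MulEquiv.prodUnits.symm.toMonoidHom).comp
        (MonoidHom.inl (GL (Fin 2) ℝ) (GL (Fin k) ℝ)))
  have hT : Function.Injective T := by
    intro a b h
    have := Units.map_injective (f := blkM (R := ℝ) e) (blkM_injective e) h
    have := (MulEquiv.prodUnits).symm.injective this
    exact congrArg Prod.fst this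
  let ρ : FF →* GL (Fin 2) ℝ := (Matrix.SpecialLinearGroup.toGL).comp
    ((Matrix.SpecialLinearGroup.map (Int.castRingHom ℝ)).comp rhoZ)
  have hρ : Function.Injective ρ := by
    refine (Matrix.SpecialLinearGroup.toGL_injective).comp (Function.Injective.comp (g := Matrix.SpecialLinearGroup.map (Int.castRingHom ℝ)) ?_ rhoZ_injective)
    intro a b h
    ext i j
    have := congrArg (fun M : SL 2 ℝ => M.1 i j) h
    simpa using this
  let p1 : GL (Fin 2) ℝ := ⟨!![3, -1; 1, 0], !![0, 1; -1, 3], by simp [Matrix.one_fin_two], by simp [Matrix.one_fin_two]⟩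
  let q1 : GL (Fin 2) ℝ := ⟨!![-1, 1; 0, 1], !![-1, 1; 0, 1], by ext i j; fin_cases i <;> fin_cases j <;> norm_num, by ext i j; fin_cases i <;> fin_cases j <;> norm_num⟩
  let p2 : GL (Fin 2) ℝ := ⟨!![2, -1; -1, 1], !![1, 1; 1, 2], by ext i j; fin_cases i <;> fin_cases j <;> norm_num, by ext i j; fin_cases i <;> fin_cases j <;> norm_num⟩
  let q2 : GL (Fin 2) ℝ := ⟨!![0, 1; 1, 0], !![0, 1; 1, 0], by simp [Matrix.one_fin_two], by simp [Matrix.one_fin_two]⟩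
  have h1 : ⁅p1, q1⁆ = ρ fx := by
    apply Units.ext
    have : (ρ fx).1 = (rhoZ fx).1.map (Int.cast) := rfl
    rw [this, rhoZ_x, commutatorElement_def]
    show !![3, -1; 1, 0] * !![-1, 1; 0, 1] * !![0, 1; -1, 3] * !![-1, 1; 0, 1] = _
    ext i j
    fin_cases i <;> fin_cases j <;> norm_num [mx]
  have h2 : ⁅p2, q2⁆ = ρ fy := by
    apply Units.ext
    have : (ρ fy).1 = (rhoZ fy).1.map (Int.cast) := rfl
    rw [this, rhoZ_y, commutatorElement_def]
    show !![2, -1; -1, 1] * !![0, 1; 1, 0] * !![1, 1; 1, 2] * !![0, 1; 1, 0] = _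
    ext i j
    fin_cases i <;> fin_cases j <;> norm_num [my]
  refine ⟨![T p1, T q1, T p2, T q2], ?_⟩
  have : repP (k + 1) ![T p1, T q1, T p2, T q2] = T.comp ρ := by
    apply FreeGroup.ext_hom
    intro b
    cases b
    · simp only [repP, FreeGroup.lift_apply_of, Bool.false_eq_true, if_false, MonoidHom.comp_apply]
      rw [← h1, map_commutatorElement]; rfl
    · simp only [repP, FreeGroup.lift_apply_of, if_true, MonoidHom.comp_apply]
      rw [← h2, map_commutatorElement]; rfl
  rw [this]
  exact hT.comp hρ

/-- Borel-type statement: some representation moves `z` off the eigenvalue-one locus. -/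
theorem exists_rep_det_sub_one (k : ℕ) (z : FF) (hz : z ≠ 1) :
    ∃ ρ : FF →* SL (k + 2) ℝ, ((ρ z).1 - 1).det ≠ 0 := by
  obtain ⟨W, hW, δ, hδ, h⟩ := word_eval (k + 1) z
  obtain ⟨P₀, hP₀⟩ := exists_faithful k
  have hne : W - δ • 1 ≠ 0 := by
    intro h0
    have hW' : W = δ • 1 := sub_eq_zero.1 h0
    obtain ⟨h1, h2⟩ := h (evB (k + 1) (fun p => (P₀ p.1).1 p.2.1 p.2.2) 1) P₀
      (fun m => (evB_one_XB (k + 1) (fun m => (P₀ m).1) m).symm)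
    rw [hW'] at h2
    set e := evB (k + 1) (fun p => (P₀ p.1).1 p.2.1 p.2.2) 1
    have h3 := map_smul_one' (k + 1) e δ
    rw [h3] at h2
    have h4 := smul_right_injective _ h1 h2
    have h5 : repP (k + 1) P₀ z = 1 := Units.ext h4.symm
    rw [← map_one (repP (k + 1) P₀)] at h5
    exact hz (hP₀ h5)
  have hdet := D0_det_ne_zero (k + 1) _ _ (sub_mem hW hδ) hne rfl
  have hX : ∀ m, (XB (k + 1) m).det ≠ 0 := fun m =>
    D0_det_ne_zero (k + 1) _ _ (XB_mem _ m) (XB_ne _ m) rfl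
  obtain ⟨e, he⟩ := exists_evB (k + 1) ((W - δ • 1).det * ∏ m, (XB (k + 1) m).det)
    (mul_ne_zero hdet (Finset.prod_ne_zero_iff.2 fun m _ => hX m))
  rw [map_mul, map_prod] at he
  have he1 := left_ne_zero_of_mul he
  have he2 : ∀ m, e (XB (k + 1) m).det ≠ 0 := fun m =>
    Finset.prod_ne_zero_iff.1 (right_ne_zero_of_mul he) m (Finset.mem_univ m)
  have hPu : ∀ m, IsUnit (e.mapMatrix (XB (k + 1) m)) := fun m => by
    rw [Matrix.isUnit_iff_isUnit_det, ← RingHom.map_det]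
    exact (he2 m).isUnit
  let P : Fin 4 → GLB (k + 1) := fun m => (hPu m).unit
  obtain ⟨h1, h2⟩ := h e P (fun m => rfl)
  have hcd : ∀ a b : GLB (k + 1), (⁅a, b⁆ : GLB (k + 1)).1.det = 1 := by
    intro a b
    have : Matrix.GeneralLinearGroup.det (⁅a, b⁆ : GL (Fin (k + 2)) ℝ) = 1 := by
      rw [map_commutatorElement, commutatorElement_eq_one_iff_mul_comm]
      exact mul_comm _ _
    exact congrArg Units.val this
  let ρ : FF →* SL (k + 2) ℝ := FreeGroup.lift fun b =>
    if b then ⟨_, hcd (P 2) (P 3)⟩ else ⟨_, hcd (P 0) (P 1)⟩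
  have hρ : (Matrix.SpecialLinearGroup.toGL).comp ρ = repP (k + 1) P := by
    apply FreeGroup.ext_hom
    intro b
    cases b <;> simp [ρ, repP] <;> apply Units.ext <;> rfl
  refine ⟨ρ, ?_⟩
  have hρz : (ρ z).1 = (repP (k + 1) P z).1 := by rw [← hρ]; rfl
  rw [hρz]
  intro h0
  apply he1
  rw [RingHom.map_det, map_sub, h2]
  have h3 := map_smul_one' (k + 1) e δ
  rw [h3, ← smul_sub, Matrix.det_smul, h0, mul_zero]

/-! ### Generation by transvections and polynomial paths -/

lemma weyl_mat {ι F : Type} [Fintype ι] [DecidableEq ι] [Field F] {i j : ι} (hij : i ≠ j)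
    (a : F) (ha : a ≠ 0) :
    (1 + Matrix.single i j a) * (1 + Matrix.single j i (-a⁻¹)) * (1 + Matrix.single i j a) =
      1 - Matrix.single i i 1 - Matrix.single j j 1 + Matrix.single i j a
        + Matrix.single j i (-a⁻¹) := by
  have h1 : Matrix.single i j a * Matrix.single j i (-a⁻¹) = - Matrix.single i i 1 := by
    rw [Matrix.single_mul_single_same]; simp [ha, ← Matrix.single_neg]
  have h2 : Matrix.single j i (-a⁻¹) * Matrix.single i j a = - Matrix.single j j 1 := by
    rw [Matrix.single_mul_single_same]; simp [ha, ← Matrix.single_neg]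
  have h3 : Matrix.single i j a * Matrix.single i j a = 0 :=
    Matrix.single_mul_single_of_ne _ _ _ _ hij.symm _
  have h4 : Matrix.single i i (1:F) * Matrix.single i j a = Matrix.single i j a := by
    rw [Matrix.single_mul_single_same]; simp
  have h5 : (1 + Matrix.single i j a) * (1 + Matrix.single j i (-a⁻¹)) =
      1 + Matrix.single i j a + Matrix.single j i (-a⁻¹) - Matrix.single i i 1 := by
    rw [_root_.mul_add, _root_.add_mul, _root_.add_mul, h1]; simp only [_root_.one_mul, _root_.mul_one]; abel
  rw [h5, _root_.mul_add, _root_.mul_one, _root_.sub_mul, _root_.add_mul, _root_.add_mul, h2, h3, h4,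
    _root_.one_mul]
  abel

lemma diag2n_decomp {ι F : Type} [Fintype ι] [DecidableEq ι] [Field F] {i j : ι} (hij : i ≠ j)
    (a : F) (ha : a ≠ 0) :
    Matrix.SpecialLinearGroup.diag2n hij a ha =
      (SpecialLinearGroup.transvection hij a * SpecialLinearGroup.transvection hij.symm (-a⁻¹) *
        SpecialLinearGroup.transvection hij a) *
      (SpecialLinearGroup.transvection hij (-1) * SpecialLinearGroup.transvection hij.symm 1 *
        SpecialLinearGroup.transvection hij (-1)) := by
  apply Subtype.ext
  have e2 := weyl_mat hij (-1 : F) (by simp)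
  rw [inv_neg, neg_neg, inv_one] at e2
  show (SpecialLinearGroup.diag2n hij a ha).1 =
    ((1 + Matrix.single i j a) * (1 + Matrix.single j i (-a⁻¹)) * (1 + Matrix.single i j a)) *
    ((1 + Matrix.single i j (-1)) * (1 + Matrix.single j i 1) * (1 + Matrix.single i j (-1)))
  rw [weyl_mat hij a ha, e2, Matrix.SpecialLinearGroup.diag2n_coe]
  simp only [_root_.mul_add, _root_.add_mul, _root_.mul_sub, _root_.sub_mul, _root_.one_mul, _root_.mul_one,
    Matrix.single_mul_single_same, Matrix.single_mul_single_of_ne _ _ _ _ hij.symm,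
    Matrix.single_mul_single_of_ne _ _ _ _ hij]
  ext x y
  simp only [Matrix.diagonal_apply, Matrix.add_apply, Matrix.sub_apply, Matrix.single_apply,
    Matrix.one_apply, Matrix.zero_apply]
  grind

theorem transvec_induction {ι F : Type} [Fintype ι] [DecidableEq ι] [Nontrivial ι] [Field F]
    (P : SpecialLinearGroup ι F → Prop)
    (ht : ∀ (i j : ι) (hij : i ≠ j) (a : F), P (SpecialLinearGroup.transvection hij a))
    (hmul : ∀ A B, P A → P B → P (A * B)) (M) : P M := by
  refine SpecialLinearGroup.diagonal_transvection_induction' P M ?_ ht hmul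
  intro i j hij c hc
  rw [diag2n_decomp]
  exact hmul _ _ (hmul _ _ (hmul _ _ (ht _ _ _ _) (ht _ _ _ _)) (ht _ _ _ _))
    (hmul _ _ (hmul _ _ (ht _ _ _ _) (ht _ _ _ _)) (ht _ _ _ _))

/-- Evaluation of a polynomial family. -/
noncomputable def evS (n : ℕ) (s : ℝ) : SL n (Polynomial ℝ) →* SL n ℝ :=
  SpecialLinearGroup.map (Polynomial.evalRingHom s)

lemma evS_apply (n : ℕ) (s : ℝ) (N : SL n (Polynomial ℝ)) (i j : Fin n) :
    (evS n s N).1 i j = (N.1 i j).eval s := rfl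

lemma exists_path (n : ℕ) (hn : 2 ≤ n) (M : SL n ℝ) :
    ∃ N : SL n (Polynomial ℝ), evS n 0 N = 1 ∧ evS n 1 N = M := by
  have : Nontrivial (Fin n) := Fin.nontrivial_iff_two_le.2 hn
  revert M
  refine transvec_induction _ ?_ ?_
  · intro i j hij a
    refine ⟨SpecialLinearGroup.transvection hij (Polynomial.C a * Polynomial.X), ?_, ?_⟩
    · ext x y
      rw [evS_apply, SpecialLinearGroup.transvection_coe]
      show _ = (1 : Matrix (Fin n) (Fin n) ℝ) x y
      simp only [Matrix.add_apply, Matrix.single_apply, Matrix.one_apply]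
      split_ifs <;> simp
    · ext x y
      rw [evS_apply, SpecialLinearGroup.transvection_coe, SpecialLinearGroup.transvection_coe]
      simp only [Matrix.add_apply, Matrix.single_apply, Matrix.one_apply]
      split_ifs <;> simp
  · rintro A B ⟨N, h0, h1⟩ ⟨N', h0', h1'⟩
    exact ⟨N * N', by rw [map_mul, h0, h0', _root_.mul_one], by rw [map_mul, h1, h1']⟩

/-- Any two representations of the free group are joined by a polynomial family. -/
theorem exists_family (n : ℕ) (hn : 2 ≤ n) (ρ₀ ρ₁ : FF →* SL n ℝ) :
    ∃ R : FF →* SL n (Polynomial ℝ), (evS n 0).comp R = ρ₀ ∧ (evS n 1).comp R = ρ₁ := by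
  choose N hN0 hN1 using exists_path n hn
  refine ⟨FreeGroup.lift fun b => N (ρ₁ (FreeGroup.of b) * (ρ₀ (FreeGroup.of b))⁻¹) *
    SpecialLinearGroup.map Polynomial.C (ρ₀ (FreeGroup.of b)), ?_, ?_⟩
  · ext1 b
    rw [MonoidHom.comp_apply, FreeGroup.lift_apply_of, map_mul, hN0, _root_.one_mul]
    ext i j
    simp [evS_apply]
  · ext1 b
    rw [MonoidHom.comp_apply, FreeGroup.lift_apply_of, map_mul, hN1]
    have : evS n 1 (SpecialLinearGroup.map Polynomial.C (ρ₀ (FreeGroup.of b))) = ρ₀ (FreeGroup.of b) := by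
      ext i j
      simp [evS_apply]
    rw [this]; simp

/-! ### Multiplicative relations between eigenvalues -/

/-- `A` has eigenvalues satisfying the multiplicative relation with exponent vector `c`. -/
def Bad (n : ℕ) (c : Fin n → ℤ) (A : Matrix (Fin n) (Fin n) ℝ) : Prop :=
  ∃ lam : Fin n → ℂ, A.charpoly.map (algebraMap ℝ ℂ) = ∏ i, (Polynomial.X - Polynomial.C (lam i)) ∧
    ∏ i, lam i ^ c i = 1

lemma exists_enum (n : ℕ) (p : Polynomial ℂ) (hp : p.Monic) (hd : p.natDegree = n) :
    ∃ lam : Fin n → ℂ, p = ∏ i, (Polynomial.X - Polynomial.C (lam i)) := by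
  have hs := IsAlgClosed.splits p
  have hc : p.roots.toList.length = n := by
    rw [Multiset.length_toList, ← hd]
    exact (Polynomial.splits_iff_card_roots.1 hs)
  subst hc
  refine ⟨fun i => p.roots.toList.get i, ?_⟩
  have h2 : p = (p.roots.map fun a => Polynomial.X - Polynomial.C a).prod :=
    (Polynomial.prod_multiset_X_sub_C_of_monic_of_roots_card_eq hp
      (Polynomial.splits_iff_card_roots.1 hs)).symm
  conv_lhs => rw [h2, ← Multiset.coe_toList p.roots]
  rw [Multiset.map_coe, Multiset.prod_coe, ← List.prod_ofFn]
  congr 1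
  conv_lhs => rw [← List.ofFn_get p.roots.toList]
  rw [List.map_ofFn]
  rfl

lemma enum_ne_zero {n : ℕ} {A : Matrix (Fin n) (Fin n) ℝ} (hA : A.det = 1) {lam : Fin n → ℂ}
    (h : A.charpoly.map (algebraMap ℝ ℂ) = ∏ i, (Polynomial.X - Polynomial.C (lam i))) :
    ∏ i, lam i = 1 := by
  have h1 := congrArg (Polynomial.eval 0) h
  rw [Polynomial.eval_prod] at h1
  simp only [Polynomial.eval_sub, Polynomial.eval_X, Polynomial.eval_C, zero_sub] at h1
  rw [Finset.prod_neg, Finset.card_univ, Fintype.card_fin, ← Polynomial.coeff_zero_eq_eval_zero,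
    Polynomial.coeff_map] at h1
  have h2 := Matrix.det_eq_sign_charpoly_coeff A
  rw [hA, Fintype.card_fin] at h2
  have h3 : (-1 : ℂ) ^ n * algebraMap ℝ ℂ (A.charpoly.coeff 0) = 1 := by
    have := congrArg (algebraMap ℝ ℂ) h2
    rw [map_mul, map_pow, map_neg, map_one] at this
    exact this.symm
  rw [h1, ← mul_assoc, ← mul_pow] at h3
  simpa using h3

/-- The symmetrised relation polynomial. -/
noncomputable def relPoly (n : ℕ) (c : Fin n → ℤ) : MvPolynomial (Fin n) ℂ :=
  ∏ σ : Equiv.Perm (Fin n),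
    (∏ i, X (σ i) ^ (c i).toNat - ∏ i, X (σ i) ^ (-(c i)).toNat)

lemma relPoly_symm (n : ℕ) (c : Fin n → ℤ) : (relPoly n c).IsSymmetric := by
  intro e
  simp only [relPoly, map_prod, map_sub, map_pow, rename_X]
  exact Fintype.prod_equiv (Equiv.mulLeft e) _ _ (fun σ => rfl)

lemma relPoly_eval (n : ℕ) (c : Fin n → ℤ) (lam : Fin n → ℂ) (h0 : ∀ i, lam i ≠ 0) :
    aeval lam (relPoly n c) = 0 ↔ ∃ σ : Equiv.Perm (Fin n), ∏ i, lam (σ i) ^ c i = 1 := by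
  simp only [relPoly, map_prod, map_sub, map_pow, aeval_X]
  rw [Finset.prod_eq_zero_iff]
  simp only [Finset.mem_univ, true_and]
  refine exists_congr fun σ => ?_
  rw [sub_eq_zero]
  have hq : ∏ i, lam (σ i) ^ (-(c i)).toNat ≠ 0 :=
    Finset.prod_ne_zero_iff.2 fun i _ => pow_ne_zero _ (h0 _)
  have : ∏ i, lam (σ i) ^ c i =
      (∏ i, lam (σ i) ^ (c i).toNat) / ∏ i, lam (σ i) ^ (-(c i)).toNat := by
    rw [← Finset.prod_div_distrib]
    refine Finset.prod_congr rfl fun i _ => ?_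
    rw [← zpow_natCast, ← zpow_natCast, ← zpow_sub₀ (h0 _)]
    congr 1
    have := Int.toNat_sub_toNat_neg (c i)
    omega
  rw [this, div_eq_one_iff_eq hq]

lemma relPoly_coeffs (n : ℕ) (c : Fin n → ℤ) : ∃ Q : MvPolynomial (Fin n) ℂ,
    ∀ (lam : Fin n → ℂ) (p : Polynomial ℂ), p = ∏ i, (Polynomial.X - Polynomial.C (lam i)) →
      aeval lam (relPoly n c) =
        aeval (fun i : Fin n => (-1) ^ (i.1 + 1) * p.coeff (n - (i.1 + 1))) Q := by
  obtain ⟨Q, hQ⟩ := esymmAlgHom_surjective (σ := Fin n) (R := ℂ) (n := n) (by simp)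
    ⟨relPoly n c, relPoly_symm n c⟩
  refine ⟨Q, ?_⟩
  rintro lam p rfl
  have h1 : relPoly n c = aeval (fun i : Fin n => esymm (Fin n) ℂ (i.1 + 1)) Q := by
    rw [← esymmAlgHom_apply, hQ]
  rw [h1, MvPolynomial.comp_aeval_apply]
  congr 2
  ext i
  rw [aeval_esymm_eq_multiset_esymm]
  have h2 : (∏ i, (Polynomial.X - Polynomial.C (lam i))) =
      ((Finset.univ.val.map lam).map fun t => Polynomial.X - Polynomial.C t).prod := by
    rw [Multiset.map_map]; rfl
  have hc : Multiset.card (Finset.univ.val.map lam) = n := by simp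
  rw [h2, Multiset.prod_X_sub_C_coeff _ (by rw [hc]; omega), hc,
    show n - (n - (i.1 + 1)) = i.1 + 1 by omega, ← mul_assoc, ← mul_pow]
  simp

theorem bad_poly (n : ℕ) (c : Fin n → ℤ) (N : SL n (Polynomial ℝ)) :
    ∃ q : Polynomial ℂ, ∀ s : ℝ, q.eval (s : ℂ) = 0 ↔ Bad n c (evS n s N).1 := by
  obtain ⟨Q, hQ⟩ := relPoly_coeffs n c
  refine ⟨aeval (fun i : Fin n => (-1) ^ (i.1 + 1) *
    (N.1.charpoly.coeff (n - (i.1 + 1))).map (algebraMap ℝ ℂ)) Q, fun s => ?_⟩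
  set A := (evS n s N).1 with hA
  have hAd : A.det = 1 := (evS n s N).2
  have hch : A.charpoly = N.1.charpoly.map (Polynomial.evalRingHom s) := by
    rw [← Matrix.charpoly_map]; rfl
  have hev : Polynomial.eval (s : ℂ) (aeval (fun i : Fin n => (-1) ^ (i.1 + 1) *
    (N.1.charpoly.coeff (n - (i.1 + 1))).map (algebraMap ℝ ℂ)) Q) =
      aeval (fun i : Fin n => (-1) ^ (i.1 + 1) *
        (A.charpoly.map (algebraMap ℝ ℂ)).coeff (n - (i.1 + 1))) Q := by
    have := MvPolynomial.comp_aeval_apply (fun i : Fin n => (-1) ^ (i.1 + 1) *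
      (N.1.charpoly.coeff (n - (i.1 + 1))).map (algebraMap ℝ ℂ)) (Polynomial.aeval (s : ℂ)) Q
    rw [Polynomial.coe_aeval_eq_eval] at this
    rw [this]
    congr 2
    ext i
    rw [Polynomial.coeff_map, hch, Polynomial.coeff_map]
    simp only [Polynomial.eval_mul, Polynomial.eval_pow, Polynomial.eval_neg, Polynomial.eval_one]
    congr 1
    rw [Polynomial.eval_map]
    exact Polynomial.eval₂_at_apply (algebraMap ℝ ℂ) s
  rw [hev]
  constructor
  · intro h0
    obtain ⟨lam, hl⟩ := exists_enum n (A.charpoly.map (algebraMap ℝ ℂ))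
      ((Matrix.charpoly_monic A).map _) (by
        rw [Polynomial.natDegree_map, Matrix.charpoly_natDegree_eq_dim, Fintype.card_fin])
    have hz : ∀ i, lam i ≠ 0 := by
      have := enum_ne_zero hAd hl
      intro i hi
      rw [Finset.prod_eq_zero (Finset.mem_univ i) hi] at this
      exact zero_ne_one this
    rw [← hQ lam _ hl, relPoly_eval n c lam hz] at h0
    obtain ⟨σ, hσ⟩ := h0
    refine ⟨lam ∘ σ, ?_, hσ⟩
    rw [hl]
    exact (Equiv.prod_comp σ (fun i => Polynomial.X - Polynomial.C (lam i))).symm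
  · rintro ⟨lam, hl, hc⟩
    have hz : ∀ i, lam i ≠ 0 := by
      have := enum_ne_zero hAd hl
      intro i hi
      rw [Finset.prod_eq_zero (Finset.mem_univ i) hi] at this
      exact zero_ne_one this
    rw [← hQ lam _ hl, relPoly_eval n c lam hz]
    exact ⟨1, hc⟩

/-! ### Generic properties of representations -/

def Gen (n : ℕ) (P : (FF →* SL n ℝ) → Prop) : Prop :=
  ∀ R : FF →* SL n (Polynomial ℝ), (∃ s, P ((evS n s).comp R)) →
    {s : ℝ | ¬ P ((evS n s).comp R)}.Finite

lemma gen_not_bad (n : ℕ) (c : Fin n → ℤ) (z : FF) :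
    Gen n (fun ρ => ¬ Bad n c (ρ z).1) := by
  rintro R ⟨s0, h0⟩
  obtain ⟨q, hq⟩ := bad_poly n c (R z)
  have hq0 : q ≠ 0 := by
    rintro rfl
    exact h0 ((hq s0).1 (by simp))
  have hf : (q.rootSet ℂ).Finite := Polynomial.rootSet_finite q ℂ
  refine (hf.preimage (f := fun s : ℝ => (s : ℂ)) Complex.ofReal_injective.injOn).subset ?_
  intro s hs
  have hs' : Bad n c (evS n s (R z)).1 := by
    by_contra h
    exact hs h
  rw [Set.mem_preimage, Polynomial.mem_rootSet]
  refine ⟨hq0, ?_⟩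
  rw [Polynomial.coe_aeval_eq_eval]
  exact (hq s).2 hs'

lemma gen_and {n : ℕ} {P Q : (FF →* SL n ℝ) → Prop} (hP : Gen n P) (hQ : Gen n Q) :
    Gen n (fun ρ => P ρ ∧ Q ρ) := by
  rintro R ⟨s, h1, h2⟩
  refine ((hP R ⟨s, h1⟩).union (hQ R ⟨s, h2⟩)).subset ?_
  intro t ht
  by_contra h
  simp only [Set.mem_union, not_or] at h
  exact ht ⟨not_not.1 h.1, not_not.1 h.2⟩

lemma exists_and {n : ℕ} (hn : 2 ≤ n) {P Q : (FF →* SL n ℝ) → Prop} (hP : Gen n P) (hQ : Gen n Q)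
    (h1 : ∃ ρ, P ρ) (h2 : ∃ ρ, Q ρ) : ∃ ρ, P ρ ∧ Q ρ := by
  obtain ⟨ρ₀, h1⟩ := h1
  obtain ⟨ρ₁, h2⟩ := h2
  obtain ⟨R, r0, r1⟩ := exists_family n hn ρ₀ ρ₁
  have hf := (hP R ⟨0, r0 ▸ h1⟩).union (hQ R ⟨1, r1 ▸ h2⟩)
  obtain ⟨s, hs⟩ := hf.infinite_compl.nonempty
  simp only [Set.mem_compl_iff, Set.mem_union, not_or] at hs
  exact ⟨_, not_not.1 hs.1, not_not.1 hs.2⟩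

lemma gen_forall {n : ℕ} (hn : 2 ≤ n) {ι : Type} (S : Finset ι) (P : ι → (FF →* SL n ℝ) → Prop)
    (hP : ∀ i ∈ S, Gen n (P i)) (hex : ∀ i ∈ S, ∃ ρ, P i ρ) :
    Gen n (fun ρ => ∀ i ∈ S, P i ρ) ∧ ∃ ρ, ∀ i ∈ S, P i ρ := by
  classical
  induction S using Finset.induction_on with
  | empty => exact ⟨fun R _ => by simp, 1, by simp⟩
  | insert a S ha ih =>
    obtain ⟨g, e⟩ := ih (fun i hi => hP i (Finset.mem_insert_of_mem hi))
      (fun i hi => hex i (Finset.mem_insert_of_mem hi))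
    have ga := hP a (Finset.mem_insert_self a S)
    have ea := hex a (Finset.mem_insert_self a S)
    simp only [Finset.forall_mem_insert]
    exact ⟨gen_and ga g, exists_and hn ga g ea e⟩

/-- Combination with a property that is open along polynomial curves. -/
lemma exists_and_open {n : ℕ} (hn : 2 ≤ n) {P O : (FF →* SL n ℝ) → Prop} (hP : Gen n P)
    (hO : ∀ (R : FF →* SL n (Polynomial ℝ)) (s₀ : ℝ), O ((evS n s₀).comp R) →
      ∀ᶠ s in nhds s₀, O ((evS n s).comp R))
    (h1 : ∃ ρ, P ρ) (h2 : ∃ ρ, O ρ) : ∃ ρ, P ρ ∧ O ρ := by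
  obtain ⟨ρ₁, h1⟩ := h1
  obtain ⟨ρ₀, h2⟩ := h2
  obtain ⟨R, r0, r1⟩ := exists_family n hn ρ₀ ρ₁
  have hf := hP R ⟨1, r1 ▸ h1⟩
  have ho := hO R 0 (r0 ▸ h2)
  have hinf : {s : ℝ | O ((evS n s).comp R)}.Infinite := infinite_of_mem_nhds 0 ho
  obtain ⟨s, hs, hs'⟩ := (hinf.sdiff hf).nonempty
  exact ⟨_, not_not.1 hs', hs⟩

/-! ### No multiplicative relations generically -/

lemma eigen_pow_det {n : ℕ} (A : Matrix (Fin n) (Fin n) ℝ) (lam : Fin n → ℂ)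
    (hl : A.charpoly.map (algebraMap ℝ ℂ) = ∏ i, (Polynomial.X - Polynomial.C (lam i)))
    (i : Fin n) (m : ℕ) (hm : lam i ^ m = 1) : (A ^ m - 1).det = 0 := by
  set B := A.map (algebraMap ℝ ℂ) with hB
  have hch : B.charpoly = ∏ i, (Polynomial.X - Polynomial.C (lam i)) := by
    rw [hB, Matrix.charpoly_map, hl]
  have hr : B.charpoly.eval (lam i) = 0 := by
    rw [hch, Polynomial.eval_prod]
    exact Finset.prod_eq_zero (Finset.mem_univ i) (by simp)
  rw [Matrix.eval_charpoly] at hr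
  have h1 : (B - Matrix.scalar (Fin n) (lam i)).det = 0 := by
    rw [← neg_sub, Matrix.det_neg, hr, mul_zero]
  have hc : Commute B (Matrix.scalar (Fin n) (lam i)) := (Matrix.scalar_commute _ (fun _ => Commute.all _ _) _).symm
  obtain ⟨C, hC⟩ := hc.sub_dvd_pow_sub_pow m
  have h2 : Matrix.scalar (Fin n) (lam i) ^ m = 1 := by
    rw [← map_pow, hm, map_one]
  rw [h2] at hC
  have h3 : (B ^ m - 1).det = 0 := by rw [hC, Matrix.det_mul, h1, zero_mul]
  have h4 : (algebraMap ℝ ℂ).mapMatrix (A ^ m - 1) = B ^ m - 1 := by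
    rw [map_sub, map_pow, map_one]; rfl
  rw [← h4, ← RingHom.map_det] at h3
  simpa using h3

theorem exists_not_bad (n : ℕ) (z : FF) (hz : z ≠ 1) (c : Fin n → ℤ)
    (hc : ∃ i j, c i ≠ c j) : ∃ ρ : FF →* SL n ℝ, ¬ Bad n c (ρ z).1 := by
  induction n with
  | zero => obtain ⟨i, _⟩ := hc; exact i.elim0
  | succ n ih =>
    by_cases hall : ∀ i0 : Fin (n + 1), ∃ i j, (c ∘ i0.succAbove) i ≠ (c ∘ i0.succAbove) j
    · have hn : 2 ≤ n := by
        obtain ⟨i, j, hij⟩ := hall 0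
        have : i ≠ j := fun h => hij (by rw [h])
        have hi := i.2
        have hj := j.2
        have : i.1 ≠ j.1 := fun h => this (Fin.ext h)
        omega
      obtain ⟨-, ρ, hρ⟩ := gen_forall hn Finset.univ
        (fun (i0 : Fin (n + 1)) (ρ : FF →* SL n ℝ) => ¬ Bad n (c ∘ i0.succAbove) (ρ z).1)
        (fun i0 _ => gen_not_bad n _ z) (fun i0 _ => ih _ (hall i0))
      let e : Fin n ⊕ Fin 1 ≃ Fin (n + 1) := finSumFinEquiv
      refine ⟨(blkSL e).comp (ρ.prod 1), ?_⟩
      rintro ⟨lam, hl, hprod⟩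
      have hch : ((blkSL e) ((ρ.prod 1) z)).1.charpoly =
          (ρ z).1.charpoly * (Polynomial.X - Polynomial.C 1) := by
        show (blkM e ((ρ z).1, 1)).charpoly = _
        rw [blkM_charpoly, show (1 : Matrix (Fin 1) (Fin 1) ℝ).charpoly = _ from
          Matrix.charpoly_one]
        simp
      rw [MonoidHom.comp_apply, hch, Polynomial.map_mul] at hl
      have h1 : Polynomial.map (algebraMap ℝ ℂ) (Polynomial.X - Polynomial.C 1) =
          Polynomial.X - Polynomial.C 1 := by simp
      rw [h1] at hl
      have h0 := congrArg (Polynomial.eval 1) hl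
      rw [Polynomial.eval_mul, Polynomial.eval_prod] at h0
      simp only [Polynomial.eval_sub, Polynomial.eval_X, Polynomial.eval_C, sub_self,
        mul_zero] at h0
      obtain ⟨i0, -, hi0⟩ := Finset.prod_eq_zero_iff.1 h0.symm
      have hi0' : lam i0 = 1 := (sub_eq_zero.1 hi0).symm
      refine hρ i0 (Finset.mem_univ _) ⟨lam ∘ i0.succAbove, ?_, ?_⟩
      · rw [Fin.prod_univ_succAbove _ i0, hi0', mul_comm] at hl
        exact mul_left_cancel₀ (Polynomial.X_sub_C_ne_zero 1) hl
      · rw [Fin.prod_univ_succAbove _ i0, hi0', _root_.one_zpow, _root_.one_mul] at hprod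
        exact hprod
    · push Not at hall
      obtain ⟨i0, hi0⟩ := hall
      obtain ⟨k, rfl⟩ : ∃ k, n = k + 1 := by
        rcases n with _ | k
        · obtain ⟨i, j, hij⟩ := hc
          exact absurd (congrArg c (Fin.ext (by omega) : i = j)) hij
        · exact ⟨k, rfl⟩
      set κ := c (i0.succAbove 0) with hκ
      have hk : ∀ j, c (i0.succAbove j) = κ := fun j => hi0 j 0
      have hm : c i0 - κ ≠ 0 := by
        intro h
        obtain ⟨i, j, hij⟩ := hc
        have : ∀ i, c i = κ := by
          intro i
          rcases Fin.eq_self_or_eq_succAbove i0 i with h' | ⟨j, h'⟩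
          · rw [h']; omega
          · rw [h', hk]
        exact hij (by rw [this, this])
      set m := (c i0 - κ).natAbs with hmdef
      have hm0 : m ≠ 0 := by omega
      have hzm : z ^ m ≠ 1 := by
        intro h
        exact hz (pow_left_injective (M := FF) hm0 (by simpa using h))
      obtain ⟨ρ, hρ⟩ := exists_rep_det_sub_one k (z ^ m) hzm
      refine ⟨ρ, ?_⟩
      rintro ⟨lam, hl, hprod⟩
      have hdet := enum_ne_zero (ρ z).2 hl
      have hz0 : ∀ i, lam i ≠ 0 := by
        intro i hi
        rw [Finset.prod_eq_zero (Finset.mem_univ i) hi] at hdet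
        exact zero_ne_one hdet
      have h1 : lam i0 ^ (c i0 - κ) = 1 := by
        have h2 : (∏ i, lam i) ^ κ = 1 := by rw [hdet, _root_.one_zpow]
        rw [← Finset.prod_zpow, Fin.prod_univ_succAbove _ i0] at h2
        rw [Fin.prod_univ_succAbove _ i0] at hprod
        simp only [hk] at hprod
        rw [zpow_sub₀ (hz0 _), div_eq_one_iff_eq (zpow_ne_zero _ (hz0 _))]
        have h3 : (∏ i, lam (i0.succAbove i) ^ κ) ≠ 0 :=
          Finset.prod_ne_zero_iff.2 fun i _ => zpow_ne_zero _ (hz0 _)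
        exact mul_right_cancel₀ h3 (hprod.trans h2.symm)
      have h2 : lam i0 ^ m = 1 := by
        rcases Int.natAbs_eq (c i0 - κ) with h | h
        · rw [h, zpow_natCast] at h1; exact h1
        · rw [h, _root_.zpow_neg, zpow_natCast, inv_eq_one] at h1; exact h1
      apply hρ
      have := eigen_pow_det (ρ z).1 lam hl i0 m h2
      rw [map_pow]
      exact this

/-! ### Distinct positive eigenvalues -/

def PosD (n : ℕ) (A : Matrix (Fin n) (Fin n) ℝ) : Prop :=
  ∃ lam : Fin n → ℝ, Function.Injective lam ∧ (∀ i, 0 < lam i) ∧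
    A.charpoly = ∏ i, (Polynomial.X - Polynomial.C (lam i))

lemma exists_sl2 (u0 : FF) (hu : u0 ≠ 1) (K : ℝ) : ∃ (τ : FF →* SL 2 ℝ) (μ : ℝ), K < μ ∧ 1 < μ ∧
    (τ (u0 ^ 2)).1.charpoly = (Polynomial.X - Polynomial.C μ) * (Polynomial.X - Polynomial.C μ⁻¹) := by
  obtain ⟨ρ₁, h1⟩ := exists_rep_det_sub_one 0 u0 hu
  obtain ⟨R, r0, r1⟩ := exists_family 2 le_rfl 1 ρ₁
  set t : Polynomial ℝ := (R u0).1.trace with ht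
  have hev : ∀ s, t.eval s = ((evS 2 s).comp R u0).1.trace := by
    intro s
    rw [ht, Matrix.trace_fin_two, Matrix.trace_fin_two, Polynomial.eval_add]; rfl
  have h0 : t.eval 0 = 2 := by
    rw [hev, r0, Matrix.trace_fin_two]
    show (1 : Matrix (Fin 2) (Fin 2) ℝ) 0 0 + (1 : Matrix (Fin 2) (Fin 2) ℝ) 1 1 = 2
    norm_num
  have h1' : t.eval 1 ≠ 2 := by
    rw [hev, r1]
    intro h
    apply h1
    have hd := (ρ₁ u0).2
    rw [Matrix.det_fin_two] at hd
    rw [Matrix.trace_fin_two] at h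
    rw [Matrix.det_fin_two]
    simp [Matrix.sub_apply]
    linarith
  have hdeg : 0 < t.degree := by
    by_contra h
    have := Polynomial.eq_C_of_degree_le_zero (not_lt.1 h)
    rw [this] at h0 h1'
    simp at h0 h1'
    exact h1' h0
  have htend := Polynomial.tendsto_norm_atTop t hdeg (l := Filter.atTop) (z := fun s : ℝ => s)
    tendsto_norm_atTop_atTop
  obtain ⟨s, hs⟩ := (htend.eventually_gt_atTop (2 * |K| + 3)).exists
  set M := ((evS 2 s).comp R u0) with hM
  have hs2 : 2 * |K| + 3 < |M.1.trace| := by rw [← hev]; exact hs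
  set T := M.1.trace ^ 2 - 2 with hT
  have hK := abs_nonneg K
  have hK' := le_abs_self K
  have hTb : 2 * |K| + 2 < T := by
    have : (2 * |K| + 3) ^ 2 < M.1.trace ^ 2 := by
      rw [← sq_abs M.1.trace]; gcongr
    nlinarith
  have hTT : 0 ≤ T ^ 2 - 4 := by nlinarith
  set μ := (T + √(T ^ 2 - 4)) / 2 with hμ
  have hsq := Real.sq_sqrt hTT
  have hsn := Real.sqrt_nonneg (T ^ 2 - 4)
  have hμT : T / 2 ≤ μ := by rw [hμ]; linarith
  have hμ0 : μ ≠ 0 := by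
    have : 0 < μ := by linarith
    exact this.ne'
  have heq : μ * (T - μ) = 1 := by rw [hμ]; linear_combination (-1/4) * hsq
  have hinv : μ⁻¹ = T - μ := inv_eq_of_mul_eq_one_right heq
  refine ⟨(evS 2 s).comp R, μ, by linarith, by linarith, ?_⟩
  rw [map_pow, ← hM]
  have hd : (M ^ 2).1.det = 1 := (M ^ 2).2
  have htr : (M ^ 2).1.trace = T := by
    have h1 : (M ^ 2).1 = M.1 * M.1 := by rw [sq]; rfl
    have hdd := M.2
    rw [Matrix.det_fin_two] at hdd
    rw [h1, hT, Matrix.trace_fin_two, Matrix.trace_fin_two, Matrix.mul_apply, Matrix.mul_apply,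
      Fin.sum_univ_two, Fin.sum_univ_two]
    linear_combination (-2) * hdd
  rw [Matrix.charpoly_fin_two, hd, htr, hinv]
  have : (Polynomial.C (1:ℝ)) = Polynomial.C μ * (Polynomial.C T - Polynomial.C μ) := by
    rw [← Polynomial.C_sub, ← Polynomial.C_mul, heq]
  rw [this, show Polynomial.C (T - μ) = Polynomial.C T - Polynomial.C μ from map_sub _ _ _]
  generalize Polynomial.C T = a
  ring

lemma blkM_PosD {n k m : ℕ} (e : Fin n ⊕ Fin k ≃ Fin m) (A : Matrix (Fin n) (Fin n) ℝ)
    (B : Matrix (Fin k) (Fin k) ℝ) (l1 : Fin n → ℝ) (l2 : Fin k → ℝ)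
    (hA : A.charpoly = ∏ i, (Polynomial.X - Polynomial.C (l1 i)))
    (hB : B.charpoly = ∏ i, (Polynomial.X - Polynomial.C (l2 i)))
    (hi : Function.Injective (Sum.elim l1 l2)) (hp : ∀ i, 0 < Sum.elim l1 l2 i) :
    PosD m (blkM e (A, B)) := by
  refine ⟨Sum.elim l1 l2 ∘ e.symm, hi.comp e.symm.injective, fun i => hp _, ?_⟩
  rw [blkM_charpoly]
  dsimp only
  rw [hA, hB]
  rw [Fintype.prod_equiv e.symm (fun i => Polynomial.X - Polynomial.C ((Sum.elim l1 l2 ∘ e.symm) i)) (fun i => Polynomial.X - Polynomial.C (Sum.elim l1 l2 i)) (fun i => rfl),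
    Fintype.prod_sum_type]
  simp

theorem exists_posD (u0 : FF) (hu : u0 ≠ 1) (n : ℕ) : ∃ ρ : FF →* SL n ℝ, PosD n (ρ (u0 ^ 2)).1 := by
  induction n using Nat.twoStepInduction with
  | zero => exact ⟨1, fun _ => 1, fun i => i.elim0, fun i => i.elim0, by
      simp [Matrix.charpoly, Matrix.det_isEmpty]⟩
  | one => exact ⟨1, fun _ => 1, fun i j _ => Subsingleton.elim _ _, fun i => one_pos, by
      show (1 : Matrix (Fin 1) (Fin 1) ℝ).charpoly = _
      rw [Matrix.charpoly_one]; simp⟩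
  | more n ih _ =>
    obtain ⟨ρ, lam, hinj, hpos, hch⟩ := ih
    set K := ∑ i, (lam i + (lam i)⁻¹) with hK
    have hnn : ∀ i ∈ Finset.univ, 0 ≤ (lam i + (lam i)⁻¹) := fun i _ => by
      have := hpos i; positivity
    have hK1 : ∀ i, lam i + (lam i)⁻¹ ≤ K := fun i => Finset.single_le_sum hnn (Finset.mem_univ i)
    obtain ⟨τ, μ, hμK, hμ1, hτ⟩ := exists_sl2 u0 hu K
    have hμ0 : 0 < μ := by linarith
    have ha : ∀ i, lam i ≠ μ := by
      intro i h
      have := hK1 i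
      have := inv_pos.2 (hpos i)
      linarith
    have hb : ∀ i, lam i ≠ μ⁻¹ := by
      intro i h
      have h1 := hK1 i
      have := hpos i
      rw [h, inv_inv] at h1
      have := inv_pos.2 hμ0
      linarith
    have hc : μ ≠ μ⁻¹ := by
      have := inv_lt_one_of_one_lt₀ hμ1
      linarith
    refine ⟨(blkSL finSumFinEquiv).comp (ρ.prod τ), ?_⟩
    show PosD (n + 2) (blkM finSumFinEquiv ((ρ (u0 ^ 2)).1, (τ (u0 ^ 2)).1))
    refine blkM_PosD _ _ _ lam ![μ, μ⁻¹] hch (by rw [hτ, Fin.prod_univ_two]; rfl) ?_ ?_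
    · refine hinj.sumElim ?_ ?_
      · intro i j
        fin_cases i <;> fin_cases j <;> simp [hc, hc.symm]
      · intro i j
        fin_cases j
        · exact ha i
        · exact hb i
    · rintro (i | j)
      · exact hpos i
      · fin_cases j
        · exact hμ0
        · exact inv_pos.2 hμ0

lemma posD_open (n : ℕ) (u : FF) (R : FF →* SL n (Polynomial ℝ)) (s₀ : ℝ)
    (h : PosD n ((evS n s₀).comp R u).1) :
    ∀ᶠ s in nhds s₀, PosD n ((evS n s).comp R u).1 := by
  obtain ⟨lam, hinj, hpos, hch⟩ := h
  -- a small radius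
  obtain ⟨ε, hε, hε1, hε2⟩ : ∃ ε > 0, (∀ i, ε < lam i) ∧ ∀ i j, i ≠ j → 2 * ε < |lam i - lam j| := by
    have h1 : ∀ᶠ ε in nhdsWithin (0:ℝ) (Set.Ioi 0), (∀ i, ε < lam i) ∧
        ∀ i j, i ≠ j → 2 * ε < |lam i - lam j| := by
      refine Filter.Eventually.and ?_ ?_
      · refine Filter.eventually_all.2 fun i => ?_
        exact nhdsWithin_le_nhds (eventually_lt_nhds (hpos i))
      · refine Filter.eventually_all.2 fun i => Filter.eventually_all.2 fun j => ?_
        by_cases hij : i = j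
        · exact Filter.Eventually.of_forall fun _ h => absurd hij h
        · have hp : 0 < |lam i - lam j| / 2 := by
            have := abs_pos.2 (sub_ne_zero.2 (hinj.ne hij))
            linarith
          filter_upwards [nhdsWithin_le_nhds (eventually_lt_nhds hp)] with ε he _
          linarith
    obtain ⟨ε, h2, h3⟩ := (h1.and self_mem_nhdsWithin).exists
    exact ⟨ε, h3, h2.1, h2.2⟩
  let ch : ℝ → Polynomial ℝ := fun s => ((evS n s).comp R u).1.charpoly
  have hcont : ∀ x : ℝ, Continuous fun s => (ch s).eval x := by
    intro x
    have : (fun s => (ch s).eval x) =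
        fun s => (Polynomial.eval (Polynomial.C x) (R u).1.charpoly).eval s := by
      funext s
      have h1 : ch s = (R u).1.charpoly.map (Polynomial.evalRingHom s) := by
        show (evS n s (R u)).1.charpoly = _
        rw [← Matrix.charpoly_map]; rfl
      rw [h1, Polynomial.eval_map]
      have h2 : x = Polynomial.evalRingHom s (Polynomial.C x) := by simp
      conv_lhs => rw [h2]
      rw [Polynomial.eval₂_hom]
      rfl
    rw [this]
    exact Polynomial.continuous _
  have hneg : ∀ i, (ch s₀).eval (lam i - ε) * (ch s₀).eval (lam i + ε) < 0 := by
    intro i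
    have h1 : ch s₀ = ∏ j, (Polynomial.X - Polynomial.C (lam j)) := hch
    rw [h1, Polynomial.eval_prod, Polynomial.eval_prod, ← Finset.prod_mul_distrib]
    rw [← Finset.mul_prod_erase _ _ (Finset.mem_univ i)]
    simp only [Polynomial.eval_sub, Polynomial.eval_X, Polynomial.eval_C]
    refine mul_neg_of_neg_of_pos (by ring_nf; nlinarith [sq_nonneg ε]) ?_
    refine Finset.prod_pos fun j hj => ?_
    have hij : i ≠ j := fun h => Finset.ne_of_mem_erase hj h.symm
    have h3 := hε2 i j hij
    have h4 : ε ^ 2 < (lam i - lam j) ^ 2 := by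
      rw [← sq_abs (lam i - lam j)]
      gcongr
      linarith
    nlinarith
  have hev : ∀ᶠ s in nhds s₀, ∀ i, (ch s).eval (lam i - ε) * (ch s).eval (lam i + ε) < 0 := by
    refine Filter.eventually_all.2 fun i => ?_
    exact ((hcont _).mul (hcont _)).continuousAt.eventually_lt continuousAt_const (hneg i)
  filter_upwards [hev] with s hs
  have hroot : ∀ i, ∃ x ∈ Set.Icc (lam i - ε) (lam i + ε), (ch s).eval x = 0 := by
    intro i
    have hle : lam i - ε ≤ lam i + ε := by linarith
    have hc : ContinuousOn (fun x => (ch s).eval x) (Set.Icc (lam i - ε) (lam i + ε)) :=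
      (Polynomial.continuous _).continuousOn
    rcases mul_neg_iff.1 (hs i) with ⟨h1, h2⟩ | ⟨h1, h2⟩
    · obtain ⟨x, hx, hx0⟩ := intermediate_value_Icc' hle hc ⟨h2.le, h1.le⟩
      exact ⟨x, hx, hx0⟩
    · obtain ⟨x, hx, hx0⟩ := intermediate_value_Icc hle hc ⟨h1.le, h2.le⟩
      exact ⟨x, hx, hx0⟩
  choose x hx hx0 using hroot
  have hxinj : Function.Injective x := by
    intro i j hij
    by_contra hne
    have h1 := hε2 i j hne
    have h2 := hx i
    have h3 := hx j
    rw [hij] at h2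
    have : |lam i - lam j| ≤ 2 * ε := by
      rw [abs_le]; constructor <;> linarith [h2.1, h2.2, h3.1, h3.2]
    linarith
  refine ⟨x, hxinj, fun i => by linarith [(hx i).1, hε1 i], ?_⟩
  have hm1 : (ch s).Monic := Matrix.charpoly_monic _
  have hm2 : (∏ i, (Polynomial.X - Polynomial.C (x i))).Monic :=
    Polynomial.monic_prod_X_sub_C x Finset.univ
  have hd1 : (ch s).degree = n := by
    have := Matrix.charpoly_degree_eq_dim ((evS n s).comp R u).1
    rwa [Fintype.card_fin] at this
  have hd2 : (∏ i, (Polynomial.X - Polynomial.C (x i))).degree = (n : WithBot ℕ) := by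
    rw [Polynomial.degree_prod]; simp
  refine Polynomial.eq_of_degree_sub_lt_of_eval_index_eq (s := Finset.univ) (v := x) hxinj.injOn ?_ ?_
  · have := Polynomial.degree_sub_lt_left (hd1.trans hd2.symm) hm1.ne_zero
      (hm1.leadingCoeff.trans hm2.leadingCoeff.symm)
    rw [hd1] at this
    rw [Finset.card_univ, Fintype.card_fin]
    exact this
  · intro i _
    show (ch s).eval (x i) = _
    rw [hx0, Polynomial.eval_prod, Finset.prod_eq_zero (Finset.mem_univ i)]
    simp

/-! ### The Lie algebra of the Zariski closure -/

section lie
variable {n : ℕ}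

abbrev Mt (n : ℕ) := Matrix (Fin n) (Fin n) ℝ
abbrev MP (n : ℕ) := MvPolynomial (Fin n × Fin n) ℝ

noncomputable def evM (M : Mt n) : MP n →ₐ[ℝ] ℝ := aeval fun q => M q.1 q.2

noncomputable def transl (g : Mt n) : MP n →ₐ[ℝ] MP n :=
  aeval fun q => ∑ k, X (q.1, k) * C (g k q.2)

lemma evM_transl (M g : Mt n) (p : MP n) : evM M (transl g p) = evM (M * g) p := by
  have : (evM M).comp (transl g) = evM (M * g) := by
    apply MvPolynomial.algHom_ext
    rintro ⟨i, j⟩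
    simp [evM, transl, Matrix.mul_apply]
  exact DFunLike.congr_fun this p

/-- The left-invariant derivation attached to a matrix. -/
noncomputable def dM (Y : Mt n) : Derivation ℝ (MP n) (MP n) :=
  mkDerivation ℝ fun q => ∑ k, X (q.1, k) * C (Y k q.2)

lemma dM_X (Y : Mt n) (i j : Fin n) : dM Y (X (i, j)) = ∑ k, X (i, k) * C (Y k j) := by
  rw [dM, mkDerivation_X]

lemma dM_add (Y Z : Mt n) : dM (Y + Z) = dM Y + dM Z := by
  apply MvPolynomial.derivation_ext
  rintro ⟨i, j⟩
  rw [Derivation.add_apply, dM_X, dM_X, dM_X, ← Finset.sum_add_distrib]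
  refine Finset.sum_congr rfl fun k _ => ?_
  rw [Matrix.add_apply, C_add, _root_.mul_add]

lemma dM_smul (c : ℝ) (Y : Mt n) : dM (c • Y) = c • dM Y := by
  apply MvPolynomial.derivation_ext
  rintro ⟨i, j⟩
  rw [Derivation.smul_apply, dM_X, dM_X, Finset.smul_sum]
  refine Finset.sum_congr rfl fun k _ => ?_
  rw [Matrix.smul_apply, smul_eq_mul, C_mul, smul_eq_C_mul]
  ring

lemma dM_dM_X (Y Z : Mt n) (i j : Fin n) :
    dM Y (dM Z (X (i, j))) = ∑ k, X (i, k) * C ((Y * Z) k j) := by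
  rw [dM_X, map_sum]
  simp only [Derivation.leibniz, smul_eq_mul, dM_X, derivation_C, mul_zero, zero_add]
  simp only [Matrix.mul_apply, map_sum, Finset.mul_sum]
  rw [Finset.sum_comm]
  refine Finset.sum_congr rfl fun k _ => Finset.sum_congr rfl fun l _ => ?_
  rw [C_mul]; ring

lemma dM_bracket (Y Z : Mt n) : dM (Y * Z - Z * Y) = ⁅dM Y, dM Z⁆ := by
  apply MvPolynomial.derivation_ext
  rintro ⟨i, j⟩
  rw [Derivation.commutator_apply, dM_dM_X, dM_dM_X, dM_X, ← Finset.sum_sub_distrib]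
  refine Finset.sum_congr rfl fun k _ => ?_
  rw [Matrix.sub_apply, C_sub, _root_.mul_sub]

/-- Restriction to the line `M + T Y`. -/
noncomputable def lineF (M Y : Mt n) : MP n →ₐ[ℝ] Polynomial ℝ :=
  aeval fun q => Polynomial.C (M q.1 q.2) + Polynomial.X * Polynomial.C (Y q.1 q.2)

lemma lineF_eval (M Y : Mt n) (s : ℝ) (p : MP n) :
    (lineF M Y p).eval s = evM (M + s • Y) p := by
  have : (Polynomial.aeval s).comp (lineF M Y) = evM (M + s • Y) := by
    apply MvPolynomial.algHom_ext
    rintro ⟨i, j⟩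
    simp [evM, lineF]
    ring
  rw [← this]; simp [Polynomial.coe_aeval_eq_eval]

lemma lineF_transl (M Y g : Mt n) (p : MP n) :
    lineF M Y (transl g p) = lineF (M * g) (Y * g) p := by
  have : (lineF M Y).comp (transl g) = lineF (M * g) (Y * g) := by
    apply MvPolynomial.algHom_ext
    rintro ⟨i, j⟩
    simp only [lineF, transl, AlgHom.comp_apply, aeval_X, map_sum, map_mul, Matrix.mul_apply,
      Finset.mul_sum, ← Finset.sum_add_distrib]
    refine Finset.sum_congr rfl fun k _ => ?_
    rw [show (C (g k j) : MP n) = algebraMap ℝ (MP n) (g k j) from rfl, AlgHom.commutes,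
      Polynomial.algebraMap_eq]
    ring
  exact DFunLike.congr_fun this p

lemma lineF_deriv_zero (M Y : Mt n) (p : MP n) :
    (Polynomial.derivative (lineF M (M * Y) p)).eval 0 = evM M (dM Y p) := by
  induction p using MvPolynomial.induction_on with
  | C a => simp [lineF, evM]
  | add p q hp hq => simp only [map_add, Polynomial.eval_add, hp, hq]
  | mul_X p q hp =>
    obtain ⟨i, j⟩ := q
    have h1 : (Polynomial.derivative (lineF M (M * Y) (X (i, j)))).eval 0 = (M * Y) i j := by
      simp [lineF]
    have h2 : evM M (dM Y (X (i, j))) = (M * Y) i j := by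
      rw [dM_X]; simp [evM, Matrix.mul_apply]
    have h3 : ∀ q, (lineF M (M * Y) q).eval 0 = evM M q := by
      intro q; rw [lineF_eval, zero_smul, add_zero]
    rw [map_mul, Polynomial.derivative_mul, Derivation.leibniz, Polynomial.eval_add,
      Polynomial.eval_mul, Polynomial.eval_mul, hp, h1, h3, h3, map_add,
      smul_eq_mul, smul_eq_mul, map_mul, map_mul, h2]
    ring

lemma lineF_deriv_nil (M Y : Mt n) (hY : Y * Y = 0) (p : MP n) :
    Polynomial.derivative (lineF M (M * Y) p) = lineF M (M * Y) (dM Y p) := by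
  induction p using MvPolynomial.induction_on with
  | C a => simp [lineF]
  | add p q hp hq => simp only [map_add, hp, hq]
  | mul_X p q hp =>
    obtain ⟨i, j⟩ := q
    have h1 : Polynomial.derivative (lineF M (M * Y) (X (i, j))) =
        lineF M (M * Y) (dM Y (X (i, j))) := by
      have h2 : ∑ k, (M * Y) i k * Y k j = 0 := by
        rw [← Matrix.mul_apply, Matrix.mul_assoc, hY, Matrix.mul_zero, Matrix.zero_apply]
      have h3 : ∑ k, M i k * Y k j = (M * Y) i j := (Matrix.mul_apply).symm
      rw [dM_X, map_sum]
      simp only [lineF, map_mul, aeval_X, aeval_C, Polynomial.algebraMap_eq, _root_.add_mul,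
        Finset.sum_add_distrib, mul_assoc]
      simp only [← Polynomial.C_mul, ← Finset.mul_sum, ← map_sum, h2, h3]
      simp
    rw [map_mul, Polynomial.derivative_mul, Derivation.leibniz, hp, map_add, h1,
      smul_eq_mul, smul_eq_mul, map_mul, map_mul]
    ring

/-- Polynomials vanishing on a subgroup. -/
def Van (H : Subgroup (SL n ℝ)) (p : MP n) : Prop := ∀ h ∈ H, evM h.1 p = 0

lemma van_transl {H : Subgroup (SL n ℝ)} {p : MP n} (hp : Van H p) {g : SL n ℝ} (hg : g ∈ H) :
    Van H (transl g.1 p) := by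
  intro h hh
  rw [evM_transl]
  exact hp (h * g) (H.mul_mem hh hg)

/-- The Lie algebra of the Zariski closure of `H`. -/
def lieH (H : Subgroup (SL n ℝ)) : Submodule ℝ (Mt n) where
  carrier := {Y | ∀ p, Van H p → Van H (dM Y p)}
  add_mem' := by
    intro Y Z hY hZ p hp h hh
    rw [dM_add, Derivation.add_apply, map_add, hY p hp h hh, hZ p hp h hh, add_zero]
  zero_mem' := by
    intro p hp h hh
    rw [show (0 : Mt n) = (0 : ℝ) • (0 : Mt n) by simp, dM_smul, zero_smul, Derivation.zero_apply,
      map_zero]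
  smul_mem' := by
    intro c Y hY p hp h hh
    rw [dM_smul, Derivation.smul_apply, map_smul, hY p hp h hh, smul_zero]

lemma lieH_bracket {H : Subgroup (SL n ℝ)} {Y Z : Mt n} (hY : Y ∈ lieH H) (hZ : Z ∈ lieH H) :
    Y * Z - Z * Y ∈ lieH H := by
  intro p hp h hh
  rw [dM_bracket, Derivation.commutator_apply, map_sub, hY _ (hZ p hp) h hh,
    hZ _ (hY p hp) h hh, sub_zero]

lemma lieH_conj {H : Subgroup (SL n ℝ)} {Y : Mt n} (hY : Y ∈ lieH H) {g : SL n ℝ} (hg : g ∈ H) :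
    g.1 * Y * (g⁻¹).1 ∈ lieH H := by
  intro p hp h hh
  have hgi : g.1 * (g⁻¹).1 = 1 := congrArg Subtype.val (mul_inv_cancel g)
  have e1 : (h * g).1 * (g⁻¹).1 = h.1 := congrArg Subtype.val (mul_inv_cancel_right h g)
  rw [← lineF_deriv_zero]
  have e2 : h.1 * (g.1 * Y * (g⁻¹).1) = ((h * g).1 * Y) * (g⁻¹).1 := by
    change h.1 * (g.1 * Y * (g⁻¹).1) = (h.1 * g.1) * Y * (g⁻¹).1
    simp only [Matrix.mul_assoc]
  rw [e2]
  conv_lhs => rw [← e1]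
  rw [← lineF_transl, lineF_deriv_zero]
  exact hY _ (van_transl hp (H.inv_mem hg)) (h * g) (H.mul_mem hh hg)

lemma line_zero {H : Subgroup (SL n ℝ)} {Y : Mt n} (hY : Y ∈ lieH H) (hYY : Y * Y = 0)
    {h : SL n ℝ} (hh : h ∈ H) (d : ℕ) : ∀ p, Van H p → (lineF h.1 (h.1 * Y) p).natDegree ≤ d →
      lineF h.1 (h.1 * Y) p = 0 := by
  induction d with
  | zero =>
    intro p hp hd
    have h0 : (lineF h.1 (h.1 * Y) p).eval 0 = 0 := by
      rw [lineF_eval, zero_smul, add_zero]; exact hp h hh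
    rw [Polynomial.eq_C_of_natDegree_le_zero hd] at h0 ⊢
    rw [Polynomial.eval_C] at h0
    rw [h0, Polynomial.C_0]
  | succ d ih =>
    intro p hp hd
    have h1 : Polynomial.derivative (lineF h.1 (h.1 * Y) p) = 0 := by
      rw [lineF_deriv_nil _ _ hYY]
      refine ih _ (hY p hp) ?_
      rw [← lineF_deriv_nil _ _ hYY]
      have := Polynomial.natDegree_derivative_le (lineF h.1 (h.1 * Y) p)
      omega
    have h0 : (lineF h.1 (h.1 * Y) p).eval 0 = 0 := by
      rw [lineF_eval, zero_smul, add_zero]; exact hp h hh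
    rw [Polynomial.eq_C_of_derivative_eq_zero h1] at h0 ⊢
    rw [Polynomial.eval_C] at h0
    rw [h0, Polynomial.C_0]

/-- If all elementary matrices are in the Lie algebra then `H` is Zariski dense. -/
theorem dense_of_lie (hn : 2 ≤ n) (H : Subgroup (SL n ℝ))
    (hE : ∀ i j, i ≠ j → Matrix.single i j (1 : ℝ) ∈ lieH H) : IsZariskiDense n H := by
  have : Nontrivial (Fin n) := Fin.nontrivial_iff_two_le.2 hn
  intro P hP M
  have hev : ∀ h : SL n ℝ, evM h.1 P = eval (fun p => (h : Matrix (Fin n) (Fin n) ℝ) p.1 p.2) P := by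
    intro h; rw [evM, MvPolynomial.aeval_eq_eval]
  have hV : Van H P := fun h hh => by rw [hev]; exact hP h hh
  have key : ∀ M : SL n ℝ, ∀ p, Van H p → Van H (transl M.1 p) := by
    refine transvec_induction _ ?_ ?_
    · intro i j hij a p hp h hh
      have hYY : Matrix.single i j (1:ℝ) * Matrix.single i j (1:ℝ) = 0 :=
        Matrix.single_mul_single_of_ne _ _ _ _ hij.symm _
      have h0 := line_zero (hE i j hij) hYY hh _ p hp le_rfl
      have h1 := lineF_eval h.1 (h.1 * Matrix.single i j (1:ℝ)) a p
      rw [h0, Polynomial.eval_zero] at h1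
      rw [evM_transl, SpecialLinearGroup.transvection_coe, h1, _root_.mul_add, _root_.mul_one]
      congr 3
      rw [← Matrix.mul_smul, Matrix.smul_single, smul_eq_mul, _root_.mul_one]
    · intro A B hA hB p hp h hh
      have h1 := hA _ (hB p hp) h hh
      rw [evM_transl, evM_transl, Matrix.mul_assoc] at h1
      rw [evM_transl]
      exact h1
  have := key M P hV 1 H.one_mem
  rw [evM_transl] at this
  rw [← hev]
  have e : (1 : SL n ℝ).1 * M.1 = M.1 := Matrix.one_mul _
  rw [e] at this
  exact this

end lie

/-! ### Subspaces invariant under a diagonal matrix -/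

lemma elim_single {ι : Type*} [Fintype ι] [DecidableEq ι] (W : Submodule ℝ (ι → ℝ)) (d : ι → ℝ)
    (hW : ∀ w ∈ W, d * w ∈ W) (i0 : ι) (hd : ∀ i, i ≠ i0 → d i ≠ d i0) (w : ι → ℝ) (hw : w ∈ W)
    (hw0 : w i0 ≠ 0) : Pi.single i0 (1:ℝ) ∈ W := by
  have key : ∀ S : Finset ι, i0 ∉ S → ∃ w ∈ W, w i0 ≠ 0 ∧ ∀ i ∈ S, w i = 0 := by
    intro S
    induction S using Finset.induction_on with
    | empty => intro _; exact ⟨w, hw, hw0, by simp⟩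
    | insert k S hk ih =>
      intro h
      rw [Finset.mem_insert, not_or] at h
      obtain ⟨v, hv, hv0, hvS⟩ := ih h.2
      refine ⟨d * v - d k • v, W.sub_mem (hW v hv) (W.smul_mem _ hv), ?_, ?_⟩
      · have h1 := hd k (Ne.symm h.1)
        have : (d * v - d k • v) i0 = (d i0 - d k) * v i0 := by simp; ring
        rw [this]
        exact mul_ne_zero (sub_ne_zero.2 (Ne.symm h1)) hv0
      · intro i hi
        rcases Finset.mem_insert.1 hi with rfl | hi
        · simp
        · simp [hvS i hi]
  obtain ⟨v, hv, hv0, hvS⟩ := key (Finset.univ.erase i0) (by simp)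
  have : Pi.single i0 (1:ℝ) = (v i0)⁻¹ • v := by
    funext i
    by_cases hi : i = i0
    · subst hi; simp [hv0]
    · simp [hi, hvS i (by simp [hi])]
  rw [this]
  exact W.smul_mem _ hv

section diag
variable {n : ℕ}

lemma inv_diag {A : SL n ℝ} {lam : Fin n → ℝ} (hA : A.1 = Matrix.diagonal lam)
    (hl : ∀ i, 0 < lam i) : (A⁻¹).1 = Matrix.diagonal fun i => (lam i)⁻¹ := by
  have h1 : (A⁻¹).1 * A.1 = 1 := congrArg Subtype.val (inv_mul_cancel A)
  have h2 : A.1 * Matrix.diagonal (fun i => (lam i)⁻¹) = 1 := by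
    rw [hA, Matrix.diagonal_mul_diagonal, ← Matrix.diagonal_one]
    congr 1; funext i; exact mul_inv_cancel₀ (hl i).ne'
  calc (A⁻¹).1 = (A⁻¹).1 * (A.1 * Matrix.diagonal (fun i => (lam i)⁻¹)) := by
        rw [h2, Matrix.mul_one]
    _ = _ := by rw [← Matrix.mul_assoc, h1, Matrix.one_mul]

lemma single_mem_lie {H : Subgroup (SL n ℝ)} {A : SL n ℝ} (hAH : A ∈ H) {lam : Fin n → ℝ}
    (hA : A.1 = Matrix.diagonal lam) (hl : ∀ i, 0 < lam i)
    (hg : ∀ i j k l, i ≠ j → (k, l) ≠ (i, j) → lam i * lam l ≠ lam j * lam k)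
    {Y : Mt n} (hY : Y ∈ lieH H) {i j : Fin n} (hij : i ≠ j) (h0 : Y i j ≠ 0) :
    Matrix.single i j (1:ℝ) ∈ lieH H := by
  let W : Submodule ℝ (Fin n × Fin n → ℝ) :=
    { carrier := {f | (Matrix.of fun i j => f (i, j)) ∈ lieH H}
      add_mem' := fun {f g} hf hg => (lieH H).add_mem hf hg
      zero_mem' := (lieH H).zero_mem
      smul_mem' := fun c f hf => (lieH H).smul_mem c hf }
  have hs : Pi.single (i, j) (1:ℝ) ∈ W := by
    refine elim_single W (fun q => lam q.1 / lam q.2) ?_ (i, j) ?_ (fun q => Y q.1 q.2) hY h0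
    · intro f hf
      have h1 := lieH_conj hf hAH
      have h2 : A.1 * (Matrix.of fun i j => f (i, j)) * (A⁻¹).1 =
          Matrix.of fun i j => (lam i / lam j) * f (i, j) := by
        rw [inv_diag hA hl, hA]
        ext k l
        rw [Matrix.mul_diagonal, Matrix.diagonal_mul]
        simp only [Matrix.of_apply]
        ring
      rw [h2] at h1
      exact h1
    · rintro ⟨k, l⟩ hkl he
      have := hg i j k l hij hkl
      simp only at he
      rw [div_eq_div_iff (hl l).ne' (hl j).ne'] at he
      exact this (by linarith)
  have : Matrix.single i j (1:ℝ) = Matrix.of fun k l => (Pi.single (i, j) (1:ℝ) : Fin n × Fin n → ℝ) (k, l) := by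
    ext k l
    simp only [Matrix.single_apply, Matrix.of_apply, Pi.single_apply, Prod.mk.injEq]
    congr 1
    simp only [eq_iff_iff]
    tauto
  rw [this]
  exact hs

lemma dM_diag_monomial (μ : Fin n → ℝ) (α : Fin n × Fin n →₀ ℕ) : ∀ c : ℝ,
    dM (Matrix.diagonal μ) (monomial α c) = C (∑ q, (α q : ℝ) * μ q.2) * monomial α c := by
  induction α using Finsupp.induction_linear with
  | zero => intro c; rw [← C_apply]; simp
  | add α β hα hβ =>
    intro c
    have : (monomial (α + β) c : MP n) = monomial α c * monomial β 1 := by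
      rw [monomial_mul, _root_.mul_one]
    rw [this, Derivation.leibniz, hα, hβ]
    simp only [Finsupp.add_apply, Nat.cast_add, _root_.add_mul, Finset.sum_add_distrib, C_add,
      smul_eq_mul]
    ring
  | single q m =>
    intro c
    obtain ⟨i, j⟩ := q
    have h1 : dM (Matrix.diagonal μ) (X (i, j)) = X (i, j) * C (μ j) := by
      rw [dM_X, Finset.sum_eq_single j]
      · simp
      · intro k _ hk; simp [Matrix.diagonal_apply_ne _ hk]
      · simp
    have h2 : (∑ q, ((Finsupp.single (i, j) m : Fin n × Fin n →₀ ℕ) q : ℝ) * μ q.2) = m * μ j := by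
      rw [Finset.sum_eq_single (i, j)]
      · simp
      · intro k _ hk; simp [Finsupp.single_apply, Ne.symm hk]
      · simp
    rw [h2, ← C_mul_X_pow_eq_monomial, Derivation.leibniz, Derivation.leibniz_pow, h1, derivation_C]
    rcases m with _ | m
    · simp
    · simp only [smul_eq_mul, mul_zero, add_zero, nsmul_eq_mul, C_mul, Nat.add_sub_cancel, pow_succ]
      rw [show (C ((m + 1 : ℕ) : ℝ) : MP n) = ((m + 1 : ℕ) : MP n) from map_natCast C _]
      ring

lemma evM_sum (M : Mt n) (p : MP n) :
    evM M p = ∑ α ∈ p.support, coeff α p * ∏ q, M q.1 q.2 ^ α q := by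
  rw [evM, aeval_def, eval₂_eq']; rfl

lemma log_mem_lie {H : Subgroup (SL n ℝ)} {A : SL n ℝ} (hAH : A ∈ H) {lam : Fin n → ℝ}
    (hA : A.1 = Matrix.diagonal lam) (hl : ∀ i, 0 < lam i) :
    Matrix.diagonal (fun i => Real.log (lam i)) ∈ lieH H := by
  intro p hp h hh
  let w : (Fin n × Fin n →₀ ℕ) → ℝ := fun α => ∏ q, lam q.2 ^ α q
  let e : (Fin n × Fin n →₀ ℕ) → ℝ := fun α => coeff α p * ∏ q, h.1 q.1 q.2 ^ α q
  have hw : ∀ α, Real.log (w α) = ∑ q, (α q : ℝ) * Real.log (lam q.2) := by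
    intro α
    rw [Real.log_prod (fun q _ => (pow_pos (hl q.2) _).ne')]
    simp only [Real.log_pow]
  have h1 : ∀ k : ℕ, ∑ α ∈ p.support, e α * w α ^ k = 0 := by
    intro k
    have h2 := hp (h * A ^ k) (H.mul_mem hh (H.pow_mem hAH k))
    have h3 : (h * A ^ k).1 = h.1 * Matrix.diagonal (fun i => lam i ^ k) := by
      change h.1 * (A ^ k).1 = _
      have : (A ^ k).1 = A.1 ^ k := Matrix.SpecialLinearGroup.coe_pow A k
      rw [this, hA, Matrix.diagonal_pow]; rfl
    rw [h3, evM_sum] at h2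
    rw [← h2]
    refine Finset.sum_congr rfl fun α _ => ?_
    simp only [e, w, Matrix.mul_diagonal, mul_pow, Finset.prod_mul_distrib, mul_assoc]
    rw [← Finset.prod_pow]
    congr 2
    refine Finset.prod_congr rfl fun q _ => ?_
    rw [← pow_mul, ← pow_mul, mul_comm]
  have h2 : ∀ Q : Polynomial ℝ, ∑ α ∈ p.support, e α * Q.eval (w α) = 0 := by
    intro Q
    simp only [Polynomial.eval_eq_sum_range, Finset.mul_sum]
    rw [Finset.sum_comm]
    refine Finset.sum_eq_zero fun k _ => ?_
    have := h1 k
    calc _ = Q.coeff k * ∑ α ∈ p.support, e α * w α ^ k := by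
          rw [Finset.mul_sum]; exact Finset.sum_congr rfl fun α _ => by ring
      _ = 0 := by rw [this, mul_zero]
  have h3 := h2 (Lagrange.interpolate (p.support.image w) id Real.log)
  have h4 : ∑ α ∈ p.support, e α * Real.log (w α) = 0 := by
    rw [← h3]
    refine Finset.sum_congr rfl fun α hα => ?_
    have := Lagrange.eval_interpolate_at_node (s := p.support.image w) (v := id) Real.log
      (Function.injective_id.injOn) (Finset.mem_image_of_mem w hα)
    rw [id] at this
    rw [this]
  rw [← h4]
  conv_lhs => rw [MvPolynomial.as_sum p]
  rw [map_sum, map_sum]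
  refine Finset.sum_congr rfl fun α _ => ?_
  rw [dM_diag_monomial, map_mul, ← hw]
  have h5 : evM h.1 (monomial α (coeff α p)) = e α := by
    simp only [evM, aeval_monomial, e]
    rw [Finsupp.prod_fintype _ _ (fun _ => pow_zero _)]
    rfl
  have h6 : evM h.1 (C (Real.log (w α))) = Real.log (w α) := by simp [evM]
  rw [h5, h6, mul_comm]

end diag

section blocks

variable {n : ℕ}

lemma enum_fintype {κ : Type*} [Fintype κ] [DecidableEq κ] (N : Matrix κ κ ℝ) :
    ∃ mu : κ → ℂ, N.charpoly.map (algebraMap ℝ ℂ) =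
      ∏ i, (Polynomial.X - Polynomial.C (mu i)) ∧ ∏ i, mu i = ((N.det : ℝ) : ℂ) := by
  obtain ⟨lam, hlam⟩ := exists_enum (Fintype.card κ) (N.charpoly.map (algebraMap ℝ ℂ))
    (N.charpoly_monic.map _) (by
      rw [N.charpoly_monic.natDegree_map, Matrix.charpoly_natDegree_eq_dim])
  have e := Fintype.equivFin κ
  have h1 : N.charpoly.map (algebraMap ℝ ℂ) =
      ∏ i, (Polynomial.X - Polynomial.C (lam (e i))) := by
    rw [hlam]
    exact (Fintype.prod_equiv e (fun i => Polynomial.X - Polynomial.C (lam (e i)))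
      (fun i => Polynomial.X - Polynomial.C (lam i)) (fun _ => rfl)).symm
  refine ⟨fun i => lam (e i), h1, ?_⟩
  have h2 := congrArg (Polynomial.eval 0) h1
  rw [Polynomial.eval_prod] at h2
  have h3 : ((N.det : ℝ) : ℂ) = (-1) ^ Fintype.card κ *
      Polynomial.eval 0 (N.charpoly.map (algebraMap ℝ ℂ)) := by
    rw [Matrix.det_eq_sign_charpoly_coeff, ← Polynomial.coeff_zero_eq_eval_zero,
      Polynomial.coeff_map]
    push_cast
    rfl
  have h4 : ((-1 : ℂ)) ^ Fintype.card κ = ∏ _i : κ, (-1 : ℂ) := by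
    rw [Finset.prod_const, Finset.card_univ]
  rw [h3, h2, h4, ← Finset.prod_mul_distrib]
  refine Finset.prod_congr rfl fun i _ => ?_
  simp

lemma bad_of_block (C : Mt n) (I : Fin n → Prop) [DecidablePred I]
    (h0 : ∀ i, ¬ I i → ∀ k, I k → C i k = 0)
    (hd : (C.toSquareBlockProp I).det = 1) :
    Bad n (fun i => if I i then 1 else 0) C := by
  have h1 : C.charpoly = (C.toSquareBlockProp I).charpoly *
      (C.toSquareBlockProp (fun i => ¬ I i)).charpoly := by
    have hc : ∀ p : Fin n → Prop, ∀ _ : DecidablePred p,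
        (C.charmatrix).toSquareBlockProp p = (C.toSquareBlockProp p).charmatrix := by
      intro p _
      ext1 i j
      by_cases hij : i = j
      · subst hij
        simp [Matrix.toSquareBlockProp, Matrix.charmatrix_apply_eq]
      · have : (i : Fin n) ≠ j := fun h => hij (Subtype.ext h)
        simp [Matrix.toSquareBlockProp, Matrix.charmatrix_apply_ne _ _ _ hij,
          Matrix.charmatrix_apply_ne _ _ _ this]
    rw [Matrix.charpoly, Matrix.twoBlockTriangular_det _ I, hc _ inferInstance,
      hc _ inferInstance]
    · rfl
    · intro i hi j hj
      have : i ≠ j := fun h => hi (by rw [h]; exact hj)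
      rw [Matrix.charmatrix_apply_ne _ _ _ this, h0 i hi j hj]
      simp
  obtain ⟨mu, hmu, hmu1⟩ := enum_fintype (C.toSquareBlockProp I)
  obtain ⟨nu, hnu, -⟩ := enum_fintype (C.toSquareBlockProp (fun i => ¬ I i))
  rw [hd] at hmu1
  let lam : Fin n → ℂ := fun i => if h : I i then mu ⟨i, h⟩ else nu ⟨i, h⟩
  have l1 : ∀ i : {i // I i}, lam i = mu i := fun i => by simp [lam, i.2]
  have l2 : ∀ i : {i // ¬ I i}, lam i = nu i := fun i => by simp [lam, i.2]
  refine ⟨lam, ?_, ?_⟩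
  · rw [h1, Polynomial.map_mul, hmu, hnu,
      ← Fintype.prod_subtype_mul_prod_subtype I]
    simp only [l1, l2]
  · rw [← Fintype.prod_subtype_mul_prod_subtype I]
    have a1 : ∀ i : {i // I i}, lam i ^ (if I (i : Fin n) then (1:ℤ) else 0) = mu i := by
      intro i; rw [l1, if_pos i.2, zpow_one]
    have a2 : ∀ i : {i // ¬ I i}, lam i ^ (if I (i : Fin n) then (1:ℤ) else 0) = 1 := by
      intro i; rw [if_neg i.2, zpow_zero]
    simp only [a1, a2, Finset.prod_const_one]
    rw [hmu1]; simp

/-- Matrices preserving a coordinate subspace. -/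
def Pres (I : Fin n → Prop) (M : Mt n) : Prop := ∀ i, ¬ I i → ∀ k, I k → M i k = 0

lemma Pres.mul {I : Fin n → Prop} {M N : Mt n} (hM : Pres I M) (hN : Pres I N) :
    Pres I (M * N) := by
  intro i hi k hk
  rw [Matrix.mul_apply]
  refine Finset.sum_eq_zero fun l _ => ?_
  by_cases hl : I l
  · rw [hM i hi l hl, zero_mul]
  · rw [hN l hl k hk, mul_zero]

noncomputable def bdet (I : Fin n → Prop) [DecidablePred I] (M : Mt n) : ℝ :=
  (M.toSquareBlockProp I).det

lemma bdet_mul {I : Fin n → Prop} [DecidablePred I] {M N : Mt n} (hN : Pres I N) :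
    bdet I (M * N) = bdet I M * bdet I N := by
  rw [bdet, bdet, bdet, ← Matrix.det_mul]
  congr 1
  ext i k
  simp only [Matrix.toSquareBlockProp_def, Matrix.of_apply, Matrix.mul_apply]
  rw [← Fintype.sum_subtype_add_sum_subtype I]
  have : ∑ l : {l // ¬ I l}, M i l * N l k = 0 :=
    Finset.sum_eq_zero fun l _ => by rw [hN l l.2 k k.2, mul_zero]
  rw [this, add_zero]

lemma bdet_one (I : Fin n → Prop) [DecidablePred I] : bdet I (1 : Mt n) = 1 := by
  rw [bdet]
  have : (1 : Mt n).toSquareBlockProp I = 1 := by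
    ext i k
    simp only [Matrix.toSquareBlockProp_def, Matrix.of_apply, Matrix.one_apply, Subtype.ext_iff]
  rw [this, Matrix.det_one]

lemma bdet_inv {I : Fin n → Prop} [DecidablePred I] {g : SL n ℝ} (h : Pres I (g⁻¹).1) :
    bdet I g.1 * bdet I (g⁻¹).1 = 1 := by
  rw [← bdet_mul h]
  have : g.1 * (g⁻¹).1 = 1 := congrArg Subtype.val (mul_inv_cancel g)
  rw [this, bdet_one]

lemma bad_comm {I : Fin n → Prop} [DecidablePred I] {g h : SL n ℝ} (h1 : Pres I g.1) (h2 : Pres I (g⁻¹).1)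
    (h3 : Pres I h.1) (h4 : Pres I (h⁻¹).1) :
    Bad n (fun i => if I i then 1 else 0) (⁅g, h⁆).1 := by
  have e : (⁅g, h⁆).1 = g.1 * h.1 * (g⁻¹).1 * (h⁻¹).1 := rfl
  rw [e]
  refine bad_of_block _ I (((h1.mul h3).mul h2).mul h4) ?_
  change bdet I _ = 1
  rw [bdet_mul h4, bdet_mul h2, bdet_mul h3]
  have a := bdet_inv h2
  have b := bdet_inv h4
  linear_combination bdet I h.1 * bdet I (h⁻¹).1 * a + b

end blocks

section density
variable {n : ℕ}

/-- Coordinate subspace. -/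
def coordS (I : Fin n → Prop) : Submodule ℝ (Fin n → ℝ) where
  carrier := {w | ∀ i, ¬ I i → w i = 0}
  add_mem' := by
    intro v w hv hw i hi
    rw [Pi.add_apply, hv i hi, hw i hi, add_zero]
  zero_mem' := fun _ _ => rfl
  smul_mem' := by
    intro c v hv i hi
    rw [Pi.smul_apply, hv i hi, smul_zero]

lemma act_mul (g h : SL n ℝ) (w : Fin n → ℝ) : (g * h).1 *ᵥ w = g.1 *ᵥ (h.1 *ᵥ w) := by
  rw [Matrix.mulVec_mulVec]; rfl

lemma act_inv (g : SL n ℝ) (w : Fin n → ℝ) : (g⁻¹).1 *ᵥ (g.1 *ᵥ w) = w := by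
  rw [← act_mul, inv_mul_cancel]; exact Matrix.one_mulVec w

lemma pres_of {I : Fin n → Prop} {M : Mt n} (h : ∀ w ∈ coordS I, M *ᵥ w ∈ coordS I) :
    Pres I M := by
  intro i hi k hk
  have h1 : (Pi.single k (1:ℝ) : Fin n → ℝ) ∈ coordS I := by
    intro l hl
    have : l ≠ k := fun e => hl (by rw [e]; exact hk)
    simp [this]
  have h2 := h _ h1 i hi
  rw [Matrix.mulVec_single_one] at h2
  exact h2

lemma pres_diag (I : Fin n → Prop) (d : Fin n → ℝ) : Pres I (Matrix.diagonal d) := by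
  intro i hi k hk
  exact Matrix.diagonal_apply_ne _ fun e => hi (by rw [e]; exact hk)

theorem dense_diag (hn : 2 ≤ n) (A B : SL n ℝ) {lam : Fin n → ℝ}
    (hA : A.1 = Matrix.diagonal lam) (hl : ∀ i, 0 < lam i) (hinj : Function.Injective lam)
    (hg : ∀ i j k l, i ≠ j → (k, l) ≠ (i, j) → lam i * lam l ≠ lam j * lam k)
    (m : ℕ) (hm : ∀ d, 0 < d → d ≤ 2 ^ n → d ∣ m)
    (hbad : ∀ I : Finset (Fin n), I.Nonempty → I ≠ Finset.univ →
      ¬ Bad n (fun i => if i ∈ I then 1 else 0) (⁅A, B ^ m⁆).1) :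
    IsZariskiDense n (Subgroup.closure {A, B}) := by
  classical
  set H := Subgroup.closure {A, B} with hH
  have hAH : A ∈ H := Subgroup.subset_closure (by simp)
  have hBH : B ∈ H := Subgroup.subset_closure (by simp)
  refine dense_of_lie hn H ?_
  intro i0 j hij
  by_contra hno
  let J : Finset (Fin n) := Finset.univ.filter fun i => i = j ∨ Matrix.single i j (1:ℝ) ∈ lieH H
  have hJ : ∀ i, i ∈ J ↔ (i = j ∨ Matrix.single i j (1:ℝ) ∈ lieH H) := fun i => by simp [J]
  let I : Fin n → Prop := fun i => i ∈ J
  have hjJ : I j := (hJ j).2 (Or.inl rfl)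
  have hiJ : ¬ I i0 := fun h => by
    rcases (hJ i0).1 h with h | h
    · exact hij h
    · exact hno h
  -- the coordinate subspace is invariant under the Lie algebra
  have hV : ∀ Y ∈ lieH H, ∀ w ∈ coordS I, Y *ᵥ w ∈ coordS I := by
    intro Y hY w hw i hi
    have h1 : (Y *ᵥ w) i = ∑ k, Y i k * w k := rfl
    rw [h1]
    refine Finset.sum_eq_zero fun k _ => ?_
    by_cases hk : I k
    · have : Y i k = 0 := by
        by_contra h0
        have hik : i ≠ k := fun e => hi (by rw [e]; exact hk)
        have hi' : i ≠ j := fun e => hi (by rw [e]; exact hjJ)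
        have s1 := single_mem_lie hAH hA hl hg hY hik h0
        rcases (hJ k).1 hk with rfl | s2
        · exact hi ((hJ i).2 (Or.inr s1))
        · have s3 := lieH_bracket s1 s2
          rw [Matrix.single_mul_single_same, Matrix.single_mul_single_of_ne _ _ _ _ hi'.symm,
            sub_zero, _root_.mul_one] at s3
          exact hi ((hJ i).2 (Or.inr s3))
      rw [this, zero_mul]
    · rw [hw k hk, mul_zero]
  let VV : ℕ → Submodule ℝ (Fin n → ℝ) := fun k =>
    (coordS I).comap (Matrix.mulVecLin ((B ^ k)⁻¹).1)
  have hVV : ∀ k w, w ∈ VV k ↔ ((B ^ k)⁻¹).1 *ᵥ w ∈ coordS I := fun k w => Iff.rfl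
  have hinv : ∀ k, ∀ Y ∈ lieH H, ∀ w ∈ VV k, Y *ᵥ w ∈ VV k := by
    intro k Y hY w hw
    rw [hVV] at hw ⊢
    have hgH : (B ^ k)⁻¹ ∈ H := H.inv_mem (H.pow_mem hBH k)
    have h1 := hV _ (lieH_conj hY hgH) _ hw
    rw [← Matrix.mulVec_mulVec, act_inv, ← Matrix.mulVec_mulVec] at h1
    exact h1
  have hcoord : ∀ k w i, w ∈ VV k → w i ≠ 0 → Pi.single i (1:ℝ) ∈ VV k := by
    intro k w i hw hi
    refine elim_single (VV k) (fun i => Real.log (lam i)) ?_ i ?_ w hw hi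
    · intro v hv
      have h1 := hinv k _ (log_mem_lie hAH hA hl) v hv
      have h2 : Matrix.diagonal (fun i => Real.log (lam i)) *ᵥ v =
          (fun i => Real.log (lam i)) * v := by
        funext i; rw [Matrix.mulVec_diagonal]; rfl
      rw [h2] at h1
      exact h1
    · intro l hli he
      exact hli (hinj (Real.log_injOn_pos (hl l) (hl i) he))
  let S : ℕ → Finset (Fin n) := fun k => Finset.univ.filter fun i => Pi.single i (1:ℝ) ∈ VV k
  have hS : ∀ a b, S a = S b → VV a ≤ VV b := by
    intro a b hab w hw
    rw [pi_eq_sum_univ' w]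
    refine Submodule.sum_mem _ fun i _ => ?_
    by_cases hi : w i = 0
    · rw [hi, zero_smul]; exact Submodule.zero_mem _
    · have h1 : i ∈ S a := by
        simp only [S, Finset.mem_filter, Finset.mem_univ, true_and]
        exact hcoord a w i hw hi
      rw [hab] at h1
      simp only [S, Finset.mem_filter, Finset.mem_univ, true_and] at h1
      refine Submodule.smul_mem _ _ ?_
      convert h1 using 1
  obtain ⟨a, b, hlt, hb, hSab⟩ : ∃ a b, a < b ∧ b ≤ 2 ^ n ∧ S a = S b := by
    obtain ⟨a, ha, b, hb, hne, he⟩ := Finset.exists_ne_map_eq_of_card_lt_of_maps_to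
      (s := Finset.range (2 ^ n + 1)) (t := (Finset.univ : Finset (Finset (Fin n)))) (f := S)
      (by simp) (fun _ _ => Finset.mem_coe.2 (Finset.mem_univ _))
    rw [Finset.mem_range] at ha hb
    rcases lt_or_gt_of_ne hne with h | h
    · exact ⟨a, b, h, by omega, he⟩
    · exact ⟨b, a, h, by omega, he.symm⟩
  obtain ⟨d, rfl⟩ := Nat.exists_eq_add_of_lt hlt
  have hd : ∀ w, w ∈ coordS I ↔ ((B ^ (d + 1))⁻¹).1 *ᵥ w ∈ coordS I := by
    intro w
    have h1 : (B ^ a).1 *ᵥ w ∈ VV a ↔ (B ^ a).1 *ᵥ w ∈ VV (a + d + 1) :=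
      ⟨fun h => hS _ _ hSab h, fun h => hS _ _ hSab.symm h⟩
    rw [hVV, hVV, act_inv, ← act_mul] at h1
    have h2 : (B ^ (a + d + 1))⁻¹ * B ^ a = (B ^ (d + 1))⁻¹ := by
      rw [show a + d + 1 = a + (d + 1) by ring, pow_add, _root_.mul_inv_rev, inv_mul_cancel_right]
    rw [h2] at h1
    exact h1
  obtain ⟨t, ht⟩ := hm (d + 1) (by omega) (by omega)
  have hpow : ∀ t w, w ∈ coordS I ↔ ((B ^ ((d + 1) * t))⁻¹).1 *ᵥ w ∈ coordS I := by
    intro t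
    induction t with
    | zero =>
      intro w
      rw [mul_zero, pow_zero, inv_one]
      rw [show (1 : SL n ℝ).1 *ᵥ w = w from Matrix.one_mulVec w]
    | succ t ih =>
      intro w
      rw [ih w, hd, ← act_mul, ← _root_.mul_inv_rev, ← pow_add, _root_.mul_add, _root_.mul_one]
  have hpm : ∀ w, w ∈ coordS I ↔ ((B ^ m)⁻¹).1 *ᵥ w ∈ coordS I := by
    rw [ht]; exact hpow t
  have p1 : Pres I ((B ^ m)⁻¹).1 := pres_of fun w hw => (hpm w).1 hw
  have p2 : Pres I (B ^ m).1 := pres_of fun w hw => by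
    rw [hpm, act_inv]; exact hw
  have p3 : Pres I A.1 := by rw [hA]; exact pres_diag _ _
  have p4 : Pres I (A⁻¹).1 := by rw [inv_diag hA hl]; exact pres_diag _ _
  refine hbad J ⟨j, hjJ⟩ (fun h => hiJ ?_) (bad_comm (I := I) p3 p4 p2 p1)
  change i0 ∈ J
  rw [h]; exact Finset.mem_univ _

end density

section final
variable {n : ℕ}

lemma good_rep (hn : 2 ≤ n) (u0 z : FF) (hu0 : u0 ≠ 1) (hz : z ≠ 1) (S1 S2 : Finset (Fin n → ℤ))
    (h1 : ∀ c ∈ S1, ∃ i j, c i ≠ c j) (h2 : ∀ c ∈ S2, ∃ i j, c i ≠ c j) :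
    ∃ ρ : FF →* SL n ℝ, PosD n (ρ (u0 ^ 2)).1 ∧ (∀ c ∈ S1, ¬ Bad n c (ρ (u0 ^ 2)).1) ∧
      ∀ c ∈ S2, ¬ Bad n c (ρ z).1 := by
  have hu : u0 ^ 2 ≠ 1 := by
    intro h
    refine hu0 (pow_left_injective (M := FF) (n := 2) two_ne_zero ?_)
    simpa using h
  obtain ⟨g1, e1⟩ := gen_forall hn S1 (fun c ρ => ¬ Bad n c (ρ (u0 ^ 2)).1)
    (fun c _ => gen_not_bad n c _) (fun c hc => exists_not_bad n _ hu c (h1 c hc))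
  obtain ⟨g2, e2⟩ := gen_forall hn S2 (fun c ρ => ¬ Bad n c (ρ z).1)
    (fun c _ => gen_not_bad n c _) (fun c hc => exists_not_bad n _ hz c (h2 c hc))
  obtain ⟨ρ, ⟨a, b⟩, c⟩ := exists_and_open (O := fun ρ => PosD n (ρ (u0 ^ 2)).1) hn (gen_and g1 g2)
    (fun R s₀ h => posD_open n (u0 ^ 2) R s₀ h) (exists_and hn g1 g2 e1 e2) (exists_posD u0 hu0 n)
  exact ⟨ρ, c, a, b⟩

lemma diagonalize (A : Mt n) (lam : Fin n → ℝ) (hinj : Function.Injective lam)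
    (hch : A.charpoly = ∏ i, (Polynomial.X - Polynomial.C (lam i))) :
    ∃ P : Mt n, IsUnit P ∧ A * P = P * Matrix.diagonal lam := by
  have hv : ∀ i, ∃ v : Fin n → ℝ, v ≠ 0 ∧ A *ᵥ v = lam i • v := by
    intro i
    have h0 : (Matrix.scalar (Fin n) (lam i) - A).det = 0 := by
      rw [← Matrix.eval_charpoly, hch, Polynomial.eval_prod]
      exact Finset.prod_eq_zero (Finset.mem_univ i) (by simp)
    obtain ⟨v, hv, h⟩ := Matrix.exists_mulVec_eq_zero_iff.2 h0
    refine ⟨v, hv, ?_⟩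
    rw [Matrix.sub_mulVec, sub_eq_zero] at h
    rw [← h]
    funext k
    simp [Matrix.scalar_apply, Matrix.mulVec_diagonal]
  choose v hv0 hv using hv
  have hli : LinearIndependent ℝ v := by
    refine Module.End.eigenvectors_linearIndependent' (Matrix.mulVecLin A) lam hinj v ?_
    intro i
    refine ⟨?_, hv0 i⟩
    rw [Module.End.mem_eigenspace_iff]
    exact hv i
  refine ⟨Matrix.of fun i j => v j i, ?_, ?_⟩
  · rw [← Matrix.linearIndependent_cols_iff_isUnit]
    exact hli
  · ext i j
    rw [Matrix.mul_diagonal]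
    have := congrFun (hv j) i
    rw [Matrix.mul_apply]
    simp only [Matrix.of_apply]
    rw [Pi.smul_apply, smul_eq_mul] at this
    rw [mul_comm, ← this]
    rfl

/-- Conjugation. -/
noncomputable def conjSL (P : Mt n) (hP : IsUnit P) : SL n ℝ →* SL n ℝ where
  toFun M := ⟨P⁻¹ * M.1 * P, by
    have h1 : IsUnit P.det := (Matrix.isUnit_iff_isUnit_det P).1 hP
    rw [Matrix.det_mul, Matrix.det_mul, M.2, _root_.mul_one, ← Matrix.det_mul,
      Matrix.nonsing_inv_mul _ h1, Matrix.det_one]⟩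
  map_one' := by
    have h1 : IsUnit P.det := (Matrix.isUnit_iff_isUnit_det P).1 hP
    apply Subtype.ext
    change P⁻¹ * 1 * P = 1
    rw [Matrix.mul_one, Matrix.nonsing_inv_mul _ h1]
  map_mul' M N := by
    have h1 : IsUnit P.det := (Matrix.isUnit_iff_isUnit_det P).1 hP
    apply Subtype.ext
    change P⁻¹ * (M.1 * N.1) * P = (P⁻¹ * M.1 * P) * (P⁻¹ * N.1 * P)
    calc _ = P⁻¹ * M.1 * 1 * N.1 * P := by simp only [Matrix.mul_one, Matrix.mul_assoc]
      _ = P⁻¹ * M.1 * (P * P⁻¹) * N.1 * P := by rw [Matrix.mul_nonsing_inv _ h1]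
      _ = _ := by simp only [Matrix.mul_assoc]

lemma conjSL_bad (P : Mt n) (hP : IsUnit P) (M : SL n ℝ) (c : Fin n → ℤ)
    (h : Bad n c (conjSL P hP M).1) : Bad n c M.1 := by
  have h1 : (conjSL P hP M).1.charpoly = M.1.charpoly := by
    obtain ⟨Q, rfl⟩ := hP
    change (Q.1⁻¹ * M.1 * Q.1).charpoly = _
    exact Matrix.charpoly_units_conj' Q M.1
  obtain ⟨lam, a, b⟩ := h
  rw [h1] at a
  exact ⟨lam, a, b⟩

/-- exponent vectors for the coincidence of two weights -/
def cvec (q : (Fin n × Fin n) × Fin n × Fin n) : Fin n → ℤ :=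
  Pi.single q.1.1 1 + Pi.single q.2.2 1 - Pi.single q.1.2 1 - Pi.single q.2.1 1

lemma cvec_nonconst (i j k l : Fin n) (hij : i ≠ j) (hne : (k, l) ≠ (i, j)) :
    ∃ x y, cvec ((i, j), (k, l)) x ≠ cvec ((i, j), (k, l)) y := by
  by_contra! h
  have hs : ∑ x, cvec ((i, j), (k, l)) x = 0 := by
    simp [cvec, Finset.sum_add_distrib, Finset.sum_sub_distrib]
  have h0 : ∀ x, cvec ((i, j), (k, l)) x = 0 := by
    intro x
    rw [Finset.sum_congr rfl (fun y _ => h y x), Finset.sum_const, Finset.card_univ,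
      Fintype.card_fin, nsmul_eq_mul] at hs
    rcases mul_eq_zero.1 hs with h1 | h1
    · have h2 : n = 0 := by exact_mod_cast h1
      subst h2; exact x.elim0
    · exact h1
  have hi := h0 i
  have hj := h0 j
  simp only [cvec, Pi.add_apply, Pi.sub_apply, Pi.single_apply] at hi hj
  rw [if_neg hij, if_pos trivial] at hi
  rw [if_neg hij.symm, if_pos trivial] at hj
  apply hne
  have e1 : k = i := by
    by_contra hk
    rw [if_neg (Ne.symm hk)] at hi
    split_ifs at hi <;> omega
  have e2 : l = j := by
    by_contra hk
    rw [if_neg (Ne.symm hk)] at hj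
    split_ifs at hj <;> omega
  rw [e1, e2]

lemma cvec_prod (lam : Fin n → ℂ) (h0 : ∀ i, lam i ≠ 0) (i j k l : Fin n)
    (h : lam i * lam l = lam j * lam k) :
    ∏ x, lam x ^ cvec ((i, j), (k, l)) x = 1 := by
  have hs : ∀ i, ∏ x, lam x ^ (Pi.single i 1 : Fin n → ℤ) x = lam i := by
    intro i
    rw [Finset.prod_eq_single i]
    · simp
    · intro b _ hb; simp [hb]
    · simp
  have : ∀ x, lam x ^ cvec ((i, j), (k, l)) x =
      lam x ^ (Pi.single i 1 : Fin n → ℤ) x * lam x ^ (Pi.single l 1 : Fin n → ℤ) x /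
        lam x ^ (Pi.single j 1 : Fin n → ℤ) x / lam x ^ (Pi.single k 1 : Fin n → ℤ) x := by
    intro x
    rw [cvec, Pi.sub_apply, Pi.sub_apply, Pi.add_apply, zpow_sub₀ (h0 x), zpow_sub₀ (h0 x),
      zpow_add₀ (h0 x)]
  rw [Finset.prod_congr rfl (fun x _ => this x), Finset.prod_div_distrib, Finset.prod_div_distrib,
    Finset.prod_mul_distrib, hs, hs, hs, hs, h]
  have := h0 j
  have := h0 k
  field_simp

theorem free_dense (hn : 2 ≤ n) (u0 v : FF) (huv : u0 * v ≠ v * u0) :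
    ∃ ρ : FF →* SL n ℝ, IsZariskiDense n (Subgroup.closure {ρ u0, ρ v}) := by
  classical
  set m := (2 ^ n).factorial with hm
  have hm0 : m ≠ 0 := Nat.factorial_ne_zero _
  have hu0 : u0 ≠ 1 := by rintro rfl; simp at huv
  have hz : ⁅u0 ^ 2, v ^ m⁆ ≠ 1 := by
    intro h
    rw [commutatorElement_eq_one_iff_mul_comm] at h
    apply huv
    have h1 : (v ^ m * u0 * (v ^ m)⁻¹) ^ 2 = u0 ^ 2 := by
      rw [conj_pow, ← h, mul_inv_cancel_right]
    have h2 : v ^ m * u0 * (v ^ m)⁻¹ = u0 := pow_left_injective (M := FF) two_ne_zero h1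
    have h3 : v ^ m * u0 = u0 * v ^ m := mul_inv_eq_iff_eq_mul.1 h2
    have h4 : (u0 * v * u0⁻¹) ^ m = v ^ m := by
      rw [conj_pow, ← h3, mul_inv_cancel_right]
    have h5 : u0 * v * u0⁻¹ = v := pow_left_injective (M := FF) hm0 h4
    exact mul_inv_eq_iff_eq_mul.1 h5
  let S1 : Finset (Fin n → ℤ) := (Finset.univ.filter fun q : (Fin n × Fin n) × Fin n × Fin n =>
    q.1.1 ≠ q.1.2 ∧ q.2 ≠ q.1).image cvec
  let S2 : Finset (Fin n → ℤ) := (Finset.univ.filter fun I : Finset (Fin n) =>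
    I.Nonempty ∧ I ≠ Finset.univ).image fun I i => if i ∈ I then 1 else 0
  obtain ⟨ρ, ⟨lam, hinj, hpos, hch⟩, hb1, hb2⟩ := good_rep hn u0 ⁅u0 ^ 2, v ^ m⁆ hu0 hz S1 S2
    (by
      intro c hc
      obtain ⟨⟨⟨i, j⟩, ⟨k, l⟩⟩, hq, rfl⟩ := Finset.mem_image.1 hc
      rw [Finset.mem_filter] at hq
      exact cvec_nonconst i j k l hq.2.1 hq.2.2)
    (by
      intro c hc
      obtain ⟨I, hq, rfl⟩ := Finset.mem_image.1 hc
      rw [Finset.mem_filter] at hq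
      obtain ⟨-, ⟨x, hx⟩, hI⟩ := hq
      obtain ⟨y, hy⟩ : ∃ y, y ∉ I := by
        by_contra! h
        exact hI (Finset.eq_univ_iff_forall.2 h)
      exact ⟨x, y, by simp [hx, hy]⟩)
  obtain ⟨P, hP, hAP⟩ := diagonalize _ lam hinj hch
  have hPd : IsUnit P.det := (Matrix.isUnit_iff_isUnit_det P).1 hP
  refine ⟨(conjSL P hP).comp ρ, ?_⟩
  have hd := dense_diag hn (conjSL P hP (ρ (u0 ^ 2))) (conjSL P hP (ρ v)) (lam := lam) (by
      change P⁻¹ * (ρ (u0 ^ 2)).1 * P = _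
      rw [Matrix.mul_assoc, hAP, ← Matrix.mul_assoc, Matrix.nonsing_inv_mul _ hPd, Matrix.one_mul])
    hpos hinj (by
      intro i j k l hij hkl he
      refine hb1 (cvec ((i, j), (k, l))) (Finset.mem_image_of_mem _ (by simp [hij]; simpa using hkl)) ?_
      refine ⟨fun i => (lam i : ℂ), ?_, ?_⟩
      · rw [hch, Polynomial.map_prod]
        simp
      · refine cvec_prod _ (fun i => by exact_mod_cast (hpos i).ne') i j k l ?_
        exact_mod_cast he)
    m (fun d h1 h2 => Nat.dvd_factorial h1 h2) (by
      intro I hI1 hI2 hbad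
      refine hb2 _ (Finset.mem_image_of_mem _ (Finset.mem_filter.2
        ⟨Finset.mem_univ I, hI1, hI2⟩)) (conjSL_bad P hP _ _ ?_)
      rw [← map_pow, ← map_pow, ← map_commutatorElement, ← map_commutatorElement] at hbad
      convert hbad)
  intro Q hQ
  refine hd Q fun h hh => hQ h ?_
  refine (Subgroup.closure_le _).2 ?_ hh
  rintro x (rfl | rfl)
  · rw [map_pow, map_pow]
    exact Subgroup.pow_mem _ (Subgroup.subset_closure (by simp)) 2
  · exact Subgroup.subset_closure (by simp)

end final

/-- If `a, b ∈ Γ_g` do not commute, there is a representation `ρ : Γ_g → SL_n(ℝ)` such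
that `ρ(a)` and `ρ(b)` generate a Zariski-dense subgroup of `SL_n(ℝ)`. -/
theorem exists_rep_with_zariski_dense_pair (g n : ℕ) (hg : 2 ≤ g) (hn : 3 ≤ n)
    (a b : SurfaceGroup g) (hab : a * b ≠ b * a) :
    ∃ ρ : SurfaceGroup g →* SL n ℝ,
      IsZariskiDense n (Subgroup.closure {ρ a, ρ b}) := by
  obtain ⟨φ, hφ⟩ := residually_free g hg ⁅a, b⁆ (fun h => hab (by
    rwa [commutatorElement_eq_one_iff_mul_comm] at h))
  obtain ⟨ρ, hρ⟩ := free_dense (n := n) (by omega) (φ a) (φ b) (fun h => hφ (by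
    rw [map_commutatorElement, commutatorElement_eq_one_iff_mul_comm, h]))
  exact ⟨ρ.comp φ, hρ⟩
end
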